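/- arXiv:1311.0539 — 2 statements merged into one kernel-verified Lean document; each statement's English description precedes it below -/
import Mathlib

section
/- There exist positive constants c₁ and c₂ such that for every n ≥ 2, c₁·n⁵/log n ≤ AR_s(K_n) ≤ c₂·n⁶/(log n)², where K_n is the complete graph on n vertices. -/
open SimpleGraph

/-- A proper edge coloring of `G`: adjacent (distinct, vertex-sharing) edges get
different colors. -/
def IsProperEdgeColoring {V : Type*} (G : SimpleGraph V) (c : Sym2 V → ℕ) : Prop :=
  ∀ e₁ ∈ G.edgeSet, ∀ e₂ ∈ G.edgeSet, e₁ ≠ e₂ → (∃ v, v ∈ e₁ ∧ v ∈ e₂) → c e₁ ≠ c e₂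

/-- `G` contains a rainbow copy of `H` with respect to the edge coloring `c`:
there is an injective graph homomorphism `H → G` whose image edges receive
pairwise distinct colors. -/
def HasRainbowCopy {V W : Type*} (G : SimpleGraph V) (H : SimpleGraph W) (c : Sym2 V → ℕ) : Prop :=
  ∃ f : H →g G, Function.Injective f ∧
    ∀ e₁ ∈ H.edgeSet, ∀ e₂ ∈ H.edgeSet, c (Sym2.map f e₁) = c (Sym2.map f e₂) → e₁ = e₂

/-- `G → H`: every proper edge coloring of `G` contains a rainbow copy of `H`. -/
def ArrowsTo {V W : Type*} (G : SimpleGraph V) (H : SimpleGraph W) : Prop :=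
  ∀ c : Sym2 V → ℕ, IsProperEdgeColoring G c → HasRainbowCopy G H c

/-- The size anti-Ramsey number: the minimum number of edges of a (finite) graph
`G` with `G → H`. -/
noncomputable def ARs {W : Type*} (H : SimpleGraph W) : ℕ :=
  sInf {m | ∃ (n : ℕ) (G : SimpleGraph (Fin n)), ArrowsTo G H ∧ G.edgeSet.ncard = m}

/-- The local anti-Ramsey number: the minimum `n` such that `K_n → H`. -/
noncomputable def ARloc {W : Type*} (H : SimpleGraph W) : ℕ :=
  sInf {n | ArrowsTo (⊤ : SimpleGraph (Fin n)) H}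

/-!
Lower bound. Let `G` have at most about `(n ^ 3 / log n) ^ 2` edges. Deleting the edges that join
a vertex of degree more than `Δ ~ n ^ 3 / log n` to one of degree at most `Δ` leaves a graph of
maximum degree `Δ` in which one half of every `n`-clique of `G` survives. Color it by a uniformly
random proper coloring with `q ≥ 8 Δ` colors. To bound the probability that a given `n / 2`-clique
is rainbow, recolor its edges at random from the colors left free by the other edges, a positive
proportion of all colors: the recoloring is proper with probability at least `exp (-O(log n))`,
but rainbow with probability at most `exp (-c n ^ 4 / q)`. The quotient beats a union bound over
the `exp (O(n log n))` cliques.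

Upper bound. For a proper coloring of `K_N`, a vertex set without two disjoint edges of the same
color spans a rainbow clique, so rainbow cliques are independent sets of a `4`-uniform hypergraph
in which every triple lies in at most three edges. If `U` is a random `m`-set, `m` a small power
of `N`, then the link in `U` of most vertices `v` is sparse. Conditioning on the part of a random
independent subset of `U` off that link, Harris' inequality bounds from below the probability that
the subset remains independent when `v` is added. Since a random independent subset of an
`(m + 1)`-set has at most `n` elements when there is no larger independent set, averaging over `v`
and `U` gives `N = O(n ^ 3 / log n)`.
-/

section

open Finset

section Harris

variable {α ι : Type*} [DecidableEq α]

lemma exp_neg_le_one_sub_half {x : ℝ} (h0 : 0 ≤ x) (h1 : x ≤ 1) : Real.exp (-x) ≤ 1 - x / 2 := by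
  rw [Real.exp_neg, inv_le_iff_one_le_mul₀ (Real.exp_pos x)]
  calc (1 : ℝ) ≤ (1 - x / 2) * (x + 1) := by nlinarith
    _ ≤ (1 - x / 2) * Real.exp x := by
        gcongr
        · linarith
        · exact Real.add_one_le_exp x

lemma two_mul_card_filter_subset_le (F : Finset α) {t : Finset α} (ht : t.Nonempty) :
    2 * #{S ∈ F.powerset | t ⊆ S} ≤ 2 ^ #F := by
  by_cases htF : t ⊆ F
  · have hIcc : {S ∈ F.powerset | t ⊆ S} = Icc t F := by
      ext S
      simp only [mem_filter, Finset.mem_powerset, Finset.mem_Icc, and_comm]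
    rw [hIcc, card_Icc_finset htF, ← pow_succ']
    have := card_le_card htF
    have := ht.card_pos
    exact Nat.pow_le_pow_right two_pos (by omega)
  · have hempty : {S ∈ F.powerset | t ⊆ S} = ∅ :=
      filter_eq_empty_iff.2 fun S hS htS => htF (htS.trans (Finset.mem_powerset.1 hS))
    simp [hempty]

lemma isLowerSet_filter_forall_not_subset (F : Finset α) (κ : Finset ι) (t : ι → Finset α) :
    IsLowerSet (({S ∈ F.powerset | ∀ i ∈ κ, ¬ t i ⊆ S} : Finset (Finset α)) : Set (Finset α)) := by
  intro S S' hS' hS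
  simp only [coe_filter, Finset.mem_powerset, Set.mem_ofPred_eq] at hS ⊢
  exact ⟨hS'.trans hS.1, fun i hi h => hS.2 i hi (h.trans hS')⟩

lemma card_filter_not_subset_mul_le [DecidableEq ι] (F : Finset α) (κ : Finset ι)
    (t : ι → Finset α) (i : ι) :
    #{S ∈ F.powerset | ¬ t i ⊆ S} * #{S ∈ F.powerset | ∀ j ∈ κ, ¬ t j ⊆ S} ≤
      2 ^ #F * #{S ∈ F.powerset | ∀ j ∈ insert i κ, ¬ t j ⊆ S} := by
  have hi := isLowerSet_filter_forall_not_subset F {i} t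
  have hκ := isLowerSet_filter_forall_not_subset F κ t
  have h := hi.le_card_inter_finset' hκ (s := F)
    (fun S hS => Finset.mem_powerset.1 (mem_filter.1 hS).1)
    (fun S hS => Finset.mem_powerset.1 (mem_filter.1 hS).1)
  simpa only [← filter_and, forall_mem_insert, Finset.mem_singleton, forall_eq] using h

lemma two_pow_mul_exp_neg_le_card_filter_forall_not_subset (F : Finset α) (κ : Finset ι)
    (t : ι → Finset α) (ht : ∀ i ∈ κ, (t i).Nonempty) :
    (2 : ℝ) ^ #F * Real.exp (-(2 * ∑ i ∈ κ, (#{S ∈ F.powerset | t i ⊆ S} : ℝ) / 2 ^ #F)) ≤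
      #{S ∈ F.powerset | ∀ i ∈ κ, ¬ t i ⊆ S} := by
  classical
  induction κ using Finset.induction_on with
  | empty => simp
  | insert i κ hi ih =>
    specialize ih fun j hj => ht j (mem_insert_of_mem hj)
    have hpow : (0 : ℝ) < 2 ^ #F := by positivity
    set p : ℝ := #{S ∈ F.powerset | t i ⊆ S} / 2 ^ #F with hp
    have hp_le : 2 * p ≤ 1 := by
      rw [hp, ← mul_div_assoc, div_le_one hpow]
      exact_mod_cast two_mul_card_filter_subset_le F (ht i (mem_insert_self i κ))
    have hcompl : (#{S ∈ F.powerset | ¬ t i ⊆ S} : ℝ) = 2 ^ #F * (1 - p) := by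
      have := card_filter_add_card_filter_not (s := F.powerset) (fun S => t i ⊆ S)
      rw [card_powerset] at this
      rw [hp, mul_sub, mul_div_cancel₀ _ hpow.ne', mul_one, eq_sub_iff_add_eq']
      exact_mod_cast this
    have hHarris : (#{S ∈ F.powerset | ¬ t i ⊆ S} : ℝ) *
        #{S ∈ F.powerset | ∀ j ∈ κ, ¬ t j ⊆ S} ≤
          2 ^ #F * #{S ∈ F.powerset | ∀ j ∈ insert i κ, ¬ t j ⊆ S} := by
      exact_mod_cast card_filter_not_subset_mul_le F κ t i
    rw [hcompl, mul_assoc] at hHarris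
    refine le_trans ?_ (le_of_mul_le_mul_left hHarris hpow)
    rw [sum_insert hi, mul_add, neg_add, Real.exp_add, mul_left_comm]
    have hexp : Real.exp (-(2 * p)) ≤ 1 - p :=
      (exp_neg_le_one_sub_half (by positivity) hp_le).trans_eq (by ring)
    have hp_nonneg : 0 ≤ 1 - p := (Real.exp_pos _).le.trans hexp
    gcongr

-- The exponent is linearised at `-μ`, so that the bound can be summed over different `F`, `κ`, `t`.
lemma exp_neg_mul_sum_le_card_filter_forall_not_subset (F : Finset α) (κ : Finset ι)
    (t : ι → Finset α) (ht : ∀ i ∈ κ, (t i).Nonempty) (μ : ℝ) :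
    Real.exp (-μ) * ∑ S ∈ F.powerset, (1 + μ - 2 * (#{i ∈ κ | t i ⊆ S} : ℝ)) ≤
      #{S ∈ F.powerset | ∀ i ∈ κ, ¬ t i ⊆ S} := by
  set M : ℝ := 2 * ∑ i ∈ κ, (#{S ∈ F.powerset | t i ⊆ S} : ℝ) / 2 ^ #F with hM
  have hsum : ∑ S ∈ F.powerset, (1 + μ - 2 * (#{i ∈ κ | t i ⊆ S} : ℝ)) =
      2 ^ #F * (μ - M + 1) := by
    have hswap : ∑ S ∈ F.powerset, (#{i ∈ κ | t i ⊆ S} : ℝ) =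
        ∑ i ∈ κ, (#{S ∈ F.powerset | t i ⊆ S} : ℝ) := by
      exact_mod_cast sum_card_bipartiteAbove_eq_sum_card_bipartiteBelow fun S i => t i ⊆ S
    rw [sum_sub_distrib, ← mul_sum, hswap, sum_const, card_powerset, nsmul_eq_mul, hM, ← sum_div]
    push_cast
    field_simp
    ring
  calc Real.exp (-μ) * ∑ S ∈ F.powerset, (1 + μ - 2 * (#{i ∈ κ | t i ⊆ S} : ℝ))
      = 2 ^ #F * (Real.exp (-μ) * (μ - M + 1)) := by rw [hsum]; ring
    _ ≤ 2 ^ #F * (Real.exp (-μ) * Real.exp (μ - M)) := by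
        gcongr
        exact Real.add_one_le_exp _
    _ = 2 ^ #F * Real.exp (-M) := by rw [← Real.exp_add]; ring_nf
    _ ≤ #{S ∈ F.powerset | ∀ i ∈ κ, ¬ t i ⊆ S} :=
        two_pow_mul_exp_neg_le_card_filter_forall_not_subset F κ t ht

end Harris

section Hypergraph

variable {α : Type*} [DecidableEq α] {H 𝒯 : Finset (Finset α)} {U L W J S : Finset α}

/-- `W` is an independent set of the hypergraph with edge set `H`. -/
def IsIndep (H : Finset (Finset α)) (W : Finset α) : Prop :=
  ∀ e ∈ H, ¬ e ⊆ W

instance : DecidablePred (IsIndep H) :=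
  fun W => inferInstanceAs (Decidable (∀ e ∈ H, ¬ e ⊆ W))

/-- The independent sets of `H` contained in `U`. -/
def indepSets (H : Finset (Finset α)) (U : Finset α) : Finset (Finset α) :=
  {W ∈ U.powerset | IsIndep H W}

lemma mem_indepSets : W ∈ indepSets H U ↔ W ⊆ U ∧ IsIndep H W := by
  rw [indepSets, mem_filter, Finset.mem_powerset]

omit [DecidableEq α] in
lemma IsIndep.subset {W' : Finset α} (hW : IsIndep H W) (h : W' ⊆ W) : IsIndep H W' :=
  fun e he heW => hW e he (heW.trans h)

lemma isIndep_union_of_sparse (hL : ∀ e ∈ H, e ⊆ U → #(e ∩ L) ≤ 1) (hJU : J ⊆ U \ L) (hSU : S ⊆ U)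
    (hSL : S ⊆ L) (hJ : IsIndep H J) (hS : ∀ a ∈ S, IsIndep H (insert a J)) :
    IsIndep H (J ∪ S) := by
  intro e he heJS
  have heU : e ⊆ U := heJS.trans (union_subset (hJU.trans sdiff_subset) hSU)
  by_cases heS : (e ∩ S).Nonempty
  · obtain ⟨a, ha⟩ := heS
    rw [Finset.mem_inter] at ha
    refine hS a ha.2 e he fun x hx => ?_
    rcases Finset.mem_union.1 (heJS hx) with hxJ | hxS
    · exact mem_insert_of_mem hxJ
    · have := card_le_one.1 (hL e he heU) x (mem_inter_of_mem hx (hSL hxS)) a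
        (mem_inter_of_mem ha.1 (hSL ha.2))
      exact this ▸ mem_insert_self x J
  · refine hJ e he fun x hx => (Finset.mem_union.1 (heJS hx)).resolve_right fun hxS => ?_
    exact heS ⟨x, mem_inter_of_mem hx hxS⟩

-- When every edge meets `L` at most once, the part of an independent set inside `L` may be chosen
-- element by element once the part outside `L` is fixed.
lemma sum_indepSets_eq_sum_sum {M : Type*} [AddCommMonoid M] (hLU : L ⊆ U)
    (hL : ∀ e ∈ H, e ⊆ U → #(e ∩ L) ≤ 1) (f : Finset α → M) :
    ∑ W ∈ indepSets H U, f W =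
      ∑ J ∈ indepSets H (U \ L), ∑ S ∈ ({a ∈ L | IsIndep H (insert a J)} : Finset α).powerset,
        f (J ∪ S) := by
  rw [sum_sigma']
  refine sum_bij' (fun W _ => ⟨W \ L, W ∩ L⟩) (fun p _ => p.1 ∪ p.2) ?_ ?_ ?_ ?_ ?_
  · intro W hW
    obtain ⟨hWU, hWI⟩ := mem_indepSets.1 hW
    simp only [mem_sigma, mem_indepSets, Finset.mem_powerset, subset_iff, mem_filter]
    refine ⟨⟨sdiff_subset_sdiff hWU Subset.rfl, hWI.subset sdiff_subset⟩, fun a ha => ?_⟩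
    rw [Finset.mem_inter] at ha
    exact ⟨ha.2, hWI.subset (insert_subset ha.1 sdiff_subset)⟩
  · rintro ⟨J, S⟩ hJS
    simp only [mem_sigma, mem_indepSets, Finset.mem_powerset] at hJS
    obtain ⟨⟨hJU, hJ⟩, hS⟩ := hJS
    have hSL : S ⊆ L := hS.trans (filter_subset _ _)
    exact mem_indepSets.2 ⟨union_subset (hJU.trans sdiff_subset) (hSL.trans hLU),
      isIndep_union_of_sparse hL hJU (hSL.trans hLU) hSL hJ fun a ha => (mem_filter.1 (hS ha)).2⟩
  · exact fun W _ => sdiff_union_inter W L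
  · rintro ⟨J, S⟩ hJS
    simp only [mem_sigma, mem_indepSets, Finset.mem_powerset] at hJS
    have hSL : S ⊆ L := hJS.2.trans (filter_subset _ _)
    have hJL : Disjoint J L := disjoint_of_subset_left hJS.1.1 sdiff_disjoint
    simp only [union_sdiff_distrib, sdiff_eq_self_of_disjoint hJL, sdiff_eq_empty_iff_subset.2 hSL,
      union_inter_distrib_right, disjoint_iff_inter_eq_empty.1 hJL, inter_eq_left.2 hSL,
      union_empty, empty_union]
  · exact fun W _ => by rw [sdiff_union_inter]

lemma subset_union_iff {T : Finset α} (hJ : Disjoint J L) (hS : S ⊆ L) :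
    T ⊆ J ∪ S ↔ T \ L ⊆ J ∧ T ∩ L ⊆ S := by
  have hJ' : ∀ x ∈ J, x ∉ L := fun x hx => Finset.disjoint_left.1 hJ hx
  simp only [subset_iff, Finset.mem_union, mem_sdiff, Finset.mem_inter] at hS ⊢
  grind

lemma exp_neg_mul_sum_le_card_isIndep (hLU : L ⊆ U) (hL : ∀ e ∈ H, e ⊆ U → #(e ∩ L) ≤ 1)
    (h𝒯 : ∀ T ∈ 𝒯, T ⊆ U → (T ∩ L).Nonempty) (μ : ℝ) :
    Real.exp (-μ) * ∑ W ∈ indepSets H U, (1 + μ - 2 * (#{T ∈ 𝒯 | T ⊆ W} : ℝ)) ≤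
      #{W ∈ indepSets H U | IsIndep 𝒯 W} := by
  rw [card_filter, Nat.cast_sum, sum_indepSets_eq_sum_sum hLU hL,
    sum_indepSets_eq_sum_sum hLU hL, mul_sum]
  refine sum_le_sum fun J hJ => ?_
  obtain ⟨hJU, -⟩ := mem_indepSets.1 hJ
  set F : Finset α := {a ∈ L | IsIndep H (insert a J)}
  have hsub {S T : Finset α} (hS : S ∈ F.powerset) : T ⊆ J ∪ S ↔ T \ L ⊆ J ∧ T ∩ L ⊆ S :=
    subset_union_iff (disjoint_of_subset_left hJU sdiff_disjoint)
      ((Finset.mem_powerset.1 hS).trans (filter_subset _ _))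
  have hmeet : ∀ T ∈ {T ∈ 𝒯 | T \ L ⊆ J}, (T ∩ L).Nonempty := by
    intro T hT
    obtain ⟨hT𝒯, hTJ⟩ := mem_filter.1 hT
    refine h𝒯 T hT𝒯 ?_
    rw [← sdiff_union_inter T L]
    exact union_subset (hTJ.trans (hJU.trans sdiff_subset)) (inter_subset_right.trans hLU)
  have hcount : ∀ S ∈ F.powerset,
      #{T ∈ 𝒯 | T ⊆ J ∪ S} = #{T ∈ {T ∈ 𝒯 | T \ L ⊆ J} | T ∩ L ⊆ S} := fun S hS => by
    simp only [filter_filter, hsub hS]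
  have hindep : ∀ S ∈ F.powerset,
      (IsIndep 𝒯 (J ∪ S) ↔ ∀ T ∈ {T ∈ 𝒯 | T \ L ⊆ J}, ¬ T ∩ L ⊆ S) := fun S hS => by
    simp only [IsIndep, hsub hS, mem_filter, not_and, and_imp]
  rw [← Nat.cast_sum, ← card_filter, filter_congr hindep,
    sum_congr rfl fun S hS => by rw [hcount S hS]]
  exact exp_neg_mul_sum_le_card_filter_forall_not_subset F _ (· ∩ L) hmeet μ

end Hypergraph

section Hypergraph

variable {α : Type*} [DecidableEq α] {H : Finset (Finset α)} {U W : Finset α} {v : α}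

section Link

lemma isIndep_insert :
    IsIndep H (insert v W) ↔ IsIndep H W ∧ IsIndep (H.memberSubfamily v) W := by
  refine ⟨fun h => ⟨h.subset (subset_insert v W), fun T hT hTW => ?_⟩,
    fun ⟨hH, hlink⟩ e he heW => ?_⟩
  · exact h _ (mem_memberSubfamily.1 hT).1 (insert_subset_insert v hTW)
  · by_cases hve : v ∈ e
    · refine hlink (e.erase v) (mem_memberSubfamily.2 ⟨?_, notMem_erase v e⟩) ?_
      · rwa [insert_erase hve]
      · rwa [← subset_insert_iff]
    · exact hH e he ((subset_insert_iff_of_notMem hve).1 heW)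

/-- The vertices of `U` covered by those members of the link of `v` in `H` that lie in `U`. -/
def linkVertices (H : Finset (Finset α)) (U : Finset α) (v : α) : Finset α :=
  {a ∈ U | ∃ T ∈ H.memberSubfamily v, T ⊆ U ∧ a ∈ T}

lemma mem_linkVertices {a : α} :
    a ∈ linkVertices H U v ↔ ∃ T ∈ H.memberSubfamily v, T ⊆ U ∧ a ∈ T := by
  rw [linkVertices, mem_filter, and_iff_right_iff_imp]
  exact fun ⟨_, _, hTU, haT⟩ => hTU haT

/-- The link of `v` in `U` is sparse if no edge of `H` inside `U` joins two of its vertices. This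
makes the events that a random independent set contains a given member of the link behave as if
the set were uniformly random. -/
def HasSparseLink (H : Finset (Finset α)) (U : Finset α) (v : α) : Prop :=
  ∀ e ∈ H, e ⊆ U → #(e ∩ linkVertices H U v) ≤ 1

instance : Decidable (HasSparseLink H U v) :=
  inferInstanceAs (Decidable (∀ e ∈ H, e ⊆ U → #(e ∩ linkVertices H U v) ≤ 1))

/-- The probability that a uniformly random independent subset `W` of `U` stays independent when
the vertex `v ∉ U` is added to it. -/
noncomputable def extensionRatio (H : Finset (Finset α)) (U : Finset α) (v : α) : ℝ :=
  #{W ∈ indepSets H U | IsIndep (H.memberSubfamily v) W} / #(indepSets H U)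

/-- The expected number of members of the link of `v` contained in a uniformly random independent
subset of `U`. -/
noncomputable def meanConflicts (H : Finset (Finset α)) (U : Finset α) (v : α) : ℝ :=
  (∑ W ∈ indepSets H U, (#{T ∈ H.memberSubfamily v | T ⊆ W} : ℝ)) / #(indepSets H U)

lemma card_indepSets_pos (hH : ∅ ∉ H) : 0 < #(indepSets H U) :=
  card_pos.2 ⟨∅, mem_indepSets.2 ⟨empty_subset U, fun _ he h => hH (subset_empty.1 h ▸ he)⟩⟩

lemma exp_neg_mul_le_extensionRatio (hH : ∅ ∉ H) (hv : {v} ∉ H) (hsparse : HasSparseLink H U v)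
    (μ : ℝ) : Real.exp (-μ) * (1 + μ - 2 * meanConflicts H U v) ≤ extensionRatio H U v := by
  have hpos : (0 : ℝ) < #(indepSets H U) := by exact_mod_cast card_indepSets_pos hH
  rw [extensionRatio, le_div_iff₀ hpos]
  refine Eq.trans_le ?_ (exp_neg_mul_sum_le_card_isIndep (L := linkVertices H U v)
    (filter_subset _ _) hsparse (fun T hT hTU => ?_) μ)
  · rw [meanConflicts, sum_sub_distrib, ← mul_sum, sum_const, nsmul_eq_mul]
    field_simp
  · have hT_ne : T.Nonempty := by
      rw [nonempty_iff_ne_empty]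
      rintro rfl
      exact hv (mem_memberSubfamily.1 hT).1
    obtain ⟨a, ha⟩ := hT_ne
    exact ⟨a, mem_inter_of_mem ha (mem_linkVertices.2 ⟨T, hT, hTU, ha⟩)⟩

lemma sum_card_link_le {r D : ℕ} (hH : (H : Set (Finset α)).Sized (r + 1))
    (hD : ∀ s : Finset α, #s = r → #{e ∈ H | s ⊆ e} ≤ D) (A W : Finset α) :
    ∑ v ∈ A, #{T ∈ H.memberSubfamily v | T ⊆ W} ≤ D * (#W).choose r := by
  have hT (v : α) : {T ∈ H.memberSubfamily v | T ⊆ W} =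
      {T ∈ powersetCard r W | T ∈ H.memberSubfamily v} := by
    ext T
    simp only [mem_filter, mem_powersetCard, mem_memberSubfamily]
    constructor
    · rintro ⟨⟨hTH, hvT⟩, hTW⟩
      have := hH hTH
      rw [card_insert_of_notMem hvT] at this
      exact ⟨⟨hTW, by omega⟩, hTH, hvT⟩
    · rintro ⟨⟨hTW, -⟩, hT⟩
      exact ⟨hT, hTW⟩
  calc ∑ v ∈ A, #{T ∈ H.memberSubfamily v | T ⊆ W}
      = ∑ T ∈ powersetCard r W, #{v ∈ A | T ∈ H.memberSubfamily v} := by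
        simp only [hT]
        exact sum_card_bipartiteAbove_eq_sum_card_bipartiteBelow fun v T => T ∈ H.memberSubfamily v
    _ ≤ ∑ _ ∈ powersetCard r W, D := by
        refine sum_le_sum fun T hTW => le_trans ?_ (hD T (mem_powersetCard.1 hTW).2)
        refine card_le_card_of_injOn (insert · T) (fun v hv => ?_) fun v hv w _ hvw => ?_
        · simp only [coe_filter, Set.mem_ofPred_eq, mem_memberSubfamily] at hv ⊢
          exact ⟨hv.2.1, subset_insert v T⟩
        · simp only [coe_filter, Set.mem_ofPred_eq, mem_memberSubfamily] at hv
          exact (insert_inj hv.2.2).1 hvw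
    _ = D * (#W).choose r := by rw [sum_const, card_powersetCard, smul_eq_mul, mul_comm]

lemma sum_meanConflicts_le {r D n : ℕ} (hH : (H : Set (Finset α)).Sized (r + 1))
    (hD : ∀ s : Finset α, #s = r → #{e ∈ H | s ⊆ e} ≤ D) (hn : ∀ W, IsIndep H W → #W ≤ n)
    (A U : Finset α) : ∑ v ∈ A, meanConflicts H U v ≤ D * n ^ r := by
  simp only [meanConflicts]
  rw [← sum_div, sum_comm]
  refine div_le_of_le_mul₀ (by positivity) (by positivity) ?_
  rw [mul_comm, ← nsmul_eq_mul]
  refine sum_le_card_nsmul _ _ _ fun W hW => ?_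
  have hW_le : (#W).choose r ≤ n ^ r :=
    (Nat.choose_le_pow _ _).trans (Nat.pow_le_pow_left (hn W (mem_indepSets.1 hW).2) r)
  exact_mod_cast (sum_card_link_le hH hD A W).trans (Nat.mul_le_mul_left D hW_le)

lemma nonMemberSubfamily_indepSets :
    (indepSets H U).nonMemberSubfamily v = indepSets H (U.erase v) := by
  ext W
  rw [mem_nonMemberSubfamily, mem_indepSets, mem_indepSets, subset_erase]
  tauto

lemma memberSubfamily_indepSets (hv : v ∈ U) :
    (indepSets H U).memberSubfamily v =
      {W ∈ indepSets H (U.erase v) | IsIndep (H.memberSubfamily v) W} := by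
  ext W
  rw [mem_memberSubfamily, mem_filter, mem_indepSets, mem_indepSets, subset_erase,
    insert_subset_iff]
  constructor
  · rintro ⟨⟨⟨-, hWU⟩, hI⟩, hvW⟩
    exact ⟨⟨⟨hWU, hvW⟩, (isIndep_insert.1 hI).1⟩, (isIndep_insert.1 hI).2⟩
  · rintro ⟨⟨⟨hWU, hvW⟩, hI⟩, hlink⟩
    exact ⟨⟨⟨hv, hWU⟩, isIndep_insert.2 ⟨hI, hlink⟩⟩, hvW⟩

lemma extensionRatio_erase_le (hH : ∅ ∉ H) (hv : v ∈ U) :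
    extensionRatio H (U.erase v) v ≤ 2 * #{W ∈ indepSets H U | v ∈ W} / #(indepSets H U) := by
  have hmember : #{W ∈ indepSets H U | v ∈ W} =
      #{W ∈ indepSets H (U.erase v) | IsIndep (H.memberSubfamily v) W} := by
    rw [← memberSubfamily_indepSets hv, memberSubfamily, card_image_of_injOn]
    exact (erase_injOn' v).mono fun W hW => (mem_filter.1 hW).2
  have hle : #(indepSets H U) ≤ 2 * #(indepSets H (U.erase v)) := by
    rw [← card_memberSubfamily_add_card_nonMemberSubfamily v, memberSubfamily_indepSets hv,
      nonMemberSubfamily_indepSets, two_mul]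
    gcongr
    exact filter_subset _ _
  have hpos : (0 : ℝ) < #(indepSets H U) := by exact_mod_cast card_indepSets_pos hH
  have hle' : (#(indepSets H U) : ℝ) ≤ 2 * #(indepSets H (U.erase v)) := by exact_mod_cast hle
  rw [extensionRatio, ← hmember, div_le_div_iff₀ (by linarith) hpos]
  calc (#{W ∈ indepSets H U | v ∈ W} : ℝ) * #(indepSets H U)
      ≤ #{W ∈ indepSets H U | v ∈ W} * (2 * #(indepSets H (U.erase v))) := by gcongr
    _ = 2 * #{W ∈ indepSets H U | v ∈ W} * #(indepSets H (U.erase v)) := by ring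

lemma sum_extensionRatio_erase_le {n : ℕ} (hH : ∅ ∉ H) (hn : ∀ W, IsIndep H W → #W ≤ n) :
    ∑ v ∈ U, extensionRatio H (U.erase v) v ≤ 2 * n := by
  have hcount : ∑ v ∈ U, #{W ∈ indepSets H U | v ∈ W} ≤ n * #(indepSets H U) := by
    have hswap := sum_card_bipartiteAbove_eq_sum_card_bipartiteBelow
      (s := U) (t := indepSets H U) fun v W => v ∈ W
    simp only [bipartiteAbove, bipartiteBelow] at hswap
    rw [hswap, mul_comm]
    refine sum_le_card_nsmul _ _ _ fun W hW => ?_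
    exact (card_le_card fun v hv => (mem_filter.1 hv).2).trans (hn W (mem_indepSets.1 hW).2)
  calc ∑ v ∈ U, extensionRatio H (U.erase v) v
      ≤ ∑ v ∈ U, 2 * (#{W ∈ indepSets H U | v ∈ W} : ℝ) / #(indepSets H U) :=
        sum_le_sum fun v hv => extensionRatio_erase_le hH hv
    _ = 2 * (∑ v ∈ U, #{W ∈ indepSets H U | v ∈ W} : ℕ) / #(indepSets H U) := by
        rw [← sum_div, ← mul_sum, Nat.cast_sum]
    _ ≤ 2 * n := by
        refine div_le_of_le_mul₀ (by positivity) (by positivity) ?_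
        rw [mul_assoc]
        gcongr
        exact_mod_cast hcount

lemma sum_powersetCard_sum_compl_eq [Fintype α] {M : Type*} [AddCommMonoid M] (m : ℕ)
    (f : Finset α → α → M) :
    ∑ U ∈ powersetCard m univ, ∑ v ∈ Uᶜ, f U v =
      ∑ U ∈ powersetCard (m + 1) univ, ∑ v ∈ U, f (U.erase v) v := by
  rw [sum_sigma', sum_sigma']
  refine sum_bij' (fun p _ => ⟨insert p.2 p.1, p.2⟩) (fun p _ => ⟨p.1.erase p.2, p.2⟩)
    ?_ ?_ ?_ ?_ ?_
  · rintro ⟨U, v⟩ h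
    simp only [mem_sigma, mem_powersetCard_univ, Finset.mem_compl] at h ⊢
    exact ⟨by rw [card_insert_of_notMem h.2, h.1], mem_insert_self v U⟩
  · rintro ⟨U, v⟩ h
    simp only [mem_sigma, mem_powersetCard_univ, Finset.mem_compl] at h ⊢
    exact ⟨by rw [card_erase_of_mem h.2, h.1, Nat.add_sub_cancel], notMem_erase v U⟩
  all_goals
    rintro ⟨U, v⟩ h
    simp only [mem_sigma, Finset.mem_compl] at h
    simp only [erase_insert_eq_erase, erase_eq_of_notMem, insert_erase, h.2, not_false_eq_true]

end Link
end Hypergraph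

section Counting

variable {α : Type*} [Fintype α] [DecidableEq α] {H : Finset (Finset α)}
  {r D j m : ℕ}

lemma choose_sub_sub_mul_pow_le {N k : ℕ} (hkm : k ≤ m) (hmN : m ≤ N) :
    (N - k).choose (m - k) * N ^ k ≤ N.choose m * m ^ k := by
  induction k with
  | zero => simp
  | succ k ih =>
    have hN : N - k = N - (k + 1) + 1 := by omega
    have hm : m - k = m - (k + 1) + 1 := by omega
    have hrec := Nat.add_one_mul_choose_eq (N - (k + 1)) (m - (k + 1))
    rw [← hN, ← hm] at hrec
    have hfrac : (m - k) * N ≤ (N - k) * m := by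
      rw [Nat.sub_mul, Nat.sub_mul, mul_comm N m]
      exact Nat.sub_le_sub_left (Nat.mul_le_mul_left k hmN) _
    refine le_of_mul_le_mul_left ?_ (show 0 < N - k by omega)
    calc (N - k) * ((N - (k + 1)).choose (m - (k + 1)) * N ^ (k + 1))
        = (N - k) * (N - (k + 1)).choose (m - (k + 1)) * N ^ k * N := by ring
      _ = (N - k).choose (m - k) * N ^ k * ((m - k) * N) := by rw [hrec]; ring
      _ ≤ N.choose m * m ^ k * ((N - k) * m) := Nat.mul_le_mul (ih (by omega)) hfrac
      _ = (N - k) * (N.choose m * m ^ (k + 1)) := by ring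

lemma card_powersetCard_filter_subset_mul_le (S : Finset α) (m : ℕ) :
    #{U ∈ powersetCard m (univ : Finset α) | S ⊆ U} * Fintype.card α ^ #S ≤
      (Fintype.card α).choose m * m ^ #S := by
  by_cases h : #S ≤ m ∧ m ≤ Fintype.card α
  · rw [card_filter_powersetCard_subset _ _ _ (subset_univ S) h.1, card_univ]
    exact choose_sub_sub_mul_pow_le h.1 h.2
  · have hempty : {U ∈ powersetCard m (univ : Finset α) | S ⊆ U} = ∅ := by
      refine filter_eq_empty_iff.2 fun U hU hSU => h ?_
      rw [← mem_powersetCard_univ.1 hU]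
      exact ⟨card_le_card hSU, card_le_univ U⟩
    simp [hempty]

lemma card_filter_exists_subset_mul_le {β : Type*} (Ω : Finset β) (Z : β → Finset α) (w : β → α)
    {k : ℕ} (hZ : ∀ x ∈ Ω, #(Z x) = k) (m : ℕ) :
    #{p ∈ powersetCard m (univ : Finset α) ×ˢ (univ : Finset α) |
        ∃ x ∈ Ω, Z x ⊆ p.1 ∧ w x = p.2} * Fintype.card α ^ k ≤
      #Ω * ((Fintype.card α).choose m * m ^ k) := by
  have hcover : {p ∈ powersetCard m (univ : Finset α) ×ˢ (univ : Finset α) |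
      ∃ x ∈ Ω, Z x ⊆ p.1 ∧ w x = p.2} ⊆
      Ω.biUnion fun x => {U ∈ powersetCard m (univ : Finset α) | Z x ⊆ U} ×ˢ {w x} := by
    rintro ⟨U, v⟩ hp
    simp only [mem_filter, mem_product, mem_biUnion, Finset.mem_singleton] at hp ⊢
    obtain ⟨⟨hU, -⟩, x, hx, hZU, rfl⟩ := hp
    exact ⟨x, hx, ⟨hU, hZU⟩, rfl⟩
  calc #{p ∈ powersetCard m (univ : Finset α) ×ˢ (univ : Finset α) |
          ∃ x ∈ Ω, Z x ⊆ p.1 ∧ w x = p.2} * Fintype.card α ^ k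
      ≤ (∑ x ∈ Ω, #{U ∈ powersetCard m (univ : Finset α) | Z x ⊆ U}) * Fintype.card α ^ k := by
        gcongr
        refine (card_le_card hcover).trans (card_biUnion_le.trans_eq ?_)
        simp only [card_product, card_singleton, mul_one]
    _ ≤ #Ω * ((Fintype.card α).choose m * m ^ k) := by
        rw [sum_mul]
        refine sum_le_card_nsmul _ _ _ fun x hx => ?_
        simpa only [hZ x hx] using card_powersetCard_filter_subset_mul_le (Z x) m

section Codegree

variable (hH : (H : Set (Finset α)).Sized (r + 1))
  (hD : ∀ s : Finset α, #s = r → #{e ∈ H | s ⊆ e} ≤ D)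

include hH hD in
lemma card_filter_superset_le {s : Finset α} (hs : #s + j = r) :
    #{e ∈ H | s ⊆ e} ≤ D * Fintype.card α ^ j := by
  induction j generalizing s with
  | zero => simpa using hD s hs
  | succ j ih =>
    have hcover : {e ∈ H | s ⊆ e} ⊆ sᶜ.biUnion fun a => {e ∈ H | insert a s ⊆ e} := by
      intro e he
      simp only [mem_filter, mem_biUnion, Finset.mem_compl] at he ⊢
      have := hH he.1
      obtain ⟨a, hae, has⟩ := exists_mem_notMem_of_card_lt_card (show #s < #e by omega)
      exact ⟨a, has, he.1, insert_subset hae he.2⟩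
    calc #{e ∈ H | s ⊆ e} ≤ #sᶜ * (D * Fintype.card α ^ j) := by
          refine (card_le_card hcover).trans (card_biUnion_le_card_mul _ _ _ fun a ha => ih ?_)
          rw [card_insert_of_notMem (Finset.mem_compl.1 ha)]
          omega
      _ ≤ Fintype.card α * (D * Fintype.card α ^ j) := by
          gcongr
          exact card_le_univ _
      _ = D * Fintype.card α ^ (j + 1) := by ring

include hH hD in
lemma card_filter_card_inter_eq_le {e : Finset α} (he : e ∈ H) (hj : j ≤ r) :
    #{e' ∈ H | #(e ∩ e') = j} ≤ (r + 1).choose j * (D * Fintype.card α ^ (r - j)) := by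
  have hcover : {e' ∈ H | #(e ∩ e') = j} ⊆
      (powersetCard j e).biUnion fun s => {e' ∈ H | s ⊆ e'} := by
    intro e' he'
    simp only [mem_filter, mem_biUnion, mem_powersetCard] at he' ⊢
    exact ⟨e ∩ e', ⟨inter_subset_left, he'.2⟩, he'.1, inter_subset_right⟩
  calc #{e' ∈ H | #(e ∩ e') = j} ≤ #(powersetCard j e) * (D * Fintype.card α ^ (r - j)) := by
        refine (card_le_card hcover).trans (card_biUnion_le_card_mul _ _ _ fun s hs => ?_)
        refine card_filter_superset_le hH hD ?_
        have := (mem_powersetCard.1 hs).2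
        omega
    _ = (r + 1).choose j * (D * Fintype.card α ^ (r - j)) := by rw [card_powersetCard, hH he]

/-- The triples `(e, e', v)`, encoded as `⟨e, e', v⟩`, of two edges sharing exactly `j` vertices and
a vertex `v` of the first one. -/
def overlappingPairs (H : Finset (Finset α)) (j : ℕ) : Finset (Σ _ : Finset α, Finset α × α) :=
  H.sigma fun e => {e' ∈ H | #(e ∩ e') = j} ×ˢ e

include hH hD in
lemma card_overlappingPairs_le (hj : j ≤ r) :
    #(overlappingPairs H j) ≤
      (r + 1) * (r + 1).choose j * D ^ 2 * Fintype.card α ^ (2 * r - j) := by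
  have hH_card : #H ≤ D * Fintype.card α ^ r := by
    simpa using card_filter_superset_le hH hD (s := ∅) (j := r) (by simp)
  rw [overlappingPairs, card_sigma]
  calc ∑ e ∈ H, #({e' ∈ H | #(e ∩ e') = j} ×ˢ e)
      ≤ #H * ((r + 1).choose j * (D * Fintype.card α ^ (r - j)) * (r + 1)) := by
        refine sum_le_card_nsmul _ _ _ fun e he => ?_
        rw [card_product, hH he]
        gcongr
        exact card_filter_card_inter_eq_le hH hD he hj
    _ ≤ D * Fintype.card α ^ r *
          ((r + 1).choose j * (D * Fintype.card α ^ (r - j)) * (r + 1)) := by gcongr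
    _ = (r + 1) * (r + 1).choose j * D ^ 2 * Fintype.card α ^ (2 * r - j) := by
        rw [show 2 * r - j = r + (r - j) by omega]
        ring

/-- The configurations of three distinct vertices `v`, `a`, `b` and edges `e₁ ⊇ {v, a}`,
`e₂ ⊇ {v, b}`, `e₃ ⊇ {a, b}` which have no further vertices in common, encoded as
`⟨(v, a, b), e₁, e₂, e₃⟩`. -/
def looseTriangles (H : Finset (Finset α)) (r : ℕ) :
    Finset (Σ _ : α × α × α, Finset α × Finset α × Finset α) :=
  (univ.filter fun p : α × α × α => p.1 ≠ p.2.1 ∧ p.1 ≠ p.2.2 ∧ p.2.1 ≠ p.2.2).sigma fun p =>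
    ({e ∈ H | {p.1, p.2.1} ⊆ e} ×ˢ {e ∈ H | {p.1, p.2.2} ⊆ e} ×ˢ
      {e ∈ H | {p.2.1, p.2.2} ⊆ e}).filter fun e => #(e.1 ∪ e.2.1 ∪ e.2.2) = 3 * r

include hH hD in
lemma card_looseTriangles_le (hr : 2 ≤ r) :
    #(looseTriangles H r) ≤ D ^ 3 * Fintype.card α ^ (3 * (r - 1)) := by
  have hpair {a b : α} (hab : a ≠ b) :
      #{e ∈ H | {a, b} ⊆ e} ≤ D * Fintype.card α ^ (r - 2) :=
    card_filter_superset_le hH hD (by rw [card_pair hab]; omega)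
  rw [looseTriangles, card_sigma]
  calc _ ≤ Fintype.card α ^ 3 * (D * Fintype.card α ^ (r - 2)) ^ 3 := by
        refine (sum_le_card_nsmul _ _ ((D * Fintype.card α ^ (r - 2)) ^ 3) fun p hp => ?_).trans ?_
        · obtain ⟨-, hva, hvb, hab⟩ := mem_filter.1 hp
          refine (card_filter_le _ _).trans ?_
          rw [card_product, card_product, pow_three]
          gcongr
          exacts [hpair hva, hpair hvb, hpair hab]
        · rw [smul_eq_mul]
          gcongr
          refine (card_le_univ _).trans_eq ?_
          rw [Fintype.card_prod, Fintype.card_prod, pow_three]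
    _ = D ^ 3 * Fintype.card α ^ (3 * (r - 1)) := by
        rw [show 3 * (r - 1) = 3 + (r - 2) * 3 by omega, pow_add, pow_mul]
        ring

end Codegree
end Counting

section SparseLink

variable {α : Type*} [DecidableEq α] {H : Finset (Finset α)} {U : Finset α} {v : α} {r : ℕ}

lemma exists_mem_overlappingPairs (hH : (H : Set (Finset α)).Sized (r + 1)) {e e' : Finset α}
    (he : e ∈ H) (he' : e' ∈ H) (hne : e ≠ e') (hinter : 2 ≤ #(e ∩ e')) (hv : v ∈ e)
    (heU : e ⊆ insert v U) (heU' : e' ⊆ insert v U) :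
    ∃ j ∈ Finset.Icc 2 r, ∃ x ∈ overlappingPairs H j,
      (x.1 ∪ x.2.1).erase x.2.2 ⊆ U ∧ x.2.2 = v := by
  have hlt : #(e ∩ e') < r + 1 := by
    rw [← hH he]
    refine card_lt_card (inter_subset_left.ssubset_of_ne fun h => hne ?_)
    exact eq_of_subset_of_card_le (inter_eq_left.1 h) (by rw [hH he, hH he'])
  refine ⟨#(e ∩ e'), Finset.mem_Icc.2 ⟨hinter, by omega⟩, ⟨e, e', v⟩, ?_, ?_, rfl⟩
  · simp only [overlappingPairs, mem_sigma, mem_product, mem_filter, he, he', hv, and_self]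
  · exact subset_insert_iff.1 (union_subset heU heU')

lemma card_union_union_of_inter_eq_singleton {e₁ e₂ e₃ : Finset α} {v a b : α}
    (h₁ : #e₁ = r + 1) (h₂ : #e₂ = r + 1) (h₃ : #e₃ = r + 1) (h₁₂ : e₁ ∩ e₂ = {v})
    (h₁₃ : e₁ ∩ e₃ = {a}) (h₂₃ : e₂ ∩ e₃ = {b}) (hab : a ≠ b) :
    #(e₁ ∪ e₂ ∪ e₃) = 3 * r := by
  have hpair : #(e₁ ∪ e₂) + 1 = 2 * (r + 1) := by
    have := card_union_add_card_inter e₁ e₂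
    rw [h₁₂, card_singleton, h₁, h₂] at this
    omega
  have hunion := card_union_add_card_inter (e₁ ∪ e₂) e₃
  rw [union_inter_distrib_right, h₁₃, h₂₃, ← insert_eq, card_pair hab, h₃] at hunion
  omega

lemma eq_singleton_of_card_inter_lt_two {e e' : Finset α} {a : α} (ha : a ∈ e) (ha' : a ∈ e')
    (h : ¬ 2 ≤ #(e ∩ e')) : e ∩ e' = {a} :=
  eq_singleton_iff_unique_mem.2 ⟨mem_inter_of_mem ha ha', fun _ hx =>
    card_le_one.1 (by omega) _ hx _ (mem_inter_of_mem ha ha')⟩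

lemma card_erase_union_of_mem_overlappingPairs (hH : (H : Set (Finset α)).Sized (r + 1)) {j : ℕ}
    {x : Σ _ : Finset α, Finset α × α} (hx : x ∈ overlappingPairs H j) :
    #((x.1 ∪ x.2.1).erase x.2.2) = 2 * r + 1 - j := by
  simp only [overlappingPairs, mem_sigma, mem_product, mem_filter] at hx
  obtain ⟨he, ⟨he', hj⟩, hv⟩ := hx
  have := card_union_add_card_inter x.1 x.2.1
  rw [hH he, hH he', hj] at this
  rw [card_erase_of_mem (mem_union_left _ hv)]
  omega

variable [Fintype α]

lemma exists_mem_looseTriangles {e₁ e₂ e₃ : Finset α} {a b : α}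
    (hv : v ∉ e₃) (hab : a ≠ b) (h₁ : e₁ ∈ {e ∈ H | {v, a} ⊆ e})
    (h₂ : e₂ ∈ {e ∈ H | {v, b} ⊆ e}) (h₃ : e₃ ∈ {e ∈ H | {a, b} ⊆ e})
    (hcard : #(e₁ ∪ e₂ ∪ e₃) = 3 * r) (hU : e₁ ∪ e₂ ∪ e₃ ⊆ insert v U) :
    ∃ x ∈ looseTriangles H r, (x.2.1 ∪ x.2.2.1 ∪ x.2.2.2).erase x.1.1 ⊆ U ∧ x.1.1 = v := by
  refine ⟨⟨(v, a, b), e₁, e₂, e₃⟩, ?_, subset_insert_iff.1 hU, rfl⟩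
  obtain ⟨ha₃, hb₃⟩ : a ∈ e₃ ∧ b ∈ e₃ := by
    simpa only [insert_subset_iff, singleton_subset_iff] using (mem_filter.1 h₃).2
  have hva : v ≠ a := fun h => hv (h ▸ ha₃)
  have hvb : v ≠ b := fun h => hv (h ▸ hb₃)
  exact mem_sigma.2 ⟨mem_filter.2 ⟨mem_univ _, hva, hvb, hab⟩,
    mem_filter.2 ⟨mem_product.2 ⟨h₁, mem_product.2 ⟨h₂, h₃⟩⟩, hcard⟩⟩

lemma exists_overlappingPairs_or_looseTriangles_of_not_hasSparseLink
    (hH : (H : Set (Finset α)).Sized (r + 1)) (hv : v ∉ U) (hsparse : ¬ HasSparseLink H U v) :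
    (∃ j ∈ Finset.Icc 2 r, ∃ x ∈ overlappingPairs H j,
      (x.1 ∪ x.2.1).erase x.2.2 ⊆ U ∧ x.2.2 = v) ∨
    ∃ x ∈ looseTriangles H r, (x.2.1 ∪ x.2.2.1 ∪ x.2.2.2).erase x.1.1 ⊆ U ∧ x.1.1 = v := by
  simp only [HasSparseLink, not_forall, not_le] at hsparse
  obtain ⟨e₃, he₃, heU, hcard⟩ := hsparse
  obtain ⟨a, ha, b, hb, hab⟩ := one_lt_card.1 hcard
  simp only [Finset.mem_inter, mem_linkVertices, mem_memberSubfamily] at ha hb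
  obtain ⟨ha₃, T₁, ⟨he₁, -⟩, hT₁, ha₁⟩ := ha
  obtain ⟨hb₃, T₂, ⟨he₂, -⟩, hT₂, hb₂⟩ := hb
  have hv₃ : v ∉ e₃ := fun h => hv (heU h)
  have hne₁ : insert v T₁ ≠ e₃ := fun h => hv₃ (h ▸ mem_insert_self v T₁)
  have hne₂ : insert v T₂ ≠ e₃ := fun h => hv₃ (h ▸ mem_insert_self v T₂)
  have he₁U := insert_subset_insert v hT₁
  have he₂U := insert_subset_insert v hT₂
  have he₃U := heU.trans (subset_insert v U)
  have ha₁ := mem_insert_of_mem (b := v) ha₁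
  have hb₂ := mem_insert_of_mem (b := v) hb₂
  have hv₁ := mem_insert_self v T₁
  have hv₂ := mem_insert_self v T₂
  generalize insert v T₁ = e₁ at *
  generalize insert v T₂ = e₂ at *
  by_cases h₁₃ : 2 ≤ #(e₁ ∩ e₃)
  · exact .inl (exists_mem_overlappingPairs hH he₁ he₃ hne₁ h₁₃ hv₁ he₁U he₃U)
  by_cases h₂₃ : 2 ≤ #(e₂ ∩ e₃)
  · exact .inl (exists_mem_overlappingPairs hH he₂ he₃ hne₂ h₂₃ hv₂ he₂U he₃U)
  have h₁₃ := eq_singleton_of_card_inter_lt_two ha₁ ha₃ h₁₃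
  have h₂₃ := eq_singleton_of_card_inter_lt_two hb₂ hb₃ h₂₃
  have hne : e₁ ≠ e₂ := by
    rintro rfl
    exact hab (singleton_injective (h₁₃.symm.trans h₂₃))
  by_cases h₁₂ : 2 ≤ #(e₁ ∩ e₂)
  · exact .inl (exists_mem_overlappingPairs hH he₁ he₂ hne h₁₂ hv₁ he₁U he₂U)
  have h₁₂ := eq_singleton_of_card_inter_lt_two hv₁ hv₂ h₁₂
  refine .inr (exists_mem_looseTriangles (e₁ := e₁) (e₂ := e₂) hv₃ hab ?_ ?_ ?_
    (card_union_union_of_inter_eq_singleton (hH he₁) (hH he₂) (hH he₃) h₁₂ h₁₃ h₂₃ hab)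
    (union_subset (union_subset he₁U he₂U) he₃U))
  all_goals simp only [mem_filter, insert_subset_iff, singleton_subset_iff, and_self, *]

lemma card_erase_union_of_mem_looseTriangles
    {x : Σ _ : α × α × α, Finset α × Finset α × Finset α} (hx : x ∈ looseTriangles H r) :
    #((x.2.1 ∪ x.2.2.1 ∪ x.2.2.2).erase x.1.1) = 3 * r - 1 := by
  simp only [looseTriangles, mem_sigma, mem_product, mem_filter, insert_subset_iff] at hx
  obtain ⟨-, ⟨⟨-, hv, -⟩, -⟩, hcard⟩ := hx
  rw [card_erase_of_mem (mem_union_left _ (mem_union_left _ hv)), hcard]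

/-- The pairs of an `m`-set `U` and a vertex `v ∉ U` whose link in `U` is sparse. -/
def sparsePairs (H : Finset (Finset α)) (m : ℕ) : Finset (Finset α × α) :=
  {p ∈ powersetCard m (univ : Finset α) ×ˢ univ | p.2 ∉ p.1 ∧ HasSparseLink H p.1 p.2}

/-- The pairs of an `m`-set `U` and a vertex `v` of an edge meeting another edge in `j` vertices,
such that `U` contains all other vertices of both edges. -/
def overlapPairs (H : Finset (Finset α)) (j m : ℕ) : Finset (Finset α × α) :=
  {p ∈ powersetCard m (univ : Finset α) ×ˢ univ |
    ∃ x ∈ overlappingPairs H j, (x.1 ∪ x.2.1).erase x.2.2 ⊆ p.1 ∧ x.2.2 = p.2}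

/-- The pairs of an `m`-set `U` and a corner `v` of a loose triangle of `H` such that `U` contains
all other vertices of the triangle. -/
def trianglePairs (H : Finset (Finset α)) (r m : ℕ) : Finset (Finset α × α) :=
  {p ∈ powersetCard m (univ : Finset α) ×ˢ univ |
    ∃ x ∈ looseTriangles H r, (x.2.1 ∪ x.2.2.1 ∪ x.2.2.2).erase x.1.1 ⊆ p.1 ∧ x.1.1 = p.2}

variable {D m : ℕ}

lemma filter_not_hasSparseLink_subset (hH : (H : Set (Finset α)).Sized (r + 1)) :
    {p ∈ powersetCard m (univ : Finset α) ×ˢ (univ : Finset α) |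
        p.2 ∉ p.1 ∧ ¬ HasSparseLink H p.1 p.2} ⊆
      (Finset.Icc 2 r).biUnion (overlapPairs H · m) ∪ trianglePairs H r m := by
  intro p hp
  obtain ⟨hpP, hv, hsparse⟩ := mem_filter.1 hp
  rcases exists_overlappingPairs_or_looseTriangles_of_not_hasSparseLink hH hv hsparse with
    ⟨j, hj, hx⟩ | hx
  · exact mem_union_left _ (mem_biUnion.2 ⟨j, hj, mem_filter.2 ⟨hpP, hx⟩⟩)
  · exact mem_union_right _ (mem_filter.2 ⟨hpP, hx⟩)

lemma card_not_hasSparseLink_le (hH : (H : Set (Finset α)).Sized (r + 1)) :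
    #{p ∈ powersetCard m (univ : Finset α) ×ˢ (univ : Finset α) |
        p.2 ∉ p.1 ∧ ¬ HasSparseLink H p.1 p.2} ≤
      ∑ j ∈ Finset.Icc 2 r, #(overlapPairs H j m) + #(trianglePairs H r m) :=
  (card_le_card (filter_not_hasSparseLink_subset hH)).trans <|
    (card_union_le _ _).trans (Nat.add_le_add_right card_biUnion_le _)

lemma card_overlapPairs_mul_le [Nonempty α] {j : ℕ}
    (hH : (H : Set (Finset α)).Sized (r + 1))
    (hD : ∀ s : Finset α, #s = r → #{e ∈ H | s ⊆ e} ≤ D) (hj : j ≤ r) (m : ℕ) :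
    #(overlapPairs H j m) * Fintype.card α ≤
      (r + 1) * (r + 1).choose j * D ^ 2 * ((Fintype.card α).choose m * m ^ (2 * r + 1 - j)) := by
  have h := card_filter_exists_subset_mul_le (overlappingPairs H j)
    (fun x => (x.1 ∪ x.2.1).erase x.2.2) (fun x => x.2.2)
    (fun x hx => card_erase_union_of_mem_overlappingPairs hH hx) m
  have hcard := card_overlappingPairs_le hH hD hj
  rw [show 2 * r + 1 - j = 2 * r - j + 1 by omega, pow_succ] at h ⊢
  refine le_of_mul_le_mul_left (a := Fintype.card α ^ (2 * r - j)) ?_ (pow_pos Fintype.card_pos _)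
  calc _ ≤ #(overlappingPairs H j) * ((Fintype.card α).choose m * (m ^ (2 * r - j) * m)) := by
        rwa [mul_left_comm]
    _ ≤ (r + 1) * (r + 1).choose j * D ^ 2 * Fintype.card α ^ (2 * r - j) *
          ((Fintype.card α).choose m * (m ^ (2 * r - j) * m)) := Nat.mul_le_mul_right _ hcard
    _ = _ := by ring

lemma card_trianglePairs_mul_le [Nonempty α] (hH : (H : Set (Finset α)).Sized (r + 1))
    (hD : ∀ s : Finset α, #s = r → #{e ∈ H | s ⊆ e} ≤ D) (hr : 2 ≤ r) (m : ℕ) :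
    #(trianglePairs H r m) * Fintype.card α ^ 2 ≤
      D ^ 3 * ((Fintype.card α).choose m * m ^ (3 * r - 1)) := by
  have h := card_filter_exists_subset_mul_le (looseTriangles H r)
    (fun x => (x.2.1 ∪ x.2.2.1 ∪ x.2.2.2).erase x.1.1) (fun x => x.1.1)
    (fun x hx => card_erase_union_of_mem_looseTriangles hx) m
  have hcard := card_looseTriangles_le hH hD hr
  refine le_of_mul_le_mul_left (a := Fintype.card α ^ (3 * (r - 1))) ?_ (pow_pos Fintype.card_pos _)
  rw [mul_left_comm, ← pow_add, show 3 * (r - 1) + 2 = 3 * r - 1 by omega]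
  exact (h.trans (Nat.mul_le_mul_right _ hcard)).trans_eq (by ring)

lemma four_mul_card_not_hasSparseLink_le [Nonempty α] (hH : (H : Set (Finset α)).Sized 4)
    (hD : ∀ s : Finset α, #s = 3 → #{e ∈ H | s ⊆ e} ≤ D)
    (hm₂ : 320 * D ^ 2 * m ^ 5 ≤ Fintype.card α ^ 2)
    (hm₃ : 8 * D ^ 3 * m ^ 8 ≤ Fintype.card α ^ 3) :
    4 * #{p ∈ powersetCard m (univ : Finset α) ×ˢ (univ : Finset α) |
        p.2 ∉ p.1 ∧ ¬ HasSparseLink H p.1 p.2} ≤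
      (Fintype.card α).choose m * Fintype.card α := by
  have h₂ := card_overlapPairs_mul_le hH hD (j := 2) (by norm_num) m
  have h₃ := card_overlapPairs_mul_le hH hD (j := 3) (by norm_num) m
  have ht := card_trianglePairs_mul_le hH hD (by norm_num) m
  have hN : 0 < Fintype.card α := Fintype.card_pos
  have hcover := card_not_hasSparseLink_le (r := 3) (m := m) hH
  rw [show Finset.Icc 2 3 = {2, 3} from rfl, sum_pair (by norm_num)] at hcover
  set N := Fintype.card α
  have hoverlap : 8 * (#(overlapPairs H 2 m) + #(overlapPairs H 3 m)) ≤ N.choose m * N := by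
    have hm : m ^ 4 ≤ m ^ 5 := by
      rcases m.eq_zero_or_pos with rfl | hm
      · simp
      · exact Nat.pow_le_pow_right hm (by norm_num)
    refine le_of_mul_le_mul_right ?_ hN
    calc 8 * (#(overlapPairs H 2 m) + #(overlapPairs H 3 m)) * N
        = 8 * (#(overlapPairs H 2 m) * N + #(overlapPairs H 3 m) * N) := by ring
      _ ≤ 8 * (4 * 6 * D ^ 2 * (N.choose m * m ^ 5) + 4 * 4 * D ^ 2 * (N.choose m * m ^ 4)) :=
          Nat.mul_le_mul_left _ (Nat.add_le_add h₂ h₃)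
      _ ≤ 8 * (4 * 6 * D ^ 2 * (N.choose m * m ^ 5) + 4 * 4 * D ^ 2 * (N.choose m * m ^ 5)) := by
          gcongr
      _ = N.choose m * (320 * D ^ 2 * m ^ 5) := by ring
      _ ≤ N.choose m * N ^ 2 := by gcongr
      _ = N.choose m * N * N := by ring
  have htriangle : 8 * #(trianglePairs H 3 m) ≤ N.choose m * N := by
    refine le_of_mul_le_mul_right ?_ (pow_pos hN 2)
    calc 8 * #(trianglePairs H 3 m) * N ^ 2 = 8 * (#(trianglePairs H 3 m) * N ^ 2) := by ring
      _ ≤ 8 * (D ^ 3 * (N.choose m * m ^ 8)) := Nat.mul_le_mul_left _ ht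
      _ = N.choose m * (8 * D ^ 3 * m ^ 8) := by ring
      _ ≤ N.choose m * N ^ 3 := by gcongr
      _ = N.choose m * N * N ^ 2 := by ring
  omega

end SparseLink

section ExistsIndep

variable {α : Type*} [DecidableEq α] [Fintype α] {H : Finset (Finset α)} {D m n r : ℕ}

lemma choose_mul_sub_le_two_mul_card_sparsePairs [Nonempty α]
    (hH : (H : Set (Finset α)).Sized 4) (hD : ∀ s : Finset α, #s = 3 → #{e ∈ H | s ⊆ e} ≤ D)
    (hm : 2 * m ≤ Fintype.card α) (hm₂ : 320 * D ^ 2 * m ^ 5 ≤ Fintype.card α ^ 2)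
    (hm₃ : 8 * D ^ 3 * m ^ 8 ≤ Fintype.card α ^ 3) :
    (Fintype.card α).choose m * (Fintype.card α - m) ≤ 2 * #(sparsePairs H m) := by
  have hbad := four_mul_card_not_hasSparseLink_le hH hD hm₂ hm₃
  have hsplit : #(sparsePairs H m) + #{p ∈ powersetCard m (univ : Finset α) ×ˢ univ |
        p.2 ∉ p.1 ∧ ¬ HasSparseLink H p.1 p.2} =
      #{p ∈ powersetCard m (univ : Finset α) ×ˢ univ | p.2 ∉ p.1} := by
    rw [sparsePairs, ← filter_filter, ← filter_filter, card_filter_add_card_filter_not]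
  have htotal : #{p ∈ powersetCard m (univ : Finset α) ×ˢ univ | p.2 ∉ p.1} =
      (Fintype.card α).choose m * (Fintype.card α - m) := by
    rw [card_filter, sum_product, sum_const_nat (m := Fintype.card α - m), card_powersetCard,
      card_univ]
    intro U hU
    rw [← card_filter, filter_notMem_eq_sdiff, ← compl_eq_univ_sdiff, card_compl,
      (mem_powersetCard.1 hU).2]
  have hN : (Fintype.card α).choose m * Fintype.card α ≤
      2 * ((Fintype.card α).choose m * (Fintype.card α - m)) := by
    rw [mul_left_comm]
    exact Nat.mul_le_mul_left _ (by omega)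
  omega

lemma sum_sparsePairs_le_sum_sum_compl {f : Finset α → α → ℝ} (hf : ∀ U v, 0 ≤ f U v) :
    ∑ p ∈ sparsePairs H m, f p.1 p.2 ≤ ∑ U ∈ powersetCard m univ, ∑ v ∈ Uᶜ, f U v := by
  have hcompl (U : Finset α) : Uᶜ = ({v | v ∉ U} : Finset α) := by
    ext v
    simp only [Finset.mem_compl, mem_filter, Finset.mem_univ, true_and]
  simp only [hcompl, sum_filter]
  rw [sparsePairs, ← filter_filter, ← sum_product', ← sum_filter]
  exact sum_le_sum_of_subset_of_nonneg (filter_subset _ _) fun p _ _ => hf p.1 p.2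

lemma exp_neg_mul_card_sparsePairs_le (hH : (H : Set (Finset α)).Sized (r + 2))
    (hD : ∀ s : Finset α, #s = r + 1 → #{e ∈ H | s ⊆ e} ≤ D)
    (hn : ∀ W, IsIndep H W → #W ≤ n) (m : ℕ) (μ : ℝ) :
    Real.exp (-μ) * ((1 + μ) * #(sparsePairs H m) -
        2 * ((Fintype.card α).choose m * (D * n ^ (r + 1)))) ≤
      (Fintype.card α).choose (m + 1) * (2 * n) := by
  have hempty : ∅ ∉ H := fun h => by simpa using hH h
  have hsingleton (v : α) : {v} ∉ H := fun h => by simpa using hH h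
  have hconflicts : ∑ p ∈ sparsePairs H m, meanConflicts H p.1 p.2 ≤
      (Fintype.card α).choose m * (D * n ^ (r + 1)) :=
    (sum_sparsePairs_le_sum_sum_compl fun U v => by unfold meanConflicts; positivity).trans <| by
      refine (sum_le_card_nsmul _ _ _ fun U _ => sum_meanConflicts_le hH hD hn Uᶜ U).trans_eq ?_
      rw [card_powersetCard, card_univ, nsmul_eq_mul]
  calc Real.exp (-μ) * ((1 + μ) * #(sparsePairs H m) -
        2 * ((Fintype.card α).choose m * (D * n ^ (r + 1))))
      ≤ Real.exp (-μ) * ((1 + μ) * #(sparsePairs H m) -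
          2 * ∑ p ∈ sparsePairs H m, meanConflicts H p.1 p.2) := by gcongr
    _ = ∑ p ∈ sparsePairs H m, Real.exp (-μ) * (1 + μ - 2 * meanConflicts H p.1 p.2) := by
        rw [← mul_sum, sum_sub_distrib, ← mul_sum, sum_const, nsmul_eq_mul, mul_comm (1 + μ)]
    _ ≤ ∑ p ∈ sparsePairs H m, extensionRatio H p.1 p.2 := sum_le_sum fun p hp =>
        exp_neg_mul_le_extensionRatio hempty (hsingleton _) (mem_filter.1 hp).2.2 μ
    _ ≤ ∑ U ∈ powersetCard m univ, ∑ v ∈ Uᶜ, extensionRatio H U v :=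
        sum_sparsePairs_le_sum_sum_compl fun U v => by unfold extensionRatio; positivity
    _ = ∑ U ∈ powersetCard (m + 1) univ, ∑ v ∈ U, extensionRatio H (U.erase v) v :=
        sum_powersetCard_sum_compl_eq m _
    _ ≤ (Fintype.card α).choose (m + 1) * (2 * n) := by
        refine (sum_le_card_nsmul _ _ _ fun U _ =>
          sum_extensionRatio_erase_le hempty hn).trans_eq ?_
        rw [card_powersetCard, card_univ, nsmul_eq_mul]

theorem exists_isIndep_card_gt (hH : (H : Set (Finset α)).Sized 4)
    (hD : ∀ s : Finset α, #s = 3 → #{e ∈ H | s ⊆ e} ≤ D)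
    (hm : 2 * m ≤ Fintype.card α) (hm₂ : 320 * D ^ 2 * m ^ 5 ≤ Fintype.card α ^ 2)
    (hm₃ : 8 * D ^ 3 * m ^ 8 ≤ Fintype.card α ^ 3) {μ : ℝ} (hμ : 0 ≤ μ)
    (hμm : Real.exp μ * (4 * n) ≤ m) (hμN : 8 * D * n ^ 3 < μ * Fintype.card α) :
    ∃ W, IsIndep H W ∧ n < #W := by
  by_contra! hn
  have hN : (0 : ℝ) < Fintype.card α :=
    pos_of_mul_pos_right ((by positivity : (0 : ℝ) ≤ 8 * D * n ^ 3).trans_lt hμN) hμ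
  have : Nonempty α := Fintype.card_pos_iff.1 (by exact_mod_cast hN)
  have hmany : ((Fintype.card α).choose m : ℝ) * (Fintype.card α - m) ≤
      2 * #(sparsePairs H m) := by
    rw [← Nat.cast_sub (by omega)]
    exact_mod_cast choose_mul_sub_le_two_mul_card_sparsePairs hH hD hm hm₂ hm₃
  have hsucc : ((Fintype.card α).choose (m + 1) : ℝ) * (m + 1) =
      (Fintype.card α).choose m * (Fintype.card α - m) := by
    rw [← Nat.cast_sub (by omega)]
    exact_mod_cast Nat.choose_succ_right_eq _ m
  have hfew := exp_neg_mul_card_sparsePairs_le hH hD hn m μ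
  have hchoose : (0 : ℝ) < (Fintype.card α).choose m := by
    exact_mod_cast Nat.choose_pos (by omega)
  have hm' : (2 * m : ℝ) ≤ Fintype.card α := by exact_mod_cast hm
  set N := (Fintype.card α : ℝ)
  set C := ((Fintype.card α).choose m : ℝ)
  set C' := ((Fintype.card α).choose (m + 1) : ℝ)
  set g := (#(sparsePairs H m) : ℝ)
  have hextend : Real.exp μ * (C' * (2 * n)) ≤ g := by
    refine le_of_mul_le_mul_right ?_ (by positivity : (0 : ℝ) < m + 1)
    calc Real.exp μ * (C' * (2 * n)) * (m + 1)
        = Real.exp μ * (2 * n) * (C' * (m + 1)) := by ring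
      _ ≤ Real.exp μ * (2 * n) * (2 * g) := by rw [hsucc]; gcongr
      _ = g * (Real.exp μ * (4 * n)) := by ring
      _ ≤ g * (m + 1) := by gcongr; linarith
  rw [Real.exp_neg, inv_mul_le_iff₀ (Real.exp_pos μ)] at hfew
  have hconflict : μ * g ≤ 2 * (C * (D * n ^ 3)) := by
    simp only [Nat.reduceAdd] at hfew
    linarith
  have hlarge : C * N ≤ 4 * g := by
    calc C * N ≤ C * (2 * (N - m)) := by gcongr; linarith
      _ ≤ 4 * g := by linarith
  refine hμN.not_ge (le_of_mul_le_mul_left ?_ hchoose)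
  calc C * (μ * N) = μ * (C * N) := by ring
    _ ≤ μ * (4 * g) := by gcongr
    _ ≤ C * (8 * D * n ^ 3) := by linarith

end ExistsIndep

section MonochromaticQuadruples

variable {V : Type*} {c : Sym2 V → ℕ}

lemma IsProperEdgeColoring.eq_of_mem {G : SimpleGraph V} (hc : IsProperEdgeColoring G c)
    {e₁ e₂ : Sym2 V} (h₁ : e₁ ∈ G.edgeSet) (h₂ : e₂ ∈ G.edgeSet) {v : V} (hv₁ : v ∈ e₁)
    (hv₂ : v ∈ e₂) (h : c e₁ = c e₂) : e₁ = e₂ :=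
  by_contra fun hne => hc e₁ h₁ e₂ h₂ hne ⟨v, hv₁, hv₂⟩ h

variable [Fintype V] [DecidableEq V]

open Classical in
/-- The `4`-uniform hypergraph of the vertex sets of pairs of disjoint edges of the same color. Its
independent sets are the vertex sets of rainbow cliques. -/
noncomputable def monoQuads (c : Sym2 V → ℕ) : Finset (Finset V) :=
  {s ∈ powersetCard 4 univ | ∃ e₁ e₂ : Sym2 V, s = e₁.toFinset ∪ e₂.toFinset ∧ c e₁ = c e₂}

lemma mem_monoQuads {s : Finset V} : s ∈ monoQuads c ↔
    #s = 4 ∧ ∃ e₁ e₂ : Sym2 V, s = e₁.toFinset ∪ e₂.toFinset ∧ c e₁ = c e₂ := by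
  rw [monoQuads, mem_filter, mem_powersetCard_univ]

lemma sized_monoQuads : (monoQuads c : Set (Finset V)).Sized 4 :=
  fun _ hs => (mem_monoQuads.1 hs).1

lemma exists_mate_of_mem_monoQuads {s t : Finset V} (ht : #t = 3) (hs : s ∈ monoQuads c)
    (hts : t ⊆ s) :
    ∃ a ∈ t, ∃ w, s = insert w t ∧ w ≠ a ∧
      ∃ e : Sym2 V, e.toFinset = t.erase a ∧ c s(w, a) = c e := by
  obtain ⟨hs₄, e₁, e₂, rfl, hcol⟩ := mem_monoQuads.1 hs
  obtain ⟨w, hw⟩ := card_eq_one.1 (show #((e₁.toFinset ∪ e₂.toFinset) \ t) = 1 by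
    rw [card_sdiff_of_subset hts, hs₄, ht])
  have hs_eq : e₁.toFinset ∪ e₂.toFinset = insert w t := by
    rw [insert_eq, ← hw, sdiff_union_of_subset hts]
  have hwt : w ∉ t := (mem_sdiff.1 (hw ▸ mem_singleton_self w)).2
  clear hw hs hts
  wlog hw₁ : w ∈ e₁ generalizing e₁ e₂
  · have hw₂ : w ∈ e₁.toFinset ∪ e₂.toFinset := hs_eq ▸ mem_insert_self w t
    simp only [Finset.mem_union, Sym2.mem_toFinset, hw₁, false_or] at hw₂
    rw [union_comm] at hs₄ hs_eq ⊢
    exact this e₂ e₁ hcol.symm hs₄ hs_eq hw₂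
  obtain ⟨a, rfl⟩ := Sym2.mem_iff_exists.1 hw₁
  have hcards := card_union_add_card_inter s(w, a).toFinset e₂.toFinset
  have hle₁ : #s(w, a).toFinset ≤ 2 := by rw [Sym2.card_toFinset]; split_ifs <;> simp
  have hle₂ : #e₂.toFinset ≤ 2 := by rw [Sym2.card_toFinset]; split_ifs <;> simp
  have hdisj : Disjoint s(w, a).toFinset e₂.toFinset :=
    disjoint_iff_inter_eq_empty.2 (card_eq_zero.1 (by omega))
  have hwa : w ≠ a := by
    rintro rfl
    rw [Sym2.card_toFinset_of_isDiag s(w, w) rfl] at hcards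
    omega
  rw [Sym2.toFinset_mk_eq] at hs_eq hdisj
  have ha : a ∈ t := by
    have : a ∈ insert w t := hs_eq ▸ mem_union_left _ (by simp)
    exact (mem_insert.1 this).resolve_left hwa.symm
  refine ⟨a, ha, w, by rw [Sym2.toFinset_mk_eq, hs_eq], hwa, e₂, ?_, hcol⟩
  rw [← union_sdiff_cancel_left hdisj, hs_eq, insert_sdiff_insert, sdiff_insert,
    sdiff_singleton_eq_erase, erase_eq_of_notMem fun h => hwt (mem_of_mem_erase h)]

lemma card_filter_subset_monoQuads_le (hc : IsProperEdgeColoring ⊤ c) {t : Finset V}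
    (ht : #t = 3) : #{s ∈ monoQuads c | t ⊆ s} ≤ 3 := by
  classical
  have hcover : {s ∈ monoQuads c | t ⊆ s} ⊆ t.biUnion fun a => {s ∈ monoQuads c |
      ∃ w, s = insert w t ∧ w ≠ a ∧ ∃ e : Sym2 V, e.toFinset = t.erase a ∧ c s(w, a) = c e} := by
    intro s hs
    obtain ⟨hs, hts⟩ := mem_filter.1 hs
    obtain ⟨a, ha, h⟩ := exists_mate_of_mem_monoQuads ht hs hts
    exact mem_biUnion.2 ⟨a, ha, mem_filter.2 ⟨hs, h⟩⟩
  refine (card_le_card hcover).trans ((card_biUnion_le_card_mul _ _ 1 fun a _ => ?_).trans_eq ?_)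
  · refine card_le_one.2 fun s hs s' hs' => ?_
    obtain ⟨w, rfl, hwa, e, he, hcol⟩ := (mem_filter.1 hs).2
    obtain ⟨w', rfl, hwa', e', he', hcol'⟩ := (mem_filter.1 hs').2
    have hee' : e = e' := Sym2.ext fun x => by
      rw [← Sym2.mem_toFinset, ← Sym2.mem_toFinset, he, he']
    subst hee'
    rw [Sym2.congr_left.1 <| hc.eq_of_mem (top_adj w a |>.2 hwa) (top_adj w' a |>.2 hwa')
      (Sym2.mem_mk_right w a) (Sym2.mem_mk_right w' a) (hcol.trans hcol'.symm)]
  · rw [ht, mul_one]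

lemma eq_of_isIndep_monoQuads (hc : IsProperEdgeColoring ⊤ c) {W : Finset V}
    (hW : IsIndep (monoQuads c) W) {e₁ e₂ : Sym2 V} (h₁ : ¬ e₁.IsDiag) (h₂ : ¬ e₂.IsDiag)
    (hW₁ : e₁.toFinset ⊆ W) (hW₂ : e₂.toFinset ⊆ W) (h : c e₁ = c e₂) : e₁ = e₂ := by
  by_cases hdisj : Disjoint e₁.toFinset e₂.toFinset
  · refine (hW _ (mem_monoQuads.2 ⟨?_, e₁, e₂, rfl, h⟩) (union_subset hW₁ hW₂)).elim
    rw [card_union_of_disjoint hdisj, Sym2.card_toFinset_of_not_isDiag e₁ h₁,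
      Sym2.card_toFinset_of_not_isDiag e₂ h₂]
  · obtain ⟨v, hv₁, hv₂⟩ := not_disjoint_iff.1 hdisj
    exact hc.eq_of_mem (by simpa using h₁) (by simpa using h₂) (Sym2.mem_toFinset.1 hv₁)
      (Sym2.mem_toFinset.1 hv₂) h

lemma hasRainbowCopy_of_isIndep_monoQuads (hc : IsProperEdgeColoring ⊤ c) {W : Finset V}
    (hW : IsIndep (monoQuads c) W) {n : ℕ} (hn : n ≤ #W) :
    HasRainbowCopy (⊤ : SimpleGraph V) (⊤ : SimpleGraph (Fin n)) c := by
  obtain ⟨g⟩ : Nonempty (Fin n ↪ W) :=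
    Function.Embedding.nonempty_of_card_le (by rwa [Fintype.card_fin, Fintype.card_coe])
  let f : Fin n ↪ V := g.trans (Function.Embedding.subtype _)
  have hf (e : Sym2 (Fin n)) : (Sym2.map f e).toFinset ⊆ W := fun x hx => by
    obtain ⟨i, -, rfl⟩ := Sym2.mem_map.1 (Sym2.mem_toFinset.1 hx)
    exact (g i).2
  have hdiag (e : Sym2 (Fin n)) (he : e ∈ (⊤ : SimpleGraph (Fin n)).edgeSet) :
      ¬ (Sym2.map f e).IsDiag := by
    rw [Sym2.isDiag_map f.injective]
    simpa using he
  refine ⟨⟨f, fun h => f.injective.ne h⟩, f.injective, fun e₁ h₁ e₂ h₂ h => ?_⟩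
  exact Sym2.map.injective f.injective
    (eq_of_isIndep_monoQuads hc hW (hdiag e₁ h₁) (hdiag e₂ h₂) (hf e₁) (hf e₂) h)

end MonochromaticQuadruples

section UpperBound

lemma arrowsTo_top_of_le {m n N : ℕ} {μ : ℝ} (hm : 2 * m ≤ N) (hm₂ : 2880 * m ^ 5 ≤ N ^ 2)
    (hm₃ : 216 * m ^ 8 ≤ N ^ 3) (hμ : 0 ≤ μ) (hμm : Real.exp μ * (4 * n) ≤ m)
    (hμN : 24 * n ^ 3 < μ * N) :
    ArrowsTo (⊤ : SimpleGraph (Fin N)) (⊤ : SimpleGraph (Fin n)) := by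
  intro c hc
  obtain ⟨W, hW, hn⟩ := exists_isIndep_card_gt (n := n) (D := 3) (m := m) (μ := μ)
    sized_monoQuads (fun t ht => card_filter_subset_monoQuads_le hc ht)
    (by rwa [Fintype.card_fin]) (by rw [Fintype.card_fin]; omega)
    (by rw [Fintype.card_fin]; omega) hμ hμm
    (by rw [Fintype.card_fin]; push_cast; linarith)
  exact hasRainbowCopy_of_isIndep_monoQuads hc hW hn.le

lemma two_mul_le_and_pow_five_le_and_pow_eight_le {t : ℝ} {m N : ℕ} (ht : 100 ≤ t)
    (hm : m ≤ 5 * t ^ 33) (hN : 10 * t ^ 95 ≤ N) :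
    2 * m ≤ N ∧ 2880 * m ^ 5 ≤ N ^ 2 ∧ 216 * m ^ 8 ≤ N ^ 3 := by
  have ht₁ : 1 ≤ t := by linarith
  have hN' : t ^ 95 ≤ N := by linarith [one_le_pow₀ ht₁ (n := 95)]
  refine ⟨?_, ?_, ?_⟩
  · suffices (2 : ℝ) * m ≤ N by exact_mod_cast this
    calc (2 : ℝ) * m ≤ 2 * (5 * t ^ 33) := by gcongr
      _ = 10 * t ^ 33 := by ring
      _ ≤ 10 * t ^ 95 := by gcongr; norm_num
      _ ≤ N := hN
  · suffices (2880 : ℝ) * m ^ 5 ≤ N ^ 2 by exact_mod_cast this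
    calc (2880 : ℝ) * m ^ 5 ≤ 2880 * (5 * t ^ 33) ^ 5 := by gcongr
      _ = 9000000 * t ^ 165 := by ring
      _ ≤ 100 ^ 25 * t ^ 165 := by gcongr; norm_num
      _ ≤ t ^ 25 * t ^ 165 := by gcongr
      _ = (t ^ 95) ^ 2 := by ring
      _ ≤ N ^ 2 := by gcongr
  · suffices (216 : ℝ) * m ^ 8 ≤ N ^ 3 by exact_mod_cast this
    calc (216 : ℝ) * m ^ 8 ≤ 216 * (5 * t ^ 33) ^ 8 := by gcongr
      _ = 84375000 * t ^ 264 := by ring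
      _ ≤ 100 ^ 21 * t ^ 264 := by gcongr; norm_num
      _ ≤ t ^ 21 * t ^ 264 := by gcongr
      _ = (t ^ 95) ^ 3 := by ring
      _ ≤ N ^ 3 := by gcongr

lemma exists_nat_params {t L : ℝ} (ht : 100 ≤ t) (hL₀ : 0 < L) (hL : L ≤ t) :
    ∃ m N : ℕ, 2 * m ≤ N ∧ 2880 * m ^ 5 ≤ N ^ 2 ∧ 216 * m ^ 8 ≤ N ^ 3 ∧ t * (4 * t ^ 32) ≤ m ∧
      24 * (t ^ 32) ^ 3 < L / 32 * N ∧ (N : ℝ) ≤ 769 * (t ^ 32) ^ 3 / L := by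
  have ht₁ : 1 ≤ t := by linarith
  set m := ⌈4 * t ^ 33⌉₊
  set N := ⌊768 * (t ^ 32) ^ 3 / L⌋₊ + 1 with hN
  have hm : (m : ℝ) ≤ 5 * t ^ 33 := by
    have := Nat.ceil_lt_add_one (by positivity : 0 ≤ 4 * t ^ 33)
    linarith [one_le_pow₀ ht₁ (n := 33)]
  have hN_gt : 768 * (t ^ 32) ^ 3 / L < N := by
    rw [hN, Nat.cast_add_one]
    exact Nat.lt_floor_add_one _
  have hN_ge : 10 * t ^ 95 ≤ N := by
    refine hN_gt.le.trans' ((le_div_iff₀ hL₀).2 ?_)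
    calc 10 * t ^ 95 * L ≤ 768 * t ^ 95 * t := by gcongr; norm_num
      _ = 768 * (t ^ 32) ^ 3 := by ring
  obtain ⟨h, h₂, h₃⟩ := two_mul_le_and_pow_five_le_and_pow_eight_le ht hm hN_ge
  refine ⟨m, N, h, h₂, h₃, ?_, ?_, ?_⟩
  · exact (Nat.le_ceil _).trans_eq' (by ring)
  · rw [div_lt_iff₀ hL₀] at hN_gt
    linarith
  · have hN_le := Nat.floor_le (by positivity : 0 ≤ 768 * (t ^ 32) ^ 3 / L)
    have hone : 1 ≤ (t ^ 32) ^ 3 / L := by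
      rw [le_div_iff₀ hL₀, one_mul, ← pow_mul]
      exact hL.trans (le_self_pow₀ ht₁ (by norm_num))
    rw [hN, Nat.cast_add_one]
    calc (⌊768 * (t ^ 32) ^ 3 / L⌋₊ : ℝ) + 1
        ≤ 768 * (t ^ 32) ^ 3 / L + (t ^ 32) ^ 3 / L := add_le_add hN_le hone
      _ = 769 * (t ^ 32) ^ 3 / L := by ring

lemma eventually_log_le_rpow {ε : ℝ} (hε : 0 < ε) :
    ∀ᶠ n : ℕ in Filter.atTop, Real.log n ≤ (n : ℝ) ^ ε := by
  have hbound := (isLittleO_log_rpow_atTop hε).bound one_pos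
  filter_upwards [tendsto_natCast_atTop_atTop.eventually hbound] with n hn
  rw [one_mul, Real.norm_of_nonneg (by positivity : (0 : ℝ) ≤ (n : ℝ) ^ ε)] at hn
  exact (Real.le_norm_self _).trans hn

lemma eventually_exists_arrowsTo_top :
    ∀ᶠ n : ℕ in Filter.atTop, ∃ N : ℕ,
      ArrowsTo (⊤ : SimpleGraph (Fin N)) (⊤ : SimpleGraph (Fin n)) ∧
        (N : ℝ) ≤ 769 * n ^ 3 / Real.log n := by
  have htendsto : Filter.Tendsto (fun n : ℕ => (n : ℝ) ^ (1 / 32 : ℝ)) Filter.atTop Filter.atTop :=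
    (tendsto_rpow_atTop (by norm_num)).comp tendsto_natCast_atTop_atTop
  filter_upwards [eventually_log_le_rpow (by norm_num : (0 : ℝ) < 1 / 32),
    htendsto.eventually_ge_atTop 100, Filter.eventually_ge_atTop 2] with n hlog ht hn
  have hn₀ : (0 : ℝ) < n := by positivity
  have hpow : ((n : ℝ) ^ (1 / 32 : ℝ)) ^ 32 = n := by
    rw [← Real.rpow_natCast, ← Real.rpow_mul hn₀.le]
    norm_num
  have hexp : Real.exp (Real.log n / 32) = (n : ℝ) ^ (1 / 32 : ℝ) := by
    rw [Real.rpow_def_of_pos hn₀, mul_one_div]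
  have hlog₀ : 0 < Real.log n := Real.log_pos (by exact_mod_cast hn)
  obtain ⟨m, N, hm, hm₂, hm₃, hμm, hμN, hN⟩ := exists_nat_params ht hlog₀ hlog
  rw [hpow] at hμm hμN hN
  exact ⟨N, arrowsTo_top_of_le hm hm₂ hm₃ (by positivity) (hexp ▸ hμm) hμN, hN⟩

lemma ArrowsTo.top_mono {V : Type*} {G : SimpleGraph V} {n n' : ℕ} (h : n ≤ n')
    (hG : ArrowsTo G (⊤ : SimpleGraph (Fin n'))) : ArrowsTo G (⊤ : SimpleGraph (Fin n)) := by
  intro c hc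
  obtain ⟨f, hf, hrainbow⟩ := hG c hc
  have hι := Fin.castLE_injective h
  let ι : (⊤ : SimpleGraph (Fin n)) →g (⊤ : SimpleGraph (Fin n')) := ⟨Fin.castLE h, hι.ne⟩
  refine ⟨f.comp ι, hf.comp hι, fun e₁ h₁ e₂ h₂ he => Sym2.map.injective hι ?_⟩
  refine hrainbow _ (ι.map_mem_edgeSet h₁) _ (ι.map_mem_edgeSet h₂) ?_
  rwa [Sym2.map_map, Sym2.map_map]

lemma ARs_top_le_sq {n N : ℕ} (h : ArrowsTo (⊤ : SimpleGraph (Fin N)) (⊤ : SimpleGraph (Fin n))) :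
    ARs (⊤ : SimpleGraph (Fin n)) ≤ N ^ 2 := by
  refine (show ARs _ ≤ _ from Nat.sInf_le ⟨N, ⊤, h, rfl⟩).trans ?_
  rw [← SimpleGraph.coe_edgeFinset, Set.ncard_coe_finset,
    SimpleGraph.card_edgeFinset_top_eq_card_choose_two, Fintype.card_fin]
  exact Nat.choose_le_pow N 2

theorem exists_ARs_top_le : ∃ c₂ : ℝ, 0 < c₂ ∧ ∀ n : ℕ, 2 ≤ n →
    (ARs (⊤ : SimpleGraph (Fin n)) : ℝ) ≤ c₂ * (n : ℝ) ^ 6 / (Real.log n) ^ 2 := by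
  obtain ⟨n₀, h⟩ := Filter.eventually_atTop.1 eventually_exists_arrowsTo_top
  obtain ⟨N₀, hN₀, -⟩ := h n₀ le_rfl
  refine ⟨769 ^ 2 + N₀ ^ 2, by positivity, fun n hn => ?_⟩
  have hlog₀ : 0 < Real.log n := Real.log_pos (by exact_mod_cast hn)
  rcases le_or_gt n₀ n with hle | hlt
  · obtain ⟨N, hN, hN_le⟩ := h n hle
    calc (ARs (⊤ : SimpleGraph (Fin n)) : ℝ) ≤ N ^ 2 := by exact_mod_cast ARs_top_le_sq hN
      _ ≤ (769 * n ^ 3 / Real.log n) ^ 2 := by gcongr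
      _ = 769 ^ 2 * n ^ 6 / Real.log n ^ 2 := by ring
      _ ≤ (769 ^ 2 + N₀ ^ 2) * n ^ 6 / Real.log n ^ 2 := by
          gcongr
          exact le_add_of_nonneg_right (by positivity)
  · have hone : 1 ≤ (n : ℝ) ^ 6 / Real.log n ^ 2 := by
      rw [le_div_iff₀ (by positivity), one_mul]
      calc Real.log n ^ 2 ≤ (n : ℝ) ^ 2 := by gcongr; exact Real.log_le_self n.cast_nonneg
        _ ≤ (n : ℝ) ^ 6 := by gcongr <;> norm_num; omega
    calc (ARs (⊤ : SimpleGraph (Fin n)) : ℝ) ≤ N₀ ^ 2 := by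
          exact_mod_cast ARs_top_le_sq (hN₀.top_mono hlt.le)
      _ ≤ (769 ^ 2 + N₀ ^ 2) * 1 := by linarith
      _ ≤ (769 ^ 2 + N₀ ^ 2) * (n ^ 6 / Real.log n ^ 2) := by gcongr
      _ = (769 ^ 2 + N₀ ^ 2) * n ^ 6 / Real.log n ^ 2 := by ring

end UpperBound

section ListColoring

variable {E Γ : Type*} {R : SimpleGraph E} {s : Finset E}

/-- A coloring is proper on `s` if conflicting elements of `s` receive different colors. For the
complete conflict graph `⊤` this says that all elements of `s` receive different colors. -/
def IsProperOn (R : SimpleGraph E) (s : Finset E) (χ : E → Γ) : Prop :=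
  ∀ e ∈ s, ∀ e' ∈ s, R.Adj e e' → χ e ≠ χ e'

instance [DecidableEq Γ] [DecidableRel R.Adj] (χ : E → Γ) : Decidable (IsProperOn R s χ) :=
  inferInstanceAs (Decidable (∀ e ∈ s, ∀ e' ∈ s, R.Adj e e' → χ e ≠ χ e'))

lemma isProperOn_top_iff {χ : E → Γ} : IsProperOn ⊤ s χ ↔ Set.InjOn χ s :=
  ⟨fun h _ ha _ hb hab => by_contra fun hne => h _ ha _ hb hne hab,
    fun h _ ha _ hb hne hab => hne (h ha hb hab)⟩

lemma IsProperOn.mono {R' : SimpleGraph E} {t : Finset E} {χ : E → Γ} (hR : R ≤ R')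
    (hst : s ⊆ t) (h : IsProperOn R' t χ) : IsProperOn R s χ :=
  fun e he e' he' hadj => h e (hst he) e' (hst he') (hR hadj)

lemma IsProperOn.insert_piecewise [DecidableEq E] {e : E} {χ ψ : E → Γ} (he : e ∉ s)
    (hχ : IsProperOn R s χ) (hψ : ∀ e' ∈ s, R.Adj e e' → ψ e ≠ χ e') :
    IsProperOn R (insert e s) (({e} : Finset E).piecewise ψ χ) := by
  have hs {a : E} (ha : a ∈ s) : ({e} : Finset E).piecewise ψ χ a = χ a :=
    piecewise_eq_of_notMem _ _ _ fun h => he (mem_singleton.1 h ▸ ha)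
  have he' : ({e} : Finset E).piecewise ψ χ e = ψ e :=
    piecewise_eq_of_mem _ _ _ (mem_singleton_self e)
  intro a ha b hb hab
  rcases mem_insert.1 ha with rfl | has <;> rcases mem_insert.1 hb with rfl | hbs
  · exact (R.irrefl hab).elim
  · rw [he', hs hbs]
    exact hψ b hbs hab
  · rw [he', hs has]
    exact (hψ a has hab.symm).symm
  · rw [hs has, hs hbs]
    exact hχ a has b hbs hab

variable [Fintype E] [DecidableEq E] {A : E → Finset Γ}

lemma card_mul_card_filter_piFinset_eq_sum (A : E → Finset Γ) (s : Finset E) (p : (E → Γ) → Prop)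
    [DecidablePred p] :
    #(Fintype.piFinset A) * #{χ ∈ Fintype.piFinset A | p χ} =
      ∑ χ ∈ Fintype.piFinset A, #{ψ ∈ Fintype.piFinset A | p (s.piecewise ψ χ)} := by
  have hmem {χ ψ : E → Γ} (hχ : χ ∈ Fintype.piFinset A) (hψ : ψ ∈ Fintype.piFinset A) :
      s.piecewise ψ χ ∈ Fintype.piFinset A :=
    Fintype.mem_piFinset.2 fun e => s.piecewise_cases ψ χ (· ∈ A e)
      (Fintype.mem_piFinset.1 hψ e) (Fintype.mem_piFinset.1 hχ e)
  have hswap (χ ψ : E → Γ) : s.piecewise (s.piecewise χ ψ) (s.piecewise ψ χ) = χ := by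
    rw [piecewise_idem_left, piecewise_idem_right, piecewise_same]
  have hinv (x : (E → Γ) × (E → Γ)) :
      (s.piecewise (s.piecewise x.1 x.2) (s.piecewise x.2 x.1),
        s.piecewise (s.piecewise x.2 x.1) (s.piecewise x.1 x.2)) = x :=
    Prod.ext (hswap _ _) (hswap _ _)
  have hmaps (x) (hx : x ∈ Fintype.piFinset A ×ˢ Fintype.piFinset A) :
      (s.piecewise x.1 x.2, s.piecewise x.2 x.1) ∈ Fintype.piFinset A ×ˢ Fintype.piFinset A :=
    have ⟨h₁, h₂⟩ := mem_product.1 hx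
    mem_product.2 ⟨hmem h₂ h₁, hmem h₁ h₂⟩
  simp only [card_filter]
  rw [← smul_eq_mul, ← sum_const, ← sum_product', ← sum_product']
  exact sum_nbij' _ _ hmaps hmaps (fun x _ => hinv x) (fun x _ => hinv x)
    fun x _ => by rw [hswap]

lemma sum_piFinset_prod_eq (A : E → Finset Γ) (s : Finset E) (w : E → Γ → ℝ) :
    ∑ χ ∈ Fintype.piFinset A, ∏ e ∈ s, w e (χ e) =
      #(Fintype.piFinset A) * ∏ e ∈ s, (∑ γ ∈ A e, w e γ) / #(A e) := by
  have hfactor (e : E) : ∑ γ ∈ A e, (if e ∈ s then w e γ else 1) =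
      #(A e) * if e ∈ s then (∑ γ ∈ A e, w e γ) / #(A e) else 1 := by
    rcases (A e).eq_empty_or_nonempty with hA | hA
    · simp only [hA, sum_empty, card_empty, Nat.cast_zero, zero_mul]
    · split_ifs
      · rw [mul_div_cancel₀ _ (by exact_mod_cast hA.card_ne_zero)]
      · rw [sum_const, nsmul_eq_mul]
  calc ∑ χ ∈ Fintype.piFinset A, ∏ e ∈ s, w e (χ e)
      = ∑ χ ∈ Fintype.piFinset A, ∏ e, if e ∈ s then w e (χ e) else 1 := by
        simp only [prod_ite_mem, univ_inter]
    _ = ∏ e, (#(A e) * if e ∈ s then (∑ γ ∈ A e, w e γ) / #(A e) else 1 : ℝ) := by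
        rw [← prod_univ_sum A fun e γ => if e ∈ s then w e γ else 1]
        exact prod_congr rfl fun e _ => hfactor e
    _ = #(Fintype.piFinset A) * ∏ e ∈ s, (∑ γ ∈ A e, w e γ) / #(A e) := by
        rw [prod_mul_distrib, Fintype.card_piFinset, Nat.cast_prod, prod_ite_mem, univ_inter]

variable [DecidableEq Γ]

lemma card_piFinset_filter_forall_notMem (A : E → Finset Γ) (s : Finset E) (T : Finset Γ) :
    (#{χ ∈ Fintype.piFinset A | ∀ e ∈ s, χ e ∉ T} : ℝ) =
      #(Fintype.piFinset A) * ∏ e ∈ s, (#(A e \ T) / #(A e) : ℝ) := by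
  have h := sum_piFinset_prod_eq A s fun _ γ => if γ ∉ T then 1 else 0
  simp only [← natCast_card_filter, filter_notMem_eq_sdiff, prod_ite_zero, prod_const_one] at h
  exact h

section Proper

variable [DecidableRel R.Adj]

lemma card_isProperOn_mul_le_card_isProperOn_insert (hA : ∀ e, (A e).Nonempty) {e : E}
    (he : e ∉ s) {d : ℕ} (hd : #{e' ∈ s | R.Adj e e'} ≤ d) :
    #{χ ∈ Fintype.piFinset A | IsProperOn R s χ} * (1 - d / #(A e) : ℝ) ≤
      #{χ ∈ Fintype.piFinset A | IsProperOn R (insert e s) χ} := by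
  have hpos : (0 : ℝ) < #(Fintype.piFinset A) := by
    exact_mod_cast (Fintype.piFinset_nonempty.2 hA).card_pos
  have hAe : (0 : ℝ) < #(A e) := by exact_mod_cast (hA e).card_pos
  have hstep {χ : E → Γ} (hχ : IsProperOn R s χ) :
      #(Fintype.piFinset A) * (1 - d / #(A e) : ℝ) ≤ #{ψ ∈ Fintype.piFinset A |
        IsProperOn R (insert e s) (({e} : Finset E).piecewise ψ χ)} := by
    set T : Finset Γ := {e' ∈ s | R.Adj e e'}.image χ
    have hT : (#(A e) : ℝ) - d ≤ #(A e \ T) := by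
      have h := le_card_sdiff T (A e)
      have hTd : #T ≤ d := card_image_le.trans hd
      rw [sub_le_iff_le_add]
      exact_mod_cast (by omega : #(A e) ≤ #(A e \ T) + d)
    calc #(Fintype.piFinset A) * (1 - d / #(A e) : ℝ)
        ≤ #(Fintype.piFinset A) * (#(A e \ T) / #(A e)) := by
          gcongr
          rw [← div_self hAe.ne', ← sub_div]
          gcongr
      _ = #{ψ ∈ Fintype.piFinset A | ∀ e' ∈ ({e} : Finset E), ψ e' ∉ T} := by
          rw [card_piFinset_filter_forall_notMem, prod_singleton]
      _ ≤ _ := by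
          gcongr with ψ
          intro hψ
          refine hχ.insert_piecewise he fun e' he' hadj h => ?_
          exact hψ e (mem_singleton_self e) (h ▸ mem_image_of_mem χ (mem_filter.2 ⟨he', hadj⟩))
  refine le_of_mul_le_mul_left ?_ hpos
  rw [← Nat.cast_mul, card_mul_card_filter_piFinset_eq_sum A {e}, Nat.cast_sum, mul_left_comm,
    ← nsmul_eq_mul]
  refine (card_nsmul_le_sum _ _ _ fun χ hχ => hstep (mem_filter.1 hχ).2).trans ?_
  exact sum_le_sum_of_subset_of_nonneg (filter_subset _ _) fun _ _ _ => Nat.cast_nonneg _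

lemma card_mul_exp_pow_le_card_isProperOn (hA : ∀ e, (A e).Nonempty) {S : Finset E} {d : ℕ} {r : ℝ}
    (hr : 0 < r) (hd : ∀ e ∈ S, #{e' ∈ S | R.Adj e e'} ≤ d) (hAr : ∀ e ∈ S, r ≤ #(A e))
    (hdr : 2 * d ≤ r) :
    #(Fintype.piFinset A) * Real.exp (-(2 * d / r)) ^ #S ≤
      #{χ ∈ Fintype.piFinset A | IsProperOn R S χ} := by
  suffices ∀ s ⊆ S, #(Fintype.piFinset A) * Real.exp (-(2 * d / r)) ^ #s ≤
      #{χ ∈ Fintype.piFinset A | IsProperOn R s χ} from this S subset_rfl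
  intro s
  induction s using Finset.induction_on with
  | empty =>
    intro _
    rw [card_empty, pow_zero, mul_one, filter_true_of_mem fun χ _ e he => (notMem_empty e he).elim]
  | insert e s he ih =>
    intro hs
    obtain ⟨heS, hsS⟩ := insert_subset_iff.1 hs
    have hexp : Real.exp (-(2 * d / r)) ≤ 1 - d / #(A e) :=
      calc Real.exp (-(2 * d / r)) ≤ 1 - 2 * d / r / 2 :=
            exp_neg_le_one_sub_half (by positivity) ((div_le_one hr).2 hdr)
        _ = 1 - d / r := by ring
        _ ≤ 1 - d / #(A e) := by gcongr; exact hAr e heS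
    rw [card_insert_of_notMem he, pow_succ, ← mul_assoc]
    calc #(Fintype.piFinset A) * Real.exp (-(2 * d / r)) ^ #s * Real.exp (-(2 * d / r))
        ≤ #{χ ∈ Fintype.piFinset A | IsProperOn R s χ} * (1 - d / #(A e)) := by
          gcongr
          exact ih hsS
      _ ≤ #{χ ∈ Fintype.piFinset A | IsProperOn R (insert e s) χ} :=
          card_isProperOn_mul_le_card_isProperOn_insert hA he
            ((card_le_card (filter_subset_filter _ hsS)).trans (hd e heS))

end Proper

end ListColoring

section RainbowLists

variable {E Γ : Type*} [Fintype Γ] [DecidableEq Γ]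

lemma card_sdiff_div_card_le_exp (A T : Finset Γ) :
    (#(A \ T) / #A : ℝ) ≤ Real.exp (-(#(A ∩ T) / Fintype.card Γ)) := by
  rcases A.eq_empty_or_nonempty with rfl | hA
  · simp only [card_empty, Nat.cast_zero, div_zero, Real.exp_nonneg]
  have hApos : (0 : ℝ) < #A := by exact_mod_cast hA.card_pos
  have hsplit : (#(A \ T) : ℝ) + #(A ∩ T) = #A := by exact_mod_cast card_sdiff_add_card_inter A T
  calc (#(A \ T) / #A : ℝ) = 1 - #(A ∩ T) / #A := by
        rw [eq_sub_iff_add_eq, ← add_div, hsplit, div_self hApos.ne']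
    _ ≤ Real.exp (-(#(A ∩ T) / #A)) := Real.one_sub_le_exp_neg _
    _ ≤ Real.exp (-(#(A ∩ T) / Fintype.card Γ)) := by
        gcongr
        exact card_le_univ A

lemma prod_card_sdiff_image_div_le_prod_exp (A : E → Finset Γ) {S₁ : Finset E}
    (S₂ : Finset E) {χ : E → Γ} (hχ : Set.InjOn χ S₁) :
    ∏ b ∈ S₂, (#(A b \ S₁.image χ) / #(A b) : ℝ) ≤
      ∏ a ∈ S₁, Real.exp (-(#{b ∈ S₂ | χ a ∈ A b} / Fintype.card Γ)) := by
  have hcard (b : E) : #(A b ∩ S₁.image χ) = #{a ∈ S₁ | χ a ∈ A b} := by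
    rw [inter_comm, ← filter_mem_eq_inter, filter_image,
      card_image_of_injOn (hχ.mono (coe_subset.2 (filter_subset _ _)))]
  calc ∏ b ∈ S₂, (#(A b \ S₁.image χ) / #(A b) : ℝ)
      ≤ ∏ b ∈ S₂, Real.exp (-(#{a ∈ S₁ | χ a ∈ A b} / Fintype.card Γ)) := by
        refine prod_le_prod (fun b _ => by positivity) fun b _ => ?_
        rw [← hcard]
        exact card_sdiff_div_card_le_exp _ _
    _ = ∏ a ∈ S₁, Real.exp (-(#{b ∈ S₂ | χ a ∈ A b} / Fintype.card Γ)) := by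
        simp only [← Real.exp_sum, sum_neg_distrib, ← sum_div]
        congr 3
        exact_mod_cast sum_card_bipartiteAbove_eq_sum_card_bipartiteBelow fun b a => χ a ∈ A b

lemma mul_div_two_le_sum_card_filter_mem {A : Finset Γ} {B : E → Finset Γ} {S : Finset E}
    (hA : 3 / 4 * (Fintype.card Γ : ℝ) ≤ #A)
    (hB : ∀ b ∈ S, 3 / 4 * (Fintype.card Γ : ℝ) ≤ #(B b)) :
    #S * (Fintype.card Γ / 2 : ℝ) ≤ ∑ γ ∈ A, (#{b ∈ S | γ ∈ B b} : ℝ) := by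
  have hcomm : ∑ γ ∈ A, #{b ∈ S | γ ∈ B b} = ∑ b ∈ S, #(A ∩ B b) := by
    simp only [← filter_mem_eq_inter]
    exact sum_card_bipartiteAbove_eq_sum_card_bipartiteBelow fun γ b => γ ∈ B b
  rw [← Nat.cast_sum, hcomm, Nat.cast_sum, ← nsmul_eq_mul]
  refine card_nsmul_le_sum _ _ _ fun b hb => ?_
  have hunion : (#(A ∪ B b) : ℝ) + #(A ∩ B b) = #A + #(B b) := by
    exact_mod_cast card_union_add_card_inter A (B b)
  have hle : (#(A ∪ B b) : ℝ) ≤ Fintype.card Γ := by exact_mod_cast card_le_univ _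
  linarith [hB b hb]

variable [Nonempty Γ]

lemma sum_exp_neg_card_filter_mem_div_le {A : Finset Γ} {B : E → Finset Γ} {S : Finset E}
    (hA : 3 / 4 * (Fintype.card Γ : ℝ) ≤ #A)
    (hB : ∀ b ∈ S, 3 / 4 * (Fintype.card Γ : ℝ) ≤ #(B b)) (hS : #S ≤ Fintype.card Γ) :
    (∑ γ ∈ A, Real.exp (-(#{b ∈ S | γ ∈ B b} / Fintype.card Γ))) / #A ≤
      Real.exp (-(#S / (4 * Fintype.card Γ))) := by
  have hsum := mul_div_two_le_sum_card_filter_mem hA hB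
  have hAq : (#A : ℝ) ≤ Fintype.card Γ := by exact_mod_cast card_le_univ A
  have hq : (0 : ℝ) < Fintype.card Γ := by exact_mod_cast Fintype.card_pos
  have hSq : (#S : ℝ) ≤ Fintype.card Γ := by exact_mod_cast hS
  set q : ℝ := (Fintype.card Γ : ℝ)
  have hle (γ : Γ) : (#{b ∈ S | γ ∈ B b} : ℝ) ≤ q :=
    le_trans (by exact_mod_cast card_filter_le _ _) hSq
  rw [div_le_iff₀ (by linarith)]
  calc ∑ γ ∈ A, Real.exp (-(#{b ∈ S | γ ∈ B b} / q))
      ≤ ∑ γ ∈ A, (1 - (#{b ∈ S | γ ∈ B b} / q : ℝ) / 2) := sum_le_sum fun γ _ =>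
        exp_neg_le_one_sub_half (by positivity) ((div_le_one hq).2 (hle γ))
    _ = #A - (∑ γ ∈ A, (#{b ∈ S | γ ∈ B b} : ℝ)) / q / 2 := by
        rw [sum_sub_distrib, ← sum_div, ← sum_div, sum_const, nsmul_eq_mul, mul_one]
    _ ≤ #A - #S * (q / 2) / q / 2 := by gcongr
    _ = #A - q * (#S / (4 * q)) := by field_simp; ring
    _ ≤ #A - #A * (#S / (4 * q)) := by gcongr
    _ = (1 - #S / (4 * q)) * #A := by ring
    _ ≤ Real.exp (-(#S / (4 * q))) * #A := by gcongr; exact Real.one_sub_le_exp_neg _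

end RainbowLists

section ConflictColoring

variable {E Γ : Type*} [Fintype E] [DecidableEq E] [Fintype Γ] [DecidableEq Γ] [Nonempty Γ]
  {A : E → Finset Γ}

lemma card_isProperOn_top_union_le {S₁ S₂ : Finset E} (hdisj : Disjoint S₁ S₂)
    (hA : ∀ e ∈ S₁ ∪ S₂, 3 / 4 * (Fintype.card Γ : ℝ) ≤ #(A e)) (hS₂ : #S₂ ≤ Fintype.card Γ) :
    #{χ ∈ Fintype.piFinset A | IsProperOn ⊤ (S₁ ∪ S₂) χ} ≤
      #(Fintype.piFinset A) * Real.exp (-(#S₂ / (4 * Fintype.card Γ))) ^ #S₁ := by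
  rcases (Fintype.piFinset A).eq_empty_or_nonempty with hempty | hne
  · simp only [hempty, filter_empty, card_empty, Nat.cast_zero, zero_mul, le_refl]
  have hpos : (0 : ℝ) < #(Fintype.piFinset A) := by exact_mod_cast hne.card_pos
  have hstep (χ : E → Γ) :
      (#{ψ ∈ Fintype.piFinset A | IsProperOn ⊤ (S₁ ∪ S₂) (S₂.piecewise ψ χ)} : ℝ) ≤
        #(Fintype.piFinset A) *
          ∏ a ∈ S₁, Real.exp (-(#{b ∈ S₂ | χ a ∈ A b} / Fintype.card Γ)) := by
    by_cases hχ : Set.InjOn χ S₁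
    · refine le_trans ?_ (mul_le_mul_of_nonneg_left
        (prod_card_sdiff_image_div_le_prod_exp A S₂ hχ) hpos.le)
      rw [← card_piFinset_filter_forall_notMem]
      gcongr with ψ
      intro hψ b hb hmem
      obtain ⟨a, ha, hab⟩ := mem_image.1 hmem
      have ha₂ := disjoint_left.1 hdisj ha
      refine hψ a (mem_union_left _ ha) b (mem_union_right _ hb) (fun h => ha₂ (h ▸ hb)) ?_
      rwa [piecewise_eq_of_notMem _ _ _ ha₂, piecewise_eq_of_mem _ _ _ hb]
    · rw [filter_false_of_mem, card_empty, Nat.cast_zero]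
      · positivity
      refine fun ψ _ hψ => hχ fun a ha a' ha' haa' => ?_
      refine isProperOn_top_iff.1 hψ (mem_union_left _ ha) (mem_union_left _ ha') ?_
      rwa [piecewise_eq_of_notMem _ _ _ (disjoint_left.1 hdisj ha),
        piecewise_eq_of_notMem _ _ _ (disjoint_left.1 hdisj ha')]
  refine le_of_mul_le_mul_left ?_ hpos
  rw [← Nat.cast_mul, card_mul_card_filter_piFinset_eq_sum A S₂, Nat.cast_sum]
  refine (sum_le_sum fun χ _ => hstep χ).trans ?_
  rw [← mul_sum, sum_piFinset_prod_eq A S₁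
    fun _ γ => Real.exp (-(#{b ∈ S₂ | γ ∈ A b} / Fintype.card Γ)), ← prod_const]
  gcongr with e he
  exact sum_exp_neg_card_filter_mem_div_le (hA e (mem_union_left _ he))
    (fun b hb => hA b (mem_union_right _ hb)) hS₂

lemma card_isProperOn_top_le_exp_mul_card_isProperOn {R : SimpleGraph E} [DecidableRel R.Adj]
    (hAne : ∀ e, (A e).Nonempty) {S : Finset E} {h d : ℕ}
    (hA : ∀ e ∈ S, 3 / 4 * (Fintype.card Γ : ℝ) ≤ #(A e)) (hS : 2 * h ≤ #S)
    (hh : h ≤ Fintype.card Γ) (hd : ∀ e ∈ S, #{e' ∈ S | R.Adj e e'} ≤ d)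
    (hdq : 8 * d ≤ 3 * Fintype.card Γ) :
    #{χ ∈ Fintype.piFinset A | IsProperOn ⊤ S χ} ≤
      Real.exp (-(h ^ 2 / (4 * Fintype.card Γ)) + 8 * d * #S / (3 * Fintype.card Γ)) *
        #{χ ∈ Fintype.piFinset A | IsProperOn R S χ} := by
  have hq : (0 : ℝ) < Fintype.card Γ := by exact_mod_cast Fintype.card_pos
  have hdq' : (8 : ℝ) * d ≤ 3 * Fintype.card Γ := by exact_mod_cast hdq
  obtain ⟨S₁, hS₁, hcard₁⟩ := exists_subset_card_eq (s := S) (n := h) (by omega)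
  obtain ⟨S₂, hS₂, hcard₂⟩ := exists_subset_card_eq (s := S \ S₁) (n := h)
    (by rw [card_sdiff_of_subset hS₁]; omega)
  have hunion : S₁ ∪ S₂ ⊆ S := union_subset hS₁ (hS₂.trans sdiff_subset)
  have hrainbow := card_isProperOn_top_union_le (disjoint_sdiff.mono_right hS₂)
    (fun e he => hA e (hunion he)) (by omega)
  have hproper := card_mul_exp_pow_le_card_isProperOn hAne (by positivity) hd hA (by linarith)
  rw [hcard₁, hcard₂, ← Real.exp_nat_mul] at hrainbow
  rw [← Real.exp_nat_mul] at hproper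
  set q : ℝ := (Fintype.card Γ : ℝ)
  calc (#{χ ∈ Fintype.piFinset A | IsProperOn ⊤ S χ} : ℝ)
      ≤ #{χ ∈ Fintype.piFinset A | IsProperOn ⊤ (S₁ ∪ S₂) χ} := by
        gcongr with χ
        exact fun hχ => hχ.mono le_rfl hunion
    _ ≤ #(Fintype.piFinset A) * Real.exp (h * -(h / (4 * q))) := hrainbow
    _ = Real.exp (-(h ^ 2 / (4 * q)) + 8 * d * #S / (3 * q)) *
        (#(Fintype.piFinset A) * Real.exp (#S * -(2 * d / (3 / 4 * q)))) := by
        rw [mul_left_comm, ← Real.exp_add]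
        congr 2
        field_simp
        ring
    _ ≤ _ := by gcongr

end ConflictColoring

section Resampling

variable {E Γ : Type*} [Fintype E] [DecidableEq E] [Fintype Γ] [DecidableEq Γ]
  (R : SimpleGraph E) [DecidableRel R.Adj] (S : Finset E)

/-- The colors available to each element when the elements of `S` are recolored: at `e ∈ S`, the
colors which `χ` does not give to any element outside `S` in conflict with `e`. -/
def freeColors (χ : E → Γ) (e : E) : Finset Γ :=
  if e ∈ S then univ \ {e' ∈ Sᶜ | R.Adj e e'}.image χ else univ

variable {R S} {χ ψ : E → Γ}

lemma mem_piFinset_freeColors_iff : ψ ∈ Fintype.piFinset (freeColors R S χ) ↔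
    ∀ e ∈ S, ∀ e' ∉ S, R.Adj e e' → ψ e ≠ χ e' := by
  simp only [Fintype.mem_piFinset, freeColors]
  refine forall_congr' fun e => ?_
  by_cases he : e ∈ S
  · simp only [he, if_true, mem_sdiff, Finset.mem_univ, true_and, mem_image, mem_filter,
      Finset.mem_compl, not_exists, not_and, and_imp, true_imp_iff, ne_comm (a := ψ e), ne_eq]
  · simp only [he, if_false, Finset.mem_univ, false_imp_iff]

lemma isProperOn_univ_piecewise_iff : IsProperOn R univ (S.piecewise ψ χ) ↔
    IsProperOn R Sᶜ χ ∧ ψ ∈ Fintype.piFinset (freeColors R S χ) ∧ IsProperOn R S ψ := by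
  rw [mem_piFinset_freeColors_iff]
  constructor
  · intro h
    refine ⟨fun e he e' he' hadj => ?_, fun e he e' he' hadj => ?_, fun e he e' he' hadj => ?_⟩
    all_goals
      simpa only [piecewise, he, he', Finset.mem_compl.1, if_true, if_false] using
        h e (mem_univ e) e' (mem_univ e') hadj
  · rintro ⟨hout, hcross, hin⟩ e - e' - hadj
    by_cases he : e ∈ S <;> by_cases he' : e' ∈ S
    all_goals simp only [piecewise, he, he', if_true, if_false]
    · exact hin e he e' he' hadj
    · exact hcross e he e' he' hadj
    · exact (hcross e' he' e he hadj.symm).symm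
    · exact hout e (Finset.mem_compl.2 he) e' (Finset.mem_compl.2 he') hadj

lemma le_card_freeColors {D : ℕ} (hD : ∀ e, R.degree e ≤ D) (hDq : 4 * D ≤ Fintype.card Γ)
    (χ : E → Γ) (e : E) : 3 / 4 * (Fintype.card Γ : ℝ) ≤ #(freeColors R S χ e) := by
  have hcard : Fintype.card Γ ≤ #(freeColors R S χ e) + D := by
    rw [freeColors]
    split_ifs
    · have hsdiff := le_card_sdiff ({e' ∈ Sᶜ | R.Adj e e'}.image χ) univ
      have hsub : {e' ∈ Sᶜ | R.Adj e e'} ⊆ R.neighborFinset e := fun e' he' =>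
        (R.mem_neighborFinset e e').2 (mem_filter.1 he').2
      have himage : #({e' ∈ Sᶜ | R.Adj e e'}.image χ) ≤ D :=
        card_image_le.trans ((card_le_card hsub).trans (hD e))
      rw [card_univ] at hsdiff
      omega
    · rw [card_univ]
      omega
  have hcard' : (Fintype.card Γ : ℝ) ≤ #(freeColors R S χ e) + D := by exact_mod_cast hcard
  have hDq' : (4 : ℝ) * D ≤ Fintype.card Γ := by exact_mod_cast hDq
  linarith

variable [Nonempty Γ] {D d h : ℕ}

lemma card_isProperOn_top_piecewise_le (hD : ∀ e, R.degree e ≤ D) (hDq : 4 * D ≤ Fintype.card Γ)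
    (hS : 2 * h ≤ #S) (hh : h ≤ Fintype.card Γ) (hd : ∀ e ∈ S, #{e' ∈ S | R.Adj e e'} ≤ d)
    (hdq : 8 * d ≤ 3 * Fintype.card Γ) (χ : E → Γ) :
    #{ψ : E → Γ | IsProperOn R univ (S.piecewise ψ χ) ∧ IsProperOn ⊤ S (S.piecewise ψ χ)} ≤
      Real.exp (-(h ^ 2 / (4 * Fintype.card Γ)) + 8 * d * #S / (3 * Fintype.card Γ)) *
        #{ψ : E → Γ | IsProperOn R univ (S.piecewise ψ χ)} := by
  have hq : (0 : ℝ) < Fintype.card Γ := by exact_mod_cast Fintype.card_pos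
  by_cases hχ : IsProperOn R Sᶜ χ
  swap
  · rw [filter_false_of_mem fun ψ _ hψ => hχ (isProperOn_univ_piecewise_iff.1 hψ.1).1, card_empty,
      Nat.cast_zero]
    positivity
  have hfree := le_card_freeColors (S := S) hD hDq χ
  have hne (e : E) : (freeColors R S χ e).Nonempty := by
    rw [← card_pos, ← Nat.cast_pos (α := ℝ)]
    linarith [hfree e]
  calc (#{ψ : E → Γ | IsProperOn R univ (S.piecewise ψ χ) ∧
          IsProperOn ⊤ S (S.piecewise ψ χ)} : ℝ)
      ≤ #{ψ ∈ Fintype.piFinset (freeColors R S χ) | IsProperOn ⊤ S ψ} := by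
        refine Nat.cast_le.2 (card_le_card fun ψ hψ => ?_)
        obtain ⟨hproper, hrainbow⟩ := (mem_filter.1 hψ).2
        refine mem_filter.2 ⟨(isProperOn_univ_piecewise_iff.1 hproper).2.1, ?_⟩
        intro e he e' he' hadj
        simpa only [piecewise, he, he', if_true] using hrainbow e he e' he' hadj
    _ ≤ _ := card_isProperOn_top_le_exp_mul_card_isProperOn hne (fun e _ => hfree e) hS hh hd hdq
    _ = _ := by
        congr 3
        ext ψ
        simp only [mem_filter, Finset.mem_univ, true_and, isProperOn_univ_piecewise_iff, hχ]

lemma card_isProperOn_univ_and_top_le (hD : ∀ e, R.degree e ≤ D) (hDq : 4 * D ≤ Fintype.card Γ)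
    (hS : 2 * h ≤ #S) (hh : h ≤ Fintype.card Γ) (hd : ∀ e ∈ S, #{e' ∈ S | R.Adj e e'} ≤ d)
    (hdq : 8 * d ≤ 3 * Fintype.card Γ) :
    #{χ : E → Γ | IsProperOn R univ χ ∧ IsProperOn ⊤ S χ} ≤
      Real.exp (-(h ^ 2 / (4 * Fintype.card Γ)) + 8 * d * #S / (3 * Fintype.card Γ)) *
        #{χ : E → Γ | IsProperOn R univ χ} := by
  have hresample (p : (E → Γ) → Prop) [DecidablePred p] : (#(univ : Finset (E → Γ)) : ℝ) *
      #{χ | p χ} = ∑ χ, (#{ψ | p (S.piecewise ψ χ)} : ℝ) := by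
    have := card_mul_card_filter_piFinset_eq_sum (fun _ : E => (univ : Finset Γ)) S p
    rw [Fintype.piFinset_univ] at this
    exact_mod_cast this
  refine le_of_mul_le_mul_left ?_
    (show (0 : ℝ) < #(univ : Finset (E → Γ)) by exact_mod_cast univ_nonempty.card_pos)
  rw [mul_left_comm, hresample, hresample, mul_sum]
  exact sum_le_sum fun χ _ => card_isProperOn_top_piecewise_le hD hDq hS hh hd hdq χ

lemma card_isProperOn_univ_pos (hD : ∀ e, R.degree e ≤ D) (hDq : 2 * D ≤ Fintype.card Γ) :
    0 < (#{χ : E → Γ | IsProperOn R univ χ} : ℝ) := by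
  have hgreedy := card_mul_exp_pow_le_card_isProperOn (R := R) (S := univ) (d := D)
    (r := Fintype.card Γ) (A := fun _ => (univ : Finset Γ)) (fun _ => univ_nonempty)
    (by exact_mod_cast Fintype.card_pos)
    (fun e _ => by rw [← R.neighborFinset_eq_filter]; exact hD e) (fun _ _ => by rw [card_univ])
    (by exact_mod_cast hDq)
  rw [Fintype.piFinset_univ] at hgreedy
  exact lt_of_lt_of_le (by rw [card_univ]; positivity) hgreedy

omit [DecidableEq E] [DecidableEq Γ] in
theorem exists_isProperOn_univ_forall_not_injOn {𝓢 : Finset (Finset E)} {M : ℕ}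
    (hD : ∀ e, R.degree e ≤ D) (hDq : 4 * D ≤ Fintype.card Γ) (hM : ∀ S ∈ 𝓢, #S = M)
    (hhM : 2 * h ≤ M) (hh : h ≤ Fintype.card Γ)
    (hd : ∀ S ∈ 𝓢, ∀ e ∈ S, #{e' ∈ S | R.Adj e e'} ≤ d) (hdq : 8 * d ≤ 3 * Fintype.card Γ)
    (hlt : #𝓢 * Real.exp (-(h ^ 2 / (4 * Fintype.card Γ)) +
      8 * d * M / (3 * Fintype.card Γ)) < 1) :
    ∃ χ : E → Γ, IsProperOn R univ χ ∧ ∀ S ∈ 𝓢, ¬ Set.InjOn χ S := by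
  by_contra! hcon
  classical
  have hpos := card_isProperOn_univ_pos (Γ := Γ) hD (by omega)
  have hcover : ({χ : E → Γ | IsProperOn R univ χ} : Finset (E → Γ)) ⊆
      𝓢.biUnion fun S => {χ | IsProperOn R univ χ ∧ IsProperOn ⊤ S χ} := fun χ hχ => by
    obtain ⟨S, hS, hinj⟩ := hcon χ (mem_filter.1 hχ).2
    exact mem_biUnion.2 ⟨S, hS, mem_filter.2
      ⟨mem_univ χ, (mem_filter.1 hχ).2, isProperOn_top_iff.2 hinj⟩⟩
  refine lt_irrefl (#{χ : E → Γ | IsProperOn R univ χ} : ℝ) ?_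
  calc (#{χ : E → Γ | IsProperOn R univ χ} : ℝ)
      ≤ ∑ S ∈ 𝓢, (#{χ : E → Γ | IsProperOn R univ χ ∧ IsProperOn ⊤ S χ} : ℝ) := by
        exact_mod_cast (card_le_card hcover).trans card_biUnion_le
    _ ≤ #𝓢 • (Real.exp (-(h ^ 2 / (4 * Fintype.card Γ)) + 8 * d * M / (3 * Fintype.card Γ)) *
          #{χ : E → Γ | IsProperOn R univ χ}) := sum_le_card_nsmul _ _ _ fun S hS => by
        have := card_isProperOn_univ_and_top_le hD hDq (hM S hS ▸ hhM) hh (hd S hS) hdq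
        rwa [hM S hS] at this
    _ = #𝓢 * Real.exp (-(h ^ 2 / (4 * Fintype.card Γ)) + 8 * d * M / (3 * Fintype.card Γ)) *
          #{χ : E → Γ | IsProperOn R univ χ} := by rw [nsmul_eq_mul, ← mul_assoc]
    _ < #{χ : E → Γ | IsProperOn R univ χ} := mul_lt_of_lt_one_left hpos hlt

end Resampling

section LineGraph

variable {V : Type*} {H : SimpleGraph V}

lemma card_filter_lineGraph_adj_le [DecidableEq V] [DecidableRel H.lineGraph.Adj]
    {S : Finset H.edgeSet} {d : ℕ} (hd : ∀ v, #{e ∈ S | v ∈ e.1} ≤ d) (e : H.edgeSet) :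
    #{e' ∈ S | H.lineGraph.Adj e e'} ≤ 2 * d := by
  have hsub : {e' ∈ S | H.lineGraph.Adj e e'} ⊆
      (e : Sym2 V).toFinset.biUnion fun v => {e' ∈ S | v ∈ e'.1} := fun e' he' => by
    obtain ⟨heS, hadj⟩ := mem_filter.1 he'
    obtain ⟨-, v, hve, hve'⟩ := lineGraph_adj_iff_exists.1 hadj
    exact mem_biUnion.2 ⟨v, Sym2.mem_toFinset.2 hve, mem_filter.2 ⟨heS, hve'⟩⟩
  calc #{e' ∈ S | H.lineGraph.Adj e e'}
      ≤ #(e : Sym2 V).toFinset * d := (card_le_card hsub).trans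
        (card_biUnion_le_card_mul _ _ _ fun v _ => hd v)
    _ = 2 * d := by
      rw [Sym2.card_toFinset_of_not_isDiag _ (H.not_isDiag_of_mem_edgeSet e.2)]

lemma card_filter_mem_edgeSet_le_degree [Fintype V] [DecidableEq V] [DecidableRel H.Adj] (v : V) :
    #{e : H.edgeSet | v ∈ (e : Sym2 V)} ≤ H.degree v := by
  rw [← H.card_incidenceFinset_eq_degree]
  refine card_le_card_of_injOn Subtype.val (fun e he => ?_) Subtype.val_injective.injOn
  exact (H.mem_incidenceFinset v e).2 ⟨e.2, (mem_filter.1 he).2⟩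

variable {W : Type*} [Fintype W] [DecidableEq V] {F : SimpleGraph W} [Fintype F.edgeSet]

lemma card_filter_mem_image_mapEdgeSet_le (f : F →g H) (v : V) :
    #{e ∈ univ.image f.mapEdgeSet | v ∈ e.1} ≤ Fintype.card W := by
  rw [← card_map (Function.Embedding.subtype _)]
  refine (card_le_card (t := univ.image fun w => s(v, f w)) fun e he => ?_).trans card_image_le
  obtain ⟨e, hfilter, rfl⟩ := mem_map.1 he
  obtain ⟨himage, u, hu⟩ := mem_filter.1 hfilter
  obtain ⟨x, -, rfl⟩ := mem_image.1 himage
  have hmem : u ∈ Sym2.map f x := (show Sym2.map f x = s(v, u) from hu) ▸ Sym2.mem_mk_right v u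
  obtain ⟨w, -, rfl⟩ := Sym2.mem_map.1 hmem
  exact mem_image.2 ⟨w, mem_univ w, hu.symm⟩

end LineGraph

section BoundedDegree

variable {V : Type*} {H : SimpleGraph V}

lemma card_top_hom_le [Fintype V] [DecidableRel H.Adj] {W : Type*} [Fintype W] [Nontrivial W]
    [Fintype ((⊤ : SimpleGraph W) →g H)] :
    Fintype.card ((⊤ : SimpleGraph W) →g H) ≤ #H.support.toFinset ^ Fintype.card W := by
  classical
  have hmem (f : (⊤ : SimpleGraph W) →g H) (w : W) : f w ∈ H.support := by
    obtain ⟨u, hu⟩ := exists_ne w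
    exact ⟨f u, f.map_adj hu.symm⟩
  rw [Set.toFinset_card, ← Fintype.card_fun]
  refine Fintype.card_le_of_injective (fun f w => (⟨f w, hmem f w⟩ : H.support)) fun f g hfg => ?_
  ext w
  exact congrArg Subtype.val (congrFun hfg w)

open Classical in
lemma not_arrowsTo_of_isProperOn_lineGraph [Fintype H.edgeSet] {W : Type*} {F : SimpleGraph W}
    {χ : H.edgeSet → ℕ} (hχ : IsProperOn H.lineGraph univ χ)
    (hF : ∀ f : F →g H, ¬ Set.InjOn χ (Set.range f.mapEdgeSet)) : ¬ ArrowsTo H F := by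
  have hext (e : H.edgeSet) : Function.extend Subtype.val χ 0 e.1 = χ e :=
    Subtype.val_injective.extend_apply χ 0 e
  intro harrow
  obtain ⟨f, -, hrainbow⟩ := harrow (Function.extend Subtype.val χ 0) fun e₁ he₁ e₂ he₂ hne hv => by
    rw [hext ⟨e₁, he₁⟩, hext ⟨e₂, he₂⟩]
    exact hχ ⟨e₁, he₁⟩ (mem_univ _) ⟨e₂, he₂⟩ (mem_univ _)
      (lineGraph_adj_iff_exists.2 ⟨fun h => hne (congrArg Subtype.val h), hv⟩)
  refine hF f ?_
  rintro _ ⟨x, rfl⟩ _ ⟨y, rfl⟩ hxy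
  rw [← hext, ← hext] at hxy
  exact congrArg _ (Subtype.ext (hrainbow x x.2 y y.2 hxy))

theorem not_arrowsTo_top_of_degree_le [Fintype V] [DecidableRel H.Adj] {k q Δ h : ℕ}
    (hΔ : ∀ v, H.degree v ≤ Δ) (hΔq : 8 * Δ ≤ q) (hk : 2 ≤ k) (hkq : 16 * k ≤ 3 * q)
    (hhk : 2 * h ≤ k.choose 2) (hhq : h ≤ q)
    (hlt : (#H.support.toFinset : ℝ) ^ k *
      Real.exp (-(h ^ 2 / (4 * q)) + 16 * k * k.choose 2 / (3 * q)) < 1) :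
    ¬ ArrowsTo H (⊤ : SimpleGraph (Fin k)) := by
  classical
  have : NeZero q := ⟨by omega⟩
  have : Nontrivial (Fin k) := Fin.nontrivial_iff_two_le.2 hk
  let edges (f : (⊤ : SimpleGraph (Fin k)) →g H) : Finset H.edgeSet := univ.image f.mapEdgeSet
  have hedges (f) : #(edges f) = k.choose 2 := by
    rw [card_image_of_injective _ (Hom.mapEdgeSet.injective f f.injective_of_top_hom), card_univ,
      ← edgeFinset_card, card_edgeFinset_top_eq_card_choose_two, Fintype.card_fin]
  have hcard : #(univ.image edges) ≤ #H.support.toFinset ^ k := by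
    refine card_image_le.trans (card_top_hom_le.trans_eq ?_)
    rw [Fintype.card_fin]
  have hdegree (e) : H.lineGraph.degree e ≤ 2 * Δ := by
    rw [← card_neighborFinset_eq_degree, neighborFinset_eq_filter]
    exact card_filter_lineGraph_adj_le
      (fun v => (card_filter_mem_edgeSet_le_degree v).trans (hΔ v)) e
  have hdegree_edges (f e) : #{e' ∈ edges f | H.lineGraph.Adj e e'} ≤ 2 * k :=
    card_filter_lineGraph_adj_le
      (fun v => (card_filter_mem_image_mapEdgeSet_le f v).trans_eq (Fintype.card_fin k)) e
  obtain ⟨χ, hproper, hχ⟩ := exists_isProperOn_univ_forall_not_injOn (Γ := Fin q)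
    (𝓢 := univ.image edges) (h := h) hdegree (by rw [Fintype.card_fin]; omega)
    (forall_mem_image.2 fun f _ => hedges f) hhk (by rwa [Fintype.card_fin])
    (forall_mem_image.2 fun f _ e _ => hdegree_edges f e) (by rw [Fintype.card_fin]; omega) <| by
      refine lt_of_le_of_lt ?_ hlt
      rw [Fintype.card_fin, Nat.cast_mul, Nat.cast_two, ← mul_assoc,
        show (8 : ℝ) * 2 = 16 by norm_num]
      gcongr
      exact_mod_cast hcard
  refine not_arrowsTo_of_isProperOn_lineGraph (χ := fun e => χ e)
    (fun e he e' he' hadj h => hproper e he e' he' hadj (Fin.ext h)) fun f hinj => ?_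
  refine hχ (edges f) (mem_image_of_mem _ (mem_univ f)) fun e he e' he' hχe => ?_
  rw [coe_image, coe_univ, Set.image_univ] at he he'
  exact hinj he he' (congrArg Fin.val hχe)

end BoundedDegree

section Extension

variable {V : Type*}

lemma IsProperEdgeColoring.exists_extend [Countable V] {G H : SimpleGraph V} {c : Sym2 V → ℕ}
    (hc : IsProperEdgeColoring H c) :
    ∃ c', IsProperEdgeColoring G c' ∧ ∀ e ∈ H.edgeSet, c' e = 2 * c e := by
  classical
  obtain ⟨g, hg⟩ := Countable.exists_injective_nat (Sym2 V)
  refine ⟨fun e => if e ∈ H.edgeSet then 2 * c e else 2 * g e + 1, ?_, fun e he => if_pos he⟩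
  intro e₁ _ e₂ _ hne hv
  have hgne : g e₁ ≠ g e₂ := hg.ne hne
  dsimp only
  split_ifs with h₁ h₂ h₂
  · have := hc e₁ h₁ e₂ h₂ hne hv
    omega
  all_goals omega

lemma sdiff_between_compl_adj {G : SimpleGraph V} {s : Set V} {v w : V} :
    (G \ G.between s sᶜ).Adj v w ↔ G.Adj v w ∧ (v ∈ s ↔ w ∈ s) := by
  rw [sdiff_adj, between_adj, Set.mem_compl_iff, Set.mem_compl_iff]
  tauto

lemma exists_orderEmbedding_forall_iff {k n : ℕ} (hkn : 2 * k ≤ n) (p : Fin n → Prop) :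
    ∃ ι : Fin k ↪o Fin n, ∀ i j, p (ι i) ↔ p (ι j) := by
  classical
  obtain ⟨P, hP⟩ := Fintype.exists_le_card_fiber_of_mul_le_card p (n := k)
    (by rwa [Fintype.card_prop, Fintype.card_fin])
  refine ⟨orderEmbOfCardLe _ hP, fun i j => ?_⟩
  have h (i) := (mem_filter.1 (orderEmbOfCardLe_mem _ hP i)).2
  rw [h, h]

lemma ArrowsTo.sdiff_between_compl [Countable V] {G : SimpleGraph V} {k n : ℕ} (hkn : 2 * k ≤ n)
    (s : Set V) (hG : ArrowsTo G (⊤ : SimpleGraph (Fin n))) :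
    ArrowsTo (G \ G.between s sᶜ) (⊤ : SimpleGraph (Fin k)) := by
  intro c hc
  obtain ⟨c', hc', hext⟩ := hc.exists_extend (G := G)
  obtain ⟨f, hf, hrainbow⟩ := hG c' hc'
  obtain ⟨ι, hι⟩ := exists_orderEmbedding_forall_iff hkn fun i => f i ∈ s
  let F : (⊤ : SimpleGraph (Fin k)) →g G \ G.between s sᶜ :=
    ⟨fun i => f (ι i), fun {i j} hij =>
      sdiff_between_compl_adj.2 ⟨f.map_adj (ι.injective.ne hij), hι i j⟩⟩
  refine ⟨F, hf.comp ι.injective, fun e₁ h₁ e₂ h₂ he => Sym2.map.injective ι.injective ?_⟩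
  have hmem {e} (h : e ∈ (⊤ : SimpleGraph (Fin k)).edgeSet) :
      e.map ι ∈ (⊤ : SimpleGraph (Fin n)).edgeSet :=
    Hom.map_mem_edgeSet ⟨ι, ι.injective.ne⟩ h
  refine hrainbow _ (hmem h₁) _ (hmem h₂) ?_
  have hmap (e : Sym2 (Fin k)) : (e.map ι).map f = e.map F := Sym2.map_map e
  rw [hmap, hmap, hext _ (F.map_mem_edgeSet h₁), hext _ (F.map_mem_edgeSet h₂), he]

end Extension

section SizeBound

variable {V : Type*} [Fintype V] {G : SimpleGraph V} [DecidableRel G.Adj]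

lemma card_filter_lt_degree_le {Δ : ℕ} (hΔ : 0 < Δ) (h : 2 * #G.edgeFinset ≤ Δ ^ 2) :
    #{v | Δ < G.degree v} ≤ Δ := by
  refine Nat.le_of_mul_le_mul_right (?_ : _ ≤ Δ * Δ) hΔ
  calc #{v | Δ < G.degree v} * Δ ≤ ∑ v with Δ < G.degree v, G.degree v :=
        card_nsmul_le_sum _ _ _ fun v hv => (mem_filter.1 hv).2.le
    _ ≤ ∑ v, G.degree v := sum_le_sum_of_subset (subset_univ _)
    _ ≤ Δ * Δ := by rwa [sum_degrees_eq_twice_card_edges, ← sq]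

lemma card_support_le : #G.support.toFinset ≤ 2 * #G.edgeFinset := by
  rw [← sum_degrees_support_eq_twice_card_edges, card_eq_sum_ones]
  refine sum_le_sum fun v hv => ?_
  exact (G.degree_pos_iff_mem_support v).2 (Set.mem_toFinset.1 hv)

open Classical in
lemma degree_sdiff_between_compl_le {Δ : ℕ} (hΔ : 0 < Δ) (h : 2 * #G.edgeFinset ≤ Δ ^ 2) (v : V) :
    (G \ G.between {v | Δ < G.degree v} {v | Δ < G.degree v}ᶜ).degree v ≤ Δ := by
  by_cases hv : Δ < G.degree v
  · rw [← card_neighborFinset_eq_degree]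
    refine (card_le_card fun w hw => ?_).trans (card_filter_lt_degree_le hΔ h)
    have hadj := (sdiff_between_compl_adj.1 ((mem_neighborFinset _ _ _).1 hw)).2
    exact mem_filter.2 ⟨mem_univ w, hadj.1 hv⟩
  · exact (degree_le_of_le sdiff_le).trans (not_lt.1 hv)

theorem not_arrowsTo_top_of_card_edgeFinset_le {n k q Δ h : ℕ} (hΔ : 0 < Δ)
    (hG : 2 * #G.edgeFinset ≤ Δ ^ 2) (hΔq : 8 * Δ ≤ q) (hk : 2 ≤ k) (hkn : 2 * k ≤ n)
    (hkq : 16 * k ≤ 3 * q) (hhk : 2 * h ≤ k.choose 2) (hhq : h ≤ q)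
    (hlt : ((Δ : ℝ) ^ 2) ^ k *
      Real.exp (-(h ^ 2 / (4 * q)) + 16 * k * k.choose 2 / (3 * q)) < 1) :
    ¬ ArrowsTo G (⊤ : SimpleGraph (Fin n)) := by
  classical
  intro harrow
  set s : Set V := {v | Δ < G.degree v}
  have hdegree (v) : (G \ G.between s sᶜ).degree v ≤ Δ := by
    convert degree_sdiff_between_compl_le hΔ hG v
  have hsupport : #(G \ G.between s sᶜ).support.toFinset ≤ Δ ^ 2 :=
    (card_le_card (Set.toFinset_subset_toFinset.2 (support_mono sdiff_le))).trans
      (card_support_le.trans hG)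
  refine not_arrowsTo_top_of_degree_le hdegree hΔq hk hkq hhk hhq ?_
    (harrow.sdiff_between_compl hkn s)
  refine lt_of_le_of_lt ?_ hlt
  gcongr
  exact_mod_cast hsupport

end SizeBound

section LowerBound

variable {n : ℕ}

lemma mul_log_le_two_mul {a x : ℝ} (ha : 0 ≤ a) (hx : a ^ 2 ≤ x) : a * Real.log x ≤ 2 * x := by
  have hx₀ : 0 ≤ x := (sq_nonneg a).trans hx
  have hlog := Real.log_le_self (Real.sqrt_nonneg x)
  rw [Real.log_sqrt hx₀] at hlog
  calc a * Real.log x ≤ a * (2 * √x) := by gcongr; linarith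
    _ ≤ √x * (2 * √x) := by gcongr; exact Real.le_sqrt_of_sq_le hx
    _ = 2 * x := by rw [mul_left_comm, Real.mul_self_sqrt hx₀]

lemma exists_nat_mul_le_and_le_two_mul {x y : ℝ} (hx : 0 < x) (hxy : x ≤ y) :
    ∃ q : ℕ, 0 < q ∧ x * q ≤ y ∧ y ≤ 2 * (x * q) := by
  have hq₀ : 0 < ⌊y / x⌋₊ := Nat.floor_pos.2 ((one_le_div hx).2 hxy)
  refine ⟨⌊y / x⌋₊, hq₀, ?_, ?_⟩
  · rw [← le_div_iff₀' hx]
    exact Nat.floor_le (div_nonneg (hx.le.trans hxy) hx.le)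
  · have hone : (1 : ℝ) ≤ ⌊y / x⌋₊ := by exact_mod_cast hq₀
    calc y ≤ x * (⌊y / x⌋₊ + 1) := ((div_lt_iff₀' hx).1 (Nat.lt_floor_add_one _)).le
      _ ≤ x * (⌊y / x⌋₊ + ⌊y / x⌋₊) := by gcongr
      _ = 2 * (x * ⌊y / x⌋₊) := by ring

lemma two_mul_add_one_sq_le {k : ℕ} (hk : 3 ≤ k) :
    (2 * k + 1) ^ 2 ≤ 144 * (k.choose 2 / 2) := by
  have hchoose : k.choose 2 * 2 = k * (k - 1) := by
    rw [Nat.choose_two_right, Nat.div_mul_cancel (Nat.even_mul_pred_self _).two_dvd]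
  obtain ⟨j, rfl⟩ := Nat.exists_eq_add_of_le' hk
  rw [show j + 3 - 1 = j + 2 by omega] at hchoose
  have hhalf : (j + 3).choose 2 ≤ 2 * ((j + 3).choose 2 / 2) + 1 := by omega
  nlinarith

lemma sq_pow_le_exp {k Δ : ℕ} (hn : 1 ≤ n) (hk : 2 * k ≤ n) (hΔ : Δ ≤ n ^ 3) :
    ((Δ : ℝ) ^ 2) ^ k ≤ Real.exp (3 * n * Real.log n) := by
  have hn₀ : (0 : ℝ) < n := by exact_mod_cast hn
  calc ((Δ : ℝ) ^ 2) ^ k = ((Δ ^ (2 * k) : ℕ) : ℝ) := by rw [Nat.cast_pow, pow_mul]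
    _ ≤ (((n ^ 3) ^ n : ℕ) : ℝ) := Nat.cast_le.2 <|
        (Nat.pow_le_pow_left hΔ _).trans (Nat.pow_le_pow_right (pow_pos hn 3) hk)
    _ = Real.exp (3 * n * Real.log n) := by
        rw [← pow_mul, Nat.cast_pow, ← Real.exp_log hn₀, ← Real.exp_nat_mul, Real.exp_log hn₀]
        push_cast
        rfl

lemma le_sq_div_four_mul {q h : ℕ} {L : ℝ} (hq₀ : 0 < q) (hq : 10 ^ 6 * L * q ≤ n ^ 3)
    (hh : n ^ 2 ≤ 144 * h) : 12 * n * L ≤ (h : ℝ) ^ 2 / (4 * q) := by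
  have hh' : (n : ℝ) ^ 2 / 144 ≤ h := by
    rw [div_le_iff₀' (by norm_num)]
    exact_mod_cast hh
  rw [le_div_iff₀ (by positivity)]
  calc 12 * n * L * (4 * q) = 48 * n * (10 ^ 6 * L * q) / 10 ^ 6 := by ring
    _ ≤ 48 * n * n ^ 3 / 10 ^ 6 := by gcongr
    _ ≤ ((n : ℝ) ^ 2 / 144) ^ 2 := by linarith [show (0 : ℝ) ≤ n ^ 4 by positivity]
    _ ≤ (h : ℝ) ^ 2 := by gcongr

lemma mul_choose_two_div_le {k q : ℕ} {L : ℝ} (hL : 0 ≤ L) (hq₀ : 0 < q)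
    (hq : (n : ℝ) ^ 3 ≤ 2 * (10 ^ 6 * L * q)) (hk : 2 * k ≤ n) :
    16 * k * (k.choose 2 : ℝ) / (3 * q) ≤ 10 ^ 6 * L := by
  have hk' : (k : ℝ) ≤ n / 2 := by
    rw [le_div_iff₀' two_pos]
    exact_mod_cast hk
  rw [div_le_iff₀ (by positivity), Nat.cast_choose_two]
  calc 16 * k * (k * (k - 1) / 2 : ℝ) ≤ 8 * (k : ℝ) ^ 3 := by
        linarith [show (0 : ℝ) ≤ k ^ 2 by positivity]
    _ ≤ 8 * (n / 2 : ℝ) ^ 3 := by gcongr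
    _ = (n : ℝ) ^ 3 := by ring
    _ ≤ 2 * (10 ^ 6 * L * q) := hq
    _ ≤ 10 ^ 6 * L * (3 * q) := by linarith [show 0 ≤ 10 ^ 6 * L * q by positivity]

lemma sq_pow_mul_exp_lt_one {k q Δ h : ℕ} (hn : 10 ^ 6 ≤ n) (hq₀ : 0 < q) (hk : 2 * k ≤ n)
    (hΔ : Δ ≤ n ^ 3) (hq : 10 ^ 6 * Real.log n * q ≤ n ^ 3)
    (hq' : (n : ℝ) ^ 3 ≤ 2 * (10 ^ 6 * Real.log n * q)) (hh : n ^ 2 ≤ 144 * h) :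
    ((Δ : ℝ) ^ 2) ^ k * Real.exp (-(h ^ 2 / (4 * q)) + 16 * k * k.choose 2 / (3 * q)) < 1 := by
  have hlog : 0 < Real.log n := Real.log_pos (by exact_mod_cast (by omega : 1 < n))
  have hn' : (10 : ℝ) ^ 6 ≤ n := by exact_mod_cast hn
  calc ((Δ : ℝ) ^ 2) ^ k * Real.exp (-(h ^ 2 / (4 * q)) + 16 * k * k.choose 2 / (3 * q))
      ≤ Real.exp (3 * n * Real.log n) * Real.exp (-(12 * n * Real.log n) + n * Real.log n) := by
        gcongr
        · exact sq_pow_le_exp (by omega) hk hΔ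
        · exact le_sq_div_four_mul hq₀ hq hh
        · exact (mul_choose_two_div_le hlog.le hq₀ hq' hk).trans (by gcongr)
    _ < 1 := by
        rw [← Real.exp_add, Real.exp_lt_one_iff]
        linarith [show 0 < n * Real.log n by positivity]

lemma two_mul_le_sq_of_mul_lt_pow_six {e q Δ : ℕ} {L : ℝ} (hL : 0 < L)
    (hq : (n : ℝ) ^ 3 ≤ 2 * (10 ^ 6 * L * q)) (hΔ : q ≤ 16 * Δ)
    (he : 10 ^ 16 * L ^ 2 * e < n ^ 6) : 2 * e ≤ Δ ^ 2 := by
  have hΔ' : (q : ℝ) ≤ 16 * Δ := by exact_mod_cast hΔ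
  suffices (10 ^ 16 * L ^ 2) * (2 * e : ℝ) ≤ (10 ^ 16 * L ^ 2) * Δ ^ 2 by
    exact_mod_cast le_of_mul_le_mul_left this (by positivity)
  calc (10 ^ 16 * L ^ 2) * (2 * e : ℝ) = 2 * (10 ^ 16 * L ^ 2 * e) := by ring
    _ ≤ 2 * ((n : ℝ) ^ 3) ^ 2 := by rw [← pow_mul]; gcongr
    _ ≤ 2 * (2 * (10 ^ 6 * L * (16 * Δ))) ^ 2 := by
        gcongr
        exact hq.trans (by gcongr)
    _ ≤ (10 ^ 16 * L ^ 2) * Δ ^ 2 := by linarith [show 0 ≤ L ^ 2 * Δ ^ 2 by positivity]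

lemma pow_six_le_mul_card_edgeFinset {V : Type*} [Fintype V] {G : SimpleGraph V}
    [DecidableRel G.Adj] (hn : 10 ^ 12 ≤ n) (hG : ArrowsTo G (⊤ : SimpleGraph (Fin n))) :
    (n : ℝ) ^ 6 ≤ 10 ^ 16 * Real.log n ^ 2 * #G.edgeFinset := by
  have hn' : (10 : ℝ) ^ 12 ≤ n := by exact_mod_cast hn
  have hlog : 1 ≤ Real.log n := by
    rw [Real.le_log_iff_exp_le (by positivity)]
    linarith [Real.exp_one_lt_three]
  have hlog_le : 10 ^ 6 * Real.log n ≤ 2 * n :=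
    mul_log_le_two_mul (by norm_num) (by linarith)
  obtain ⟨q, hq₀, hq, hq'⟩ := exists_nat_mul_le_and_le_two_mul (x := 10 ^ 6 * Real.log n)
    (y := n ^ 3) (by positivity) (by nlinarith [sq_nonneg (n : ℝ)])
  have hnq : n ^ 2 ≤ 4 * q := by
    have : (n : ℝ) * n ^ 2 ≤ n * (4 * q) := by
      linarith [mul_le_mul_of_nonneg_right hlog_le q.cast_nonneg]
    exact_mod_cast le_of_mul_le_mul_left this (by positivity)
  have hq_le : q ≤ n ^ 3 := by
    have : (q : ℝ) ≤ n ^ 3 := hq.trans' (le_mul_of_one_le_left q.cast_nonneg (by linarith))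
    exact_mod_cast this
  have hchoose : (n / 2).choose 2 ≤ q := by
    have hpow : (2 * (n / 2)) ^ 2 ≤ n ^ 2 := Nat.pow_le_pow_left (Nat.mul_div_le n 2) 2
    have := Nat.choose_le_pow (n / 2) 2
    rw [mul_pow] at hpow
    omega
  have hh : n ^ 2 ≤ 144 * ((n / 2).choose 2 / 2) :=
    (Nat.pow_le_pow_left (by omega) 2).trans (two_mul_add_one_sq_le (k := n / 2) (by omega))
  have hq_large : 16 * n ≤ q := by nlinarith
  by_contra! hcard
  refine not_arrowsTo_top_of_card_edgeFinset_le (k := n / 2) (q := q) (Δ := q / 8)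
    (h := (n / 2).choose 2 / 2) (by omega) ?_ (by omega) (by omega) (by omega) (by omega) (by omega)
    (by omega) ?_ hG
  · exact two_mul_le_sq_of_mul_lt_pow_six (by positivity) hq' (by omega) hcard
  · exact sq_pow_mul_exp_lt_one (by omega) hq₀ (by omega) ((Nat.div_le_self q 8).trans hq_le)
      hq hq' hh

lemma exists_arrowsTo_top_ncard_eq_ARs (n : ℕ) :
    ∃ (N : ℕ) (G : SimpleGraph (Fin N)), ArrowsTo G (⊤ : SimpleGraph (Fin n)) ∧
      G.edgeSet.ncard = ARs (⊤ : SimpleGraph (Fin n)) := by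
  obtain ⟨n', ⟨N, hN, -⟩, hn⟩ :=
    (eventually_exists_arrowsTo_top.and (Filter.eventually_ge_atTop n)).exists
  have hmem := Nat.sInf_mem (s := {m | ∃ (N : ℕ) (G : SimpleGraph (Fin N)),
    ArrowsTo G (⊤ : SimpleGraph (Fin n)) ∧ G.edgeSet.ncard = m}) ⟨_, N, ⊤, hN.top_mono hn, rfl⟩
  exact hmem

lemma ArrowsTo.ncard_edgeSet_pos {V W : Type*} [Finite V] [Nontrivial W] {G : SimpleGraph V}
    (hG : ArrowsTo G (⊤ : SimpleGraph W)) : 0 < G.edgeSet.ncard := by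
  obtain ⟨c, hc, -⟩ := IsProperEdgeColoring.exists_extend (G := G) (H := ⊥) (c := 0)
    fun e he => by rw [edgeSet_bot] at he; exact he.elim
  obtain ⟨f, -⟩ := hG c hc
  obtain ⟨v, w, hvw⟩ := exists_pair_ne W
  exact (Set.ncard_pos (Set.toFinite _)).2 ⟨s(f v, f w), f.map_adj hvw⟩

theorem exists_le_ARs_top : ∃ c₁ : ℝ, 0 < c₁ ∧ ∀ n : ℕ, 2 ≤ n →
    c₁ * (n : ℝ) ^ 6 / (Real.log n) ^ 2 ≤ (ARs (⊤ : SimpleGraph (Fin n)) : ℝ) := by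
  classical
  refine ⟨1 / 10 ^ 73, by positivity, fun n hn => ?_⟩
  have hlog₀ : 0 < Real.log n := Real.log_pos (by exact_mod_cast hn)
  obtain ⟨N, G, hG, hcard⟩ := exists_arrowsTo_top_ncard_eq_ARs n
  rw [← hcard, div_le_iff₀ (by positivity)]
  rcases le_or_gt (10 ^ 12) n with hle | hlt
  · have hbound := pow_six_le_mul_card_edgeFinset hle hG
    rw [← Set.ncard_coe_finset, coe_edgeFinset] at hbound
    calc 1 / 10 ^ 73 * (n : ℝ) ^ 6
        ≤ 1 / 10 ^ 73 * (10 ^ 16 * Real.log n ^ 2 * G.edgeSet.ncard) := by gcongr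
      _ ≤ G.edgeSet.ncard * Real.log n ^ 2 := by
        linarith [show 0 ≤ Real.log n ^ 2 * G.edgeSet.ncard by positivity]
  · have : Nontrivial (Fin n) := Fin.nontrivial_iff_two_le.2 hn
    have hone : (1 : ℝ) ≤ G.edgeSet.ncard := by exact_mod_cast hG.ncard_edgeSet_pos
    have hn_le : (n : ℝ) ≤ 10 ^ 12 := by exact_mod_cast hlt.le
    have hlog_ge : 1 / 2 ≤ Real.log n := by
      linarith [Real.log_two_gt_d9,
        Real.log_le_log two_pos (by exact_mod_cast hn : (2 : ℝ) ≤ n)]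
    calc 1 / 10 ^ 73 * (n : ℝ) ^ 6 ≤ 1 / 10 ^ 73 * (10 ^ 12) ^ 6 := by gcongr
      _ ≤ 1 * (1 / 2) ^ 2 := by norm_num
      _ ≤ G.edgeSet.ncard * Real.log n ^ 2 := by gcongr

end LowerBound

end

theorem stmt_5_general :
    ∃ c₁ c₂ : ℝ, 0 < c₁ ∧ 0 < c₂ ∧ ∀ n : ℕ, 2 ≤ n →
      c₁ * (n : ℝ) ^ 6 / (Real.log n) ^ 2 ≤ (ARs (⊤ : SimpleGraph (Fin n)) : ℝ) ∧
      (ARs (⊤ : SimpleGraph (Fin n)) : ℝ) ≤ c₂ * (n : ℝ) ^ 6 / (Real.log n) ^ 2 := by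
  obtain ⟨c₁, hc₁, hlower⟩ := exists_le_ARs_top
  obtain ⟨c₂, hc₂, hupper⟩ := exists_ARs_top_le
  exact ⟨c₁, c₂, hc₁, hc₂, fun n hn => ⟨hlower n hn, hupper n hn⟩⟩

theorem stmt_5 :
    ∃ c₁ c₂ : ℝ, 0 < c₁ ∧ 0 < c₂ ∧ ∀ n : ℕ, 2 ≤ n →
      c₁ * (n : ℝ) ^ 5 / Real.log n ≤ (ARs (⊤ : SimpleGraph (Fin n)) : ℝ) ∧
      (ARs (⊤ : SimpleGraph (Fin n)) : ℝ) ≤ c₂ * (n : ℝ) ^ 6 / (Real.log n) ^ 2 := by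
  obtain ⟨c₁, c₂, hc₁, hc₂, h⟩ := stmt_5_general
  refine ⟨c₁, c₂, hc₁, hc₂, fun n hn => ⟨le_trans ?_ (h n hn).1, (h n hn).2⟩⟩
  have hlog : 0 < Real.log n := Real.log_pos (by exact_mod_cast hn)
  calc c₁ * (n : ℝ) ^ 5 / Real.log n = c₁ * n ^ 5 * Real.log n / Real.log n ^ 2 := by field_simp
    _ ≤ c₁ * n ^ 5 * n / Real.log n ^ 2 := by gcongr; exact Real.log_le_self n.cast_nonneg
    _ = c₁ * n ^ 6 / Real.log n ^ 2 := by ring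
end

section
/- Let H be a graph with k ≥ 2 edges and maximum degree Δ. Then AR_s(H) ≥ (k−1)²/(2Δ). -/
open SimpleGraph

/-!
Let `k` be the number of edges of `H` and `Δ` its maximum degree. Starting from `G` with `G → H`,
delete vertices `v₁, v₂, …` one at a time, where `vᵢ` has degree at least `k - 1 - Δ(i - 1)` in the
graph that is left. Suppose this stops after a set `S` of deletions. The remaining graph has all
degrees below `k - 1 - Δ|S|`, so by Vizing's theorem it has a proper coloring with at most
`k - 1 - Δ|S|` colors, and we give the deleted edges new distinct colors. A rainbow copy of `H` has
at most `Δ|S|` edges that meet `S`, hence at most `k - 1` edges altogether, which is absurd.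
So the deletions go on until `k - 1 - Δi ≤ 0`, and they remove at least
`(k - 1) + (k - 1 - Δ) + (k - 1 - 2Δ) + ⋯ ≥ (k - 1)² / (2Δ)` edges.

Graphs `G` with `G → H` exist, because a rainbow complete graph can be grown vertex by vertex in any
proper coloring of a large complete graph.

Vizing's theorem is proved by adding one vertex `v` at a time. Among `D + 1` colors, each neighbor
of `v` misses at least two, and after some Kempe swaps the edges at `v` can be given distinct
missing colors. To see this, assign two missing colors to every neighbor but one, and a single one
to the remaining neighbor. The number of assignments is odd and less than twice the number of
colors. Hence some color is assigned exactly once, and can be used and discarded, or else some color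
`j` is assigned to no neighbor and some color `i` to three of them. In the latter case one of the
three is on an `i`-`j` chain avoiding another one, and the swap along that chain brings `j` into
play.
-/

section EdgeColoring

variable {V : Type*} {G : SimpleGraph V} {c : Sym2 V → ℕ}

lemma isProperEdgeColoring_iff_injOn :
    IsProperEdgeColoring G c ↔ ∀ v, Set.InjOn (fun w ↦ c s(v, w)) (G.neighborSet v) := by
  constructor
  · intro hc v a ha b hb hab
    by_contra hne
    exact hc s(v, a) ha s(v, b) hb (mt Sym2.congr_right.1 hne) ⟨v, by simp, by simp⟩ hab
  · rintro hc _ he₁ _ he₂ hne ⟨v, ⟨a, rfl⟩, ⟨b, rfl⟩⟩ hab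
    exact hne (congrArg (fun w ↦ s(v, w)) (hc v he₁ he₂ hab))

namespace IsProperEdgeColoring

lemma mono {K : SimpleGraph V} (hKG : K ≤ G) (hc : IsProperEdgeColoring G c) :
    IsProperEdgeColoring K c :=
  fun e₁ he₁ e₂ he₂ ↦ hc e₁ (edgeSet_mono hKG he₁) e₂ (edgeSet_mono hKG he₂)

lemma degree_le_card (hc : IsProperEdgeColoring G c) {v : V} [Fintype (G.neighborSet v)]
    {T : Finset ℕ} (hT : ∀ w, G.Adj v w → c s(v, w) ∈ T) : G.degree v ≤ T.card := by
  rw [← card_neighborFinset_eq_degree]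
  refine Finset.card_le_card_of_injOn (fun w ↦ c s(v, w)) (fun w hw ↦ hT w (by simpa using hw)) ?_
  simpa using isProperEdgeColoring_iff_injOn.1 hc v

lemma exists_extend_s6 [Finite V] {K : SimpleGraph V} (hc : IsProperEdgeColoring K c)
    (G : SimpleGraph V) :
    ∃ c' : Sym2 V → ℕ, IsProperEdgeColoring G c' ∧ ∀ e ∈ K.edgeSet, c' e = c e := by
  classical
  obtain ⟨M, hM⟩ : ∃ M, ∀ e, c e < M := by
    obtain ⟨M, hM⟩ := (Set.finite_range c).bddAbove
    exact ⟨M + 1, fun e ↦ Nat.lt_succ_of_le (hM ⟨e, rfl⟩)⟩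
  obtain ⟨code, hcode⟩ := Countable.exists_injective_nat (Sym2 V)
  refine ⟨fun e ↦ if e ∈ K.edgeSet then c e else M + code e, ?_, fun e he ↦ if_pos he⟩
  intro e₁ _ e₂ _ hne hv
  have := hM e₁
  have := hM e₂
  by_cases h₁ : e₁ ∈ K.edgeSet <;> by_cases h₂ : e₂ ∈ K.edgeSet <;>
    simp only [h₁, h₂, if_true, if_false]
  · exact hc e₁ h₁ e₂ h₂ hne hv
  · lia
  · lia
  · exact fun h ↦ hne (hcode (by lia))

end IsProperEdgeColoring

/-- The colors of the palette `I` that appear on no edge of `G` at `v`. -/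
noncomputable def missingColors (G : SimpleGraph V) (c : Sym2 V → ℕ) (I : Finset ℕ) (v : V) :
    Finset ℕ :=
  open scoped Classical in {i ∈ I | ∀ w, G.Adj v w → c s(v, w) ≠ i}

@[simp]
lemma mem_missingColors {I : Finset ℕ} {v : V} {i : ℕ} :
    i ∈ missingColors G c I v ↔ i ∈ I ∧ ∀ w, G.Adj v w → c s(v, w) ≠ i := by
  simp [missingColors]

lemma card_le_card_missingColors_add_degree (I : Finset ℕ) (v : V) [Fintype (G.neighborSet v)] :
    I.card ≤ (missingColors G c I v).card + G.degree v := by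
  have hcover : I ⊆ missingColors G c I v ∪ (G.neighborFinset v).image (fun w ↦ c s(v, w)) := by
    intro i hi
    simp only [Finset.mem_union, mem_missingColors, Finset.mem_image, mem_neighborFinset]
    grind
  calc I.card ≤ _ := Finset.card_le_card hcover
    _ ≤ _ := (Finset.card_union_le _ _).trans (Nat.add_le_add_left Finset.card_image_le _)

/-- `c'` arises from `c` by recoloring edges with colors in the palette `I` by colors in `I`. -/
def IsRecoloring (I : Finset ℕ) (c c' : Sym2 V → ℕ) : Prop :=
  ∀ e, c' e = c e ∨ c e ∈ I ∧ c' e ∈ I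

namespace IsRecoloring

variable {I J : Finset ℕ} {c' c'' : Sym2 V → ℕ}

lemma refl (I : Finset ℕ) (c : Sym2 V → ℕ) : IsRecoloring I c c := fun _ ↦ Or.inl rfl

lemma trans (h : IsRecoloring I c c') (h' : IsRecoloring I c' c'') : IsRecoloring I c c'' := by
  intro e
  rcases h e with he | he <;> rcases h' e with he' | he' <;> grind

lemma mono (hIJ : I ⊆ J) (h : IsRecoloring I c c') : IsRecoloring J c c' :=
  fun e ↦ (h e).imp_right (And.imp (@hIJ _) (@hIJ _))

lemma mem_iff (h : IsRecoloring I c c') (e : Sym2 V) : c' e ∈ I ↔ c e ∈ I := by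
  rcases h e with he | he <;> grind

lemma eq_iff_of_notMem (h : IsRecoloring I c c') {i : ℕ} (hi : i ∉ I) (e : Sym2 V) :
    c' e = i ↔ c e = i := by
  rcases h e with he | he <;> grind

end IsRecoloring

end EdgeColoring

section Kempe

variable {V : Type*} {G : SimpleGraph V}

lemma card_le_two_of_connected_of_degree_le_two [Fintype V] [DecidableRel G.Adj]
    (hG : G.Connected) (hdeg : ∀ v, G.degree v ≤ 2) {N : Finset V}
    (hN : ∀ v ∈ N, G.degree v ≤ 1) : N.card ≤ 2 := by
  classical
  -- `2 (|V| - 1) ≤ 2 |E| = ∑ v, deg v ≤ 2 |V| - |N|`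
  have hsum : ∑ v, (G.degree v + if v ∈ N then 1 else 0) ≤ ∑ _v : V, 2 :=
    Finset.sum_le_sum fun v _ ↦ by grind
  have hedges : Fintype.card V ≤ G.edgeFinset.card + 1 := by
    simpa only [Nat.card_eq_fintype_card, ← edgeFinset_card]
      using hG.card_vert_le_card_edgeSet_add_one
  simp only [Finset.sum_add_distrib, G.sum_degrees_eq_twice_card_edges, Finset.sum_boole,
    Finset.filter_univ_mem, Finset.sum_const, Finset.card_univ, smul_eq_mul, Nat.cast_id] at hsum
  lia

lemma card_le_two_of_subset_supp [Fintype V] [DecidableRel G.Adj] (C : G.ConnectedComponent)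
    (hdeg : ∀ v ∈ C.supp, G.degree v ≤ 2) {N : Finset V} (hNC : ∀ v ∈ N, v ∈ C.supp)
    (hN : ∀ v ∈ N, G.degree v ≤ 1) : N.card ≤ 2 := by
  classical
  have hdeg_le (v : C.supp) : (G.induce C.supp).degree v ≤ G.degree v := by
    rw [← card_neighborFinset_eq_degree, ← card_neighborFinset_eq_degree]
    refine Finset.card_le_card_of_injOn Subtype.val (fun w hw ↦ ?_) Subtype.val_injective.injOn
    simpa using hw
  have hconn : (G.induce C.supp).Connected := C.connected_toSimpleGraph
  rw [← Finset.subtype_map_of_mem hNC, Finset.card_map]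
  refine card_le_two_of_connected_of_degree_le_two hconn (fun v ↦ ?_) fun v hv ↦ ?_
  · exact (hdeg_le v).trans (hdeg v v.2)
  · exact (hdeg_le v).trans (hN v (Finset.mem_subtype.1 hv))

variable {c : Sym2 V → ℕ} {i j : ℕ}

/-- The graph of the edges of `G` with color `i` or `j`; its components are the Kempe chains. -/
def kempeGraph (G : SimpleGraph V) (c : Sym2 V → ℕ) (i j : ℕ) : SimpleGraph V where
  Adj u w := G.Adj u w ∧ (c s(u, w) = i ∨ c s(u, w) = j)
  symm := ⟨fun u w h ↦ by rwa [G.adj_comm, Sym2.eq_swap]⟩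
  loopless := ⟨fun _ h ↦ h.1.ne rfl⟩

lemma kempeGraph_le : kempeGraph G c i j ≤ G := fun _ _ h ↦ h.1

lemma IsProperEdgeColoring.card_le_two_of_subset_kempeChain [Finite V]
    (hc : IsProperEdgeColoring G c) (C : (kempeGraph G c i j).ConnectedComponent) {N : Finset V}
    (hNC : ∀ v ∈ N, v ∈ C.supp) (hN : ∀ v ∈ N, ∀ w, G.Adj v w → c s(v, w) ≠ i) :
    N.card ≤ 2 := by
  classical
  have := Fintype.ofFinite V
  have hcK : IsProperEdgeColoring (kempeGraph G c i j) c := hc.mono kempeGraph_le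
  refine card_le_two_of_subset_supp C (fun v _ ↦ ?_) hNC fun v hv ↦ ?_
  · exact (hcK.degree_le_card (T := {i, j}) fun w hw ↦ by simpa using hw.2).trans Finset.card_le_two
  · refine (hcK.degree_le_card (T := {j}) fun w hw ↦ ?_).trans_eq (Finset.card_singleton j)
    simpa using hw.2.resolve_left (hN v hv w hw.1)

/-- The coloring obtained from `c` by exchanging the colors `i` and `j` along the Kempe chain `C`.
Edges that meet `C` in other colors are unaffected, so `C` need not contain both endpoints. -/
noncomputable def kempeSwap (C : (kempeGraph G c i j).ConnectedComponent) : Sym2 V → ℕ :=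
  open scoped Classical in fun e ↦ if ∃ v ∈ C.supp, v ∈ e then Equiv.swap i j (c e) else c e

/-- The permutation of the colors that `kempeSwap C` effects at the vertex `v`. -/
noncomputable def kempePerm (C : (kempeGraph G c i j).ConnectedComponent) (v : V) :
    Equiv.Perm ℕ :=
  open scoped Classical in if v ∈ C.supp then Equiv.swap i j else 1

variable (C : (kempeGraph G c i j).ConnectedComponent)

lemma kempePerm_of_ne (v : V) {l : ℕ} (hi : l ≠ i) (hj : l ≠ j) : kempePerm C v l = l := by
  unfold kempePerm
  split_ifs
  · exact Equiv.swap_apply_of_ne_of_ne hi hj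
  · rfl

lemma kempePerm_mem_iff {I : Finset ℕ} (hi : i ∈ I) (hj : j ∈ I) (v : V) (l : ℕ) :
    kempePerm C v l ∈ I ↔ l ∈ I := by
  unfold kempePerm
  split_ifs
  · rw [Equiv.swap_apply_def]; grind
  · rfl

lemma kempeSwap_mk {u w : V} (huw : G.Adj u w) :
    kempeSwap C s(u, w) = kempePerm C u (c s(u, w)) := by
  by_cases hcol : c s(u, w) = i ∨ c s(u, w) = j
  · have hC : w ∈ C.supp ↔ u ∈ C.supp := (C.mem_supp_congr_adj ⟨huw, hcol⟩).symm
    have hmeet : (∃ v ∈ C.supp, v ∈ s(u, w)) ↔ u ∈ C.supp := by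
      simp only [Sym2.mem_iff]
      grind
    by_cases hu : u ∈ C.supp
    · rw [kempeSwap, kempePerm, if_pos (hmeet.2 hu), if_pos hu]
    · rw [kempeSwap, kempePerm, if_neg (mt hmeet.1 hu), if_neg hu, Equiv.Perm.one_apply]
  · push Not at hcol
    rw [kempePerm_of_ne C u hcol.1 hcol.2, kempeSwap, Equiv.swap_apply_of_ne_of_ne hcol.1 hcol.2,
      ite_self]

lemma isProperEdgeColoring_kempeSwap (hc : IsProperEdgeColoring G c) :
    IsProperEdgeColoring G (kempeSwap C) := by
  rw [isProperEdgeColoring_iff_injOn] at hc ⊢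
  intro v a ha b hb hab
  simp only [kempeSwap_mk C ha, kempeSwap_mk C hb] at hab
  exact hc v ha hb ((kempePerm C v).injective hab)

lemma isRecoloring_kempeSwap {I : Finset ℕ} (hi : i ∈ I) (hj : j ∈ I) :
    IsRecoloring I c (kempeSwap C) := by
  intro e
  unfold kempeSwap
  split_ifs
  · rw [Equiv.swap_apply_def]
    grind
  · exact Or.inl rfl

lemma kempePerm_mem_missingColors {I : Finset ℕ} (hi : i ∈ I) (hj : j ∈ I) {v : V} {l : ℕ}
    (hl : l ∈ missingColors G c I v) :
    kempePerm C v l ∈ missingColors G (kempeSwap C) I v := by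
  rw [mem_missingColors] at hl ⊢
  refine ⟨(kempePerm_mem_iff C hi hj v l).2 hl.1, fun w hw h ↦ hl.2 w hw ?_⟩
  rw [kempeSwap_mk C hw] at h
  exact (kempePerm C v).injective h

end Kempe

section DistinctMissingColors

variable {V : Type*} {G : SimpleGraph V} {c : Sym2 V → ℕ}

lemma exists_eq_one_or_exists_eq_zero_and_exists_three_le {ι : Type*} {s : Finset ι} {d : ι → ℕ}
    (hodd : Odd (∑ i ∈ s, d i)) (hlt : ∑ i ∈ s, d i < 2 * s.card) :
    (∃ i ∈ s, d i = 1) ∨ (∃ j ∈ s, d j = 0) ∧ ∃ i ∈ s, 3 ≤ d i := by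
  by_contra! h
  obtain ⟨h_one, h⟩ := h
  obtain ⟨j, hj, hj2⟩ : ∃ j ∈ s, d j < 2 :=
    Finset.exists_lt_of_sum_lt (by simpa [mul_comm] using hlt)
  have hsmall : ∀ i ∈ s, d i < 3 := h ⟨j, hj, by grind⟩
  refine Nat.not_even_iff_odd.2 hodd (even_iff_two_dvd.2 (Finset.dvd_sum fun i hi ↦ ?_))
  grind

/-- A Kempe swap at one of three vertices that were assigned the missing color `i` brings the
unassigned color `j` into play while keeping `i` assigned. -/
lemma IsProperEdgeColoring.exists_recoloring_biUnion_ssubset [Finite V] {I : Finset ℕ}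
    {N : Finset V} {A : V → Finset ℕ} (hc : IsProperEdgeColoring G c)
    (hA : ∀ u ∈ N, A u ⊆ missingColors G c I u) {i j : ℕ} (hi : i ∈ I)
    (hi3 : 3 ≤ (N.filter (i ∈ A ·)).card) (hj : j ∈ I) (hjA : ∀ u ∈ N, j ∉ A u) :
    ∃ (c' : Sym2 V → ℕ) (A' : V → Finset ℕ), IsProperEdgeColoring G c' ∧ IsRecoloring I c c' ∧
      (∀ u ∈ N, A' u ⊆ missingColors G c' I u) ∧ (∀ u, (A' u).card = (A u).card) ∧
      N.biUnion A ⊂ N.biUnion A' := by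
  classical
  obtain ⟨u, hu⟩ := Finset.card_pos.1 (by lia : 0 < (N.filter (i ∈ A ·)).card)
  set C := (kempeGraph G c i j).connectedComponentMk u
  obtain ⟨w, hw, hwC⟩ : ∃ w ∈ N.filter (i ∈ A ·), w ∉ C.supp := by
    by_contra! hall
    have hle := hc.card_le_two_of_subset_kempeChain C hall fun v hv ↦ by
      rw [Finset.mem_filter] at hv
      exact (mem_missingColors.1 (hA v hv.1 hv.2)).2
    lia
  rw [Finset.mem_filter] at hu hw
  have hpu : kempePerm C u i = j := by simp [kempePerm, C]
  have hpw : kempePerm C w i = i := by simp only [kempePerm, hwC, if_false, Equiv.Perm.one_apply]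
  let A' (x : V) : Finset ℕ := (A x).map (kempePerm C x).toEmbedding
  have hmem {x : V} {l : ℕ} (hx : x ∈ N) (hl : l ∈ A x) : kempePerm C x l ∈ N.biUnion A' :=
    Finset.mem_biUnion.2 ⟨x, hx, Finset.mem_map_of_mem _ hl⟩
  refine ⟨kempeSwap C, A', isProperEdgeColoring_kempeSwap C hc, isRecoloring_kempeSwap C hi hj, ?_,
    fun x ↦ Finset.card_map _, Finset.ssubset_iff_of_subset ?_ |>.2 ⟨j, hpu ▸ hmem hu.1 hu.2, ?_⟩⟩
  · intro x hx l' hl'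
    obtain ⟨l, hl, rfl⟩ := Finset.mem_map.1 hl'
    exact kempePerm_mem_missingColors C hi hj (hA x hx hl)
  · intro l hl
    obtain ⟨x, hx, hlx⟩ := Finset.mem_biUnion.1 hl
    by_cases hli : l = i
    · exact hli ▸ hpw ▸ hmem hw.1 hw.2
    · have hlj : l ≠ j := by rintro rfl; exact hjA x hx hlx
      exact kempePerm_of_ne C x hli hlj ▸ hmem hx hlx
  · simpa using hjA

lemma IsProperEdgeColoring.exists_recoloring_card_filter_eq_one [Finite V] {I : Finset ℕ}
    {N : Finset V} {A : V → Finset ℕ} (hc : IsProperEdgeColoring G c)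
    (hA : ∀ u ∈ N, A u ⊆ missingColors G c I u) (hodd : Odd (∑ u ∈ N, (A u).card))
    (hlt : ∑ u ∈ N, (A u).card < 2 * I.card) :
    ∃ (c' : Sym2 V → ℕ) (A' : V → Finset ℕ), IsProperEdgeColoring G c' ∧ IsRecoloring I c c' ∧
      (∀ u ∈ N, A' u ⊆ missingColors G c' I u) ∧ (∀ u, (A' u).card = (A u).card) ∧
      ∃ i ∈ I, (N.filter (i ∈ A' ·)).card = 1 := by
  have hAI : ∀ u ∈ N, A u ⊆ I := fun u hu l hl ↦ (mem_missingColors.1 (hA u hu hl)).1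
  induction hm : (I \ N.biUnion A).card using Nat.strong_induction_on generalizing c A with
  | _ m ih =>
  have hcount : ∑ u ∈ N, (A u).card = ∑ i ∈ I, (N.filter (i ∈ A ·)).card := by
    refine .trans (Finset.sum_congr rfl fun u hu ↦ congrArg Finset.card ?_)
      (Finset.sum_card_bipartiteAbove_eq_sum_card_bipartiteBelow fun u i ↦ i ∈ A u)
    rw [Finset.bipartiteAbove, Finset.filter_mem_eq_inter, Finset.inter_eq_right.2 (hAI u hu)]
  rcases exists_eq_one_or_exists_eq_zero_and_exists_three_le (hcount ▸ hodd) (hcount ▸ hlt)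
    with hone | ⟨⟨j, hj, hj0⟩, i, hi, hi3⟩
  · exact ⟨c, A, hc, .refl I c, hA, fun _ ↦ rfl, hone⟩
  have hjA : ∀ u ∈ N, j ∉ A u := by simpa [Finset.filter_eq_empty_iff] using hj0
  obtain ⟨c₁, A₁, hc₁, hcc₁, hA₁, hcard₁, hssub⟩ :=
    hc.exists_recoloring_biUnion_ssubset hA hi hi3 hj hjA
  have hA₁I : ∀ u ∈ N, A₁ u ⊆ I := fun u hu l hl ↦ (mem_missingColors.1 (hA₁ u hu hl)).1
  have hdecr : (I \ N.biUnion A₁).card < m := by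
    rw [← hm]
    have := Finset.card_lt_card hssub
    have := Finset.card_le_card (Finset.biUnion_subset.2 hA₁I)
    rw [Finset.card_sdiff_of_subset (Finset.biUnion_subset.2 hA₁I),
      Finset.card_sdiff_of_subset (Finset.biUnion_subset.2 hAI)]
    lia
  simp only [← hcard₁] at hodd hlt
  obtain ⟨c₂, A₂, hc₂, hcc₂, hA₂, hcard₂, hone⟩ := ih _ hdecr hc₁ hA₁ hodd hlt hA₁I rfl
  exact ⟨c₂, A₂, hc₂, hcc₁.trans hcc₂, hA₂, fun u ↦ (hcard₂ u).trans (hcard₁ u), hone⟩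

lemma exists_subsets_sum_card_add_one_eq {ι α : Type*} {s : Finset ι} {M : ι → Finset α} {i₀ : ι}
    (hi₀ : i₀ ∈ s) (hone : (M i₀).Nonempty) (htwo : ∀ i ∈ s, i ≠ i₀ → 2 ≤ (M i).card) :
    ∃ B : ι → Finset α, (∀ i ∈ s, B i ⊆ M i) ∧ (B i₀).card = 1 ∧
      (∀ i ∈ s, i ≠ i₀ → (B i).card = 2) ∧ ∑ i ∈ s, (B i).card + 1 = 2 * s.card := by
  classical
  have hB (i : ι) : ∃ B : Finset α, i ∈ s → B ⊆ M i ∧ B.card = if i = i₀ then 1 else 2 := by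
    by_cases hi : i ∈ s
    · have hle : (if i = i₀ then 1 else 2) ≤ (M i).card := by
        split_ifs with h
        · exact h ▸ hone.card_pos
        · exact htwo i hi h
      exact (Finset.exists_subset_card_eq hle).imp fun B hB _ ↦ hB
    · exact ⟨∅, fun h ↦ absurd h hi⟩
  choose B hB using hB
  refine ⟨B, fun i hi ↦ (hB i hi).1, by simpa using (hB i₀ hi₀).2,
    fun i hi hne ↦ by simpa [hne] using (hB i hi).2, ?_⟩
  have hrest : ∑ i ∈ s.erase i₀, (B i).card = (s.erase i₀).card * 2 :=
    Finset.sum_const_nat fun i hi ↦ by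
      simpa [Finset.ne_of_mem_erase hi] using (hB i (Finset.mem_of_mem_erase hi)).2
  have hsum := Finset.add_sum_erase s (fun i ↦ (B i).card) hi₀
  have hcard := Finset.card_erase_add_one hi₀
  have hB₀ := (hB i₀ hi₀).2
  simp only [if_true] at hB₀
  lia

lemma IsProperEdgeColoring.exists_recoloring_mem_missingColors_erase [Finite V] [DecidableEq V]
    {I : Finset ℕ} {N : Finset V} (hc : IsProperEdgeColoring G c) (hNI : N.card ≤ I.card)
    {u₀ : V} (hu₀ : u₀ ∈ N) (hone : (missingColors G c I u₀).Nonempty)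
    (htwo : ∀ u ∈ N, u ≠ u₀ → 2 ≤ (missingColors G c I u).card) :
    ∃ c' : Sym2 V → ℕ, IsProperEdgeColoring G c' ∧ IsRecoloring I c c' ∧
      ∃ x ∈ N, ∃ i ∈ missingColors G c' I x,
        (∀ u ∈ N.erase x, (missingColors G c' (I.erase i) u).Nonempty) ∧
        ∀ u ∈ N.erase x, u ≠ u₀ → 2 ≤ (missingColors G c' (I.erase i) u).card := by
  obtain ⟨A, hA, hA_one, hA_two, hA_sum⟩ := exists_subsets_sum_card_add_one_eq hu₀ hone htwo
  have hA_pos : ∀ u ∈ N, 0 < (A u).card := by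
    intro u hu
    rcases eq_or_ne u u₀ with rfl | hne
    · exact hA_one.symm ▸ one_pos
    · exact hA_two u hu hne ▸ two_pos
  obtain ⟨c', A', hc', hcc', hA', hA'A, i, -, hunique⟩ :=
    hc.exists_recoloring_card_filter_eq_one hA (by grind) (by lia)
  obtain ⟨x, hx⟩ := Finset.card_eq_one.1 hunique
  have hx_iff (u : V) : u ∈ N ∧ i ∈ A' u ↔ u = x := by simpa using congrArg (u ∈ ·) hx
  obtain ⟨hxN, hix⟩ := (hx_iff x).2 rfl
  have hcard : ∀ u ∈ N.erase x, (A u).card ≤ (missingColors G c' (I.erase i) u).card := by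
    intro u hu
    rw [← hA'A]
    refine Finset.card_le_card fun l hl ↦ ?_
    have := mem_missingColors.1 (hA' u (Finset.mem_of_mem_erase hu) hl)
    grind [mem_missingColors]
  refine ⟨c', hc', hcc', x, hxN, i, hA' x hxN hix, fun u hu ↦ ?_, fun u hu hne ↦ ?_⟩
  · exact Finset.card_pos.1 ((hA_pos u (Finset.mem_of_mem_erase hu)).trans_le (hcard u hu))
  · exact (hA_two u (Finset.mem_of_mem_erase hu) hne).symm.trans_le (hcard u hu)

lemma IsProperEdgeColoring.exists_recoloring_injOn_missingColors [Finite V] {I : Finset ℕ}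
    {N : Finset V} (hc : IsProperEdgeColoring G c) (hNI : N.card ≤ I.card) (u₀ : V)
    (hone : ∀ u ∈ N, (missingColors G c I u).Nonempty)
    (htwo : ∀ u ∈ N, u ≠ u₀ → 2 ≤ (missingColors G c I u).card) :
    ∃ (c' : Sym2 V → ℕ) (f : V → ℕ), IsProperEdgeColoring G c' ∧ IsRecoloring I c c' ∧
      Set.InjOn f N ∧ ∀ u ∈ N, f u ∈ missingColors G c' I u := by
  classical
  induction I using Finset.strongInduction generalizing N c u₀ with
  | H I ih =>
  rcases N.eq_empty_or_nonempty with rfl | ⟨v, hv⟩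
  · exact ⟨c, fun _ ↦ 0, hc, .refl I c, by simp, by simp⟩
  obtain ⟨u₁, hu₁, htwo₁⟩ :
      ∃ u₁ ∈ N, ∀ u ∈ N, u ≠ u₁ → 2 ≤ (missingColors G c I u).card := by
    by_cases hu₀ : u₀ ∈ N
    · exact ⟨u₀, hu₀, htwo⟩
    · exact ⟨v, hv, fun u hu _ ↦ htwo u hu (ne_of_mem_of_not_mem hu hu₀)⟩
  obtain ⟨c₁, hc₁, hcc₁, x, hx, i, hix, hone', htwo'⟩ :=
    hc.exists_recoloring_mem_missingColors_erase hNI hu₁ (hone u₁ hu₁) htwo₁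
  rw [mem_missingColors] at hix
  obtain ⟨c₂, f, hc₂, hcc₂, hf, hfmem⟩ :=
    ih (I.erase i) (Finset.erase_ssubset hix.1) hc₁ (by grind) u₁ hone' htwo'
  have hfx : Set.EqOn (Function.update f x i) f (N.erase x) := fun u hu ↦
    Function.update_of_ne (Finset.ne_of_mem_erase hu) i f
  have hfi : ∀ u ∈ N.erase x, f u ∈ I.erase i := fun u hu ↦ (mem_missingColors.1 (hfmem u hu)).1
  refine ⟨c₂, Function.update f x i, hc₂, hcc₁.trans (hcc₂.mono (I.erase_subset i)), ?_, ?_⟩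
  · rw [← Finset.insert_erase hx, Finset.coe_insert, Set.injOn_insert (by simp)]
    refine ⟨hf.congr hfx.symm, ?_⟩
    rintro ⟨u, hu, hui⟩
    rw [hfx hu, Function.update_self] at hui
    exact Finset.ne_of_mem_erase (hfi u hu) hui
  · intro u hu
    by_cases hux : u = x
    · simpa [hux, hix.1, hcc₂.eq_iff_of_notMem (Finset.notMem_erase i I)] using hix.2
    · have hu' : u ∈ N.erase x := Finset.mem_erase.2 ⟨hux, hu⟩
      rw [hfx hu', mem_missingColors]
      exact ⟨Finset.mem_of_mem_erase (hfi u hu'), (mem_missingColors.1 (hfmem u hu')).2⟩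

end DistinctMissingColors

section Vizing

variable {V : Type*} {G : SimpleGraph V}

lemma mem_edgeSet_deleteIncidenceSet {v : V} {e : Sym2 V} :
    e ∈ (G.deleteIncidenceSet v).edgeSet ↔ e ∈ G.edgeSet ∧ v ∉ e := by
  rw [edgeSet_deleteIncidenceSet]
  grind [incidenceSet]

lemma degree_deleteIncidenceSet_lt {v u : V} [Fintype (G.neighborSet u)]
    [Fintype ((G.deleteIncidenceSet v).neighborSet u)] (hvu : G.Adj v u) :
    (G.deleteIncidenceSet v).degree u < G.degree u := by
  rw [← card_neighborFinset_eq_degree, ← card_neighborFinset_eq_degree]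
  refine Finset.card_lt_card (Finset.ssubset_iff_of_subset (fun w hw ↦ ?_) |>.2
    ⟨v, by simpa using hvu.symm, by simp [deleteIncidenceSet_adj]⟩)
  rw [mem_neighborFinset] at hw ⊢
  exact G.deleteIncidenceSet_le v hw

lemma two_le_card_missingColors_deleteIncidenceSet {c : Sym2 V → ℕ} {v u : V} {D : ℕ}
    [Fintype (G.neighborSet u)] (hvu : G.Adj v u) (hdeg : G.degree u ≤ D) :
    2 ≤ (missingColors (G.deleteIncidenceSet v) c (.range (D + 1)) u).card := by
  classical
  have : Fintype ((G.deleteIncidenceSet v).neighborSet u) :=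
    Set.fintypeSubset (G.neighborSet u) fun _ hw ↦ G.deleteIncidenceSet_le v hw
  have hlt := degree_deleteIncidenceSet_lt hvu
  have hle := card_le_card_missingColors_add_degree (G := G.deleteIncidenceSet v) (c := c)
    (.range (D + 1)) u
  rw [Finset.card_range] at hle
  lia

lemma IsProperEdgeColoring.exists_extend_star {v : V} {c : Sym2 V → ℕ} {f : V → ℕ}
    (hc : IsProperEdgeColoring (G.deleteIncidenceSet v) c) (hf : Set.InjOn f (G.neighborSet v))
    (hfc : ∀ u ∈ G.neighborSet v, ∀ w, (G.deleteIncidenceSet v).Adj u w → c s(u, w) ≠ f u) :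
    ∃ c' : Sym2 V → ℕ, IsProperEdgeColoring G c' ∧ (∀ u, c' s(v, u) = f u) ∧
      ∀ e, v ∉ e → c' e = c e := by
  have hinj : Function.Injective fun u ↦ s(v, u) := fun _ _ ↦ Sym2.congr_right.1
  set c' := Function.extend (fun u ↦ s(v, u)) f c
  have hstar (u : V) : c' s(v, u) = f u := hinj.extend_apply f c u
  have hrest (e : Sym2 V) (he : v ∉ e) : c' e = c e :=
    Function.extend_apply' f c e fun ⟨u, hu⟩ ↦ he (hu ▸ Sym2.mem_mk_left v u)
  refine ⟨c', isProperEdgeColoring_iff_injOn.2 fun x a ha b hb hab ↦ ?_, hstar, hrest⟩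
  dsimp only at hab
  by_cases hxv : x = v
  · subst hxv
    rw [hstar, hstar] at hab
    exact hf ha hb hab
  have hcol {w : V} (hw : w ≠ v) : c' s(x, w) = c s(x, w) :=
    hrest _ (by simp [hw.symm, Ne.symm hxv])
  have hadj {w : V} (hxw : G.Adj x w) (hw : w ≠ v) : (G.deleteIncidenceSet v).Adj x w :=
    deleteIncidenceSet_adj.2 ⟨hxw, hxv, hw⟩
  by_cases hav : a = v <;> by_cases hbv : b = v
  · rw [hav, hbv]
  · rw [hav, hcol hbv, Sym2.eq_swap (a := x) (b := v), hstar] at hab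
    exact absurd hab.symm (hfc x (hav ▸ ha.symm) b (hadj hb hbv))
  · rw [hbv, hcol hav, Sym2.eq_swap (a := x) (b := v), hstar] at hab
    exact absurd hab (hfc x (hbv ▸ hb.symm) a (hadj ha hav))
  · rw [hcol hav, hcol hbv] at hab
    exact isProperEdgeColoring_iff_injOn.1 hc x (hadj ha hav) (hadj hb hbv) hab

/-- Vizing's theorem. -/
theorem exists_isProperEdgeColoring_le [Fintype V] [DecidableRel G.Adj] {D : ℕ}
    (hdeg : ∀ v, G.degree v ≤ D) :
    ∃ c : Sym2 V → ℕ, IsProperEdgeColoring G c ∧ ∀ e ∈ G.edgeSet, c e ≤ D := by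
  classical
  induction hm : G.edgeFinset.card using Nat.strong_induction_on generalizing G with
  | _ m ih =>
  rcases eq_or_ne G ⊥ with rfl | hG
  · exact ⟨0, by simp [IsProperEdgeColoring], by simp⟩
  obtain ⟨v, w, hvw⟩ := ne_bot_iff_exists_adj.1 hG
  set K := G.deleteIncidenceSet v
  have hKG : K ≤ G := G.deleteIncidenceSet_le v
  have hKcard : K.edgeFinset.card < m := by
    rw [← hm]
    refine Finset.card_lt_card (Finset.ssubset_iff_of_subset (edgeFinset_mono hKG) |>.2
      ⟨s(v, w), by simpa, fun h ↦ ?_⟩)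
    exact (mem_edgeSet_deleteIncidenceSet.1 (mem_edgeFinset.1 h)).2 (Sym2.mem_mk_left v w)
  obtain ⟨c₀, hc₀, hc₀D⟩ :=
    ih _ hKcard (fun u ↦ (degree_le_of_le hKG).trans (hdeg u)) rfl
  have hmissing : ∀ u ∈ G.neighborFinset v, 2 ≤ (missingColors K c₀ (.range (D + 1)) u).card :=
    fun u hu ↦ two_le_card_missingColors_deleteIncidenceSet (by simpa using hu) (hdeg u)
  obtain ⟨c₁, f, hc₁, hc₀₁, hf, hfc⟩ := hc₀.exists_recoloring_injOn_missingColors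
    (by simpa using (hdeg v).trans D.le_succ) v
    (fun u hu ↦ Finset.card_pos.1 (two_pos.trans_le (hmissing u hu))) fun u hu _ ↦ hmissing u hu
  simp only [mem_neighborFinset, mem_missingColors] at hfc
  obtain ⟨c, hc, hstar, hrest⟩ := hc₁.exists_extend_star (by simpa using hf)
    fun u hu ↦ (hfc u hu).2
  refine ⟨c, hc, fun e he ↦ ?_⟩
  by_cases hve : v ∈ e
  · obtain ⟨u, rfl⟩ := hve
    simpa [hstar, Nat.lt_succ_iff] using (hfc u he).1
  · have heK : e ∈ K.edgeSet := mem_edgeSet_deleteIncidenceSet.2 ⟨he, hve⟩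
    have := (hc₀₁.mem_iff e).2 (by simpa [Nat.lt_succ_iff] using hc₀D e heK)
    simpa [hrest e hve, Nat.lt_succ_iff] using this

end Vizing

section GreedyColoring

variable {V W : Type*} {G : SimpleGraph V} {H : SimpleGraph W}

lemma HasRainbowCopy.ncard_edgeSet_le [Fintype W] [DecidableRel H.Adj] {c : Sym2 V → ℕ}
    (h : HasRainbowCopy G H c) {S : Finset V} {t : ℕ}
    (hcol : ∀ e ∈ G.edgeSet, (∀ v ∈ S, v ∉ e) → c e < t) :
    H.edgeSet.ncard ≤ H.maxDegree * S.card + t := by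
  classical
  obtain ⟨f, hf, hrainbow⟩ := h
  let T : Finset W := {w | f w ∈ S}
  let E : Finset (Sym2 W) := {e ∈ H.edgeFinset | ∀ v ∈ S, v ∉ e.map f}
  have hcover : H.edgeFinset ⊆ T.biUnion (H.incidenceFinset ·) ∪ E := by
    intro e he
    by_cases hS : ∀ v ∈ S, v ∉ e.map f
    · exact Finset.mem_union_right _ (Finset.mem_filter.2 ⟨he, hS⟩)
    · push Not at hS
      obtain ⟨_, hv, hve⟩ := hS
      obtain ⟨w, hwe, rfl⟩ := Sym2.mem_map.1 hve
      refine Finset.mem_union_left _ (Finset.mem_biUnion.2 ⟨w, by simpa [T] using hv, ?_⟩)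
      simpa using ⟨mem_edgeFinset.1 he, hwe⟩
  have hT : (T.biUnion (H.incidenceFinset ·)).card ≤ S.card * H.maxDegree := by
    refine (Finset.card_biUnion_le_card_mul _ _ H.maxDegree fun w _ ↦ ?_).trans
      (Nat.mul_le_mul_right _ (Finset.card_le_card_of_injOn f (fun w ↦ by simp [T]) hf.injOn))
    exact (H.card_incidenceFinset_eq_degree w).trans_le (H.degree_le_maxDegree w)
  have hE : E.card ≤ t := by
    rw [← Finset.card_range t]
    refine Finset.card_le_card_of_injOn (fun e ↦ c (e.map f)) (fun e he ↦ ?_) fun e he e' he' ↦ ?_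
    · obtain ⟨heH, heS⟩ := Finset.mem_filter.1 he
      exact Finset.mem_coe.2 (Finset.mem_range.2
        (hcol _ (f.map_mem_edgeSet (mem_edgeFinset.1 heH)) heS))
    · exact hrainbow e (mem_edgeFinset.1 (Finset.mem_filter.1 he).1) e'
        (mem_edgeFinset.1 (Finset.mem_filter.1 he').1)
  calc H.edgeSet.ncard = H.edgeFinset.card := by rw [← coe_edgeFinset, Set.ncard_coe_finset]
    _ ≤ _ := (Finset.card_le_card hcover).trans (Finset.card_union_le _ _)
    _ ≤ _ := by lia

lemma exists_isProperEdgeColoring_of_two_mul_lt_sq [Fintype V] [DecidableRel G.Adj] {Δ y : ℕ}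
    (hlt : 2 * Δ * G.edgeFinset.card < y ^ 2) :
    ∃ (c : Sym2 V → ℕ) (S : Finset V) (t : ℕ), IsProperEdgeColoring G c ∧ Δ * S.card + t ≤ y ∧
      ∀ e ∈ G.edgeSet, (∀ v ∈ S, v ∉ e) → c e < t := by
  classical
  induction hm : G.edgeFinset.card using Nat.strong_induction_on generalizing G y with
  | _ m ih =>
  have hy : 0 < y := Nat.pos_of_ne_zero (by rintro rfl; simp at hlt)
  by_cases hdeg : ∀ v, G.degree v < y
  · obtain ⟨c, hc, hcy⟩ := exists_isProperEdgeColoring_le fun v ↦ Nat.le_sub_one_of_lt (hdeg v)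
    exact ⟨c, ∅, y, hc, by simp, fun e he _ ↦ Nat.lt_of_le_sub_one hy (hcy e he)⟩
  push Not at hdeg
  obtain ⟨v, hv⟩ := hdeg
  set K := G.deleteIncidenceSet v
  have hcard : K.edgeFinset.card + y ≤ G.edgeFinset.card := by
    have hK : K.edgeFinset.card = G.edgeFinset.card - G.degree v :=
      card_edgeFinset_deleteIncidenceSet G v
    have := G.degree_le_card_edgeFinset v
    lia
  have hmul : 2 * Δ * K.edgeFinset.card + 2 * Δ * y < y ^ 2 := by
    rw [← mul_add]
    exact (Nat.mul_le_mul_left _ hcard).trans_lt hlt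
  obtain ⟨z, rfl⟩ : ∃ z, y = Δ + z := Nat.exists_eq_add_of_le (by nlinarith)
  obtain ⟨c₀, S, t, hc₀, hSt, hc₀t⟩ := ih _ (by lia) (G := K) (y := z) (by nlinarith) rfl
  obtain ⟨c, hc, hcc₀⟩ := hc₀.exists_extend_s6 G
  refine ⟨c, insert v S, t, hc, ?_, fun e he heS ↦ ?_⟩
  · have := Nat.mul_le_mul_left Δ (S.card_insert_le v)
    lia
  · rw [Finset.forall_mem_insert] at heS
    have heK : e ∈ K.edgeSet := mem_edgeSet_deleteIncidenceSet.2 ⟨he, heS.1⟩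
    exact hcc₀ e heK ▸ hc₀t e heK heS.2

theorem ArrowsTo.sq_ncard_edgeSet_sub_one_le [Finite V] [Fintype W] [DecidableRel H.Adj]
    (hGH : ArrowsTo G H) :
    (H.edgeSet.ncard - 1) ^ 2 ≤ 2 * H.maxDegree * G.edgeSet.ncard := by
  classical
  have := Fintype.ofFinite V
  by_contra! hlt
  rw [← coe_edgeFinset, Set.ncard_coe_finset] at hlt
  obtain ⟨c, S, t, hc, hSt, hct⟩ := exists_isProperEdgeColoring_of_two_mul_lt_sq hlt
  have hle := (hGH c hc).ncard_edgeSet_le hct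
  have hpos : H.edgeSet.ncard - 1 ≠ 0 := by
    intro h
    simp [h] at hlt
  lia

end GreedyColoring

section RainbowSet

variable {V W : Type*} {c : Sym2 V → ℕ}

/-- The vertex set `B` spans a rainbow complete graph with respect to the edge coloring `c`. -/
def IsRainbowSet (c : Sym2 V → ℕ) (B : Finset V) : Prop :=
  Set.InjOn c {e | e ∈ B.sym2 ∧ ¬e.IsDiag}

lemma isRainbowSet_insert [DecidableEq V] (hc : IsProperEdgeColoring ⊤ c) {B : Finset V}
    (hB : IsRainbowSet c B) {x : V} (hx : ∀ b ∈ B, ∀ e ∈ B.sym2, c s(x, b) ≠ c e) :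
    IsRainbowSet c (insert x B) := by
  have hcases : ∀ e ∈ (insert x B).sym2, ¬e.IsDiag → e ∈ B.sym2 ∨ ∃ b ∈ B, e = s(x, b) := by
    rintro ⟨a, b⟩ he hdiag
    simp only [Finset.mk_mem_sym2_iff, Finset.mem_insert, Sym2.mk_isDiag_iff] at he hdiag ⊢
    grind [Sym2.eq_swap]
  rintro e₁ ⟨he₁, hd₁⟩ e₂ ⟨he₂, hd₂⟩ heq
  rcases hcases e₁ he₁ hd₁ with h₁ | ⟨b₁, hb₁, rfl⟩ <;>
    rcases hcases e₂ he₂ hd₂ with h₂ | ⟨b₂, hb₂, rfl⟩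
  · exact hB ⟨h₁, hd₁⟩ ⟨h₂, hd₂⟩ heq
  · exact absurd heq.symm (hx b₂ hb₂ e₁ h₁)
  · exact absurd heq (hx b₁ hb₁ e₂ h₂)
  · by_contra hne
    exact hc _ (by simpa using hd₁) _ (by simpa using hd₂) hne ⟨x, by simp, by simp⟩ heq

lemma IsProperEdgeColoring.exists_notMem_forall_ne [Fintype V] (hc : IsProperEdgeColoring ⊤ c)
    {B : Finset V} (hcard : B.card + B.card * B.sym2.card < Fintype.card V) :
    ∃ x ∉ B, ∀ b ∈ B, ∀ e ∈ B.sym2, c s(x, b) ≠ c e := by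
  classical
  have : Nonempty V := Fintype.card_pos_iff.1 (by lia)
  inhabit V
  by_contra! h
  choose! b hb e he hbe using h
  have hinj : Set.InjOn (fun x ↦ (b x, e x)) (Bᶜ : Finset V) := by
    intro x hx y hy hxy
    rw [Finset.mem_coe, Finset.mem_compl] at hx hy
    rw [Prod.mk.injEq] at hxy
    refine isProperEdgeColoring_iff_injOn.1 hc (b x) (ne_of_mem_of_not_mem (hb x hx) hx) ?_ ?_
    · exact hxy.1 ▸ ne_of_mem_of_not_mem (hb y hy) hy
    · dsimp only
      rw [Sym2.eq_swap, hbe x hx, hxy.2, ← hbe y hy, hxy.1, Sym2.eq_swap]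
  have hmaps : Set.MapsTo (fun x ↦ (b x, e x)) (Bᶜ : Finset V) (B ×ˢ B.sym2 : Finset _) := by
    intro x hx
    rw [Finset.mem_coe, Finset.mem_compl] at hx
    exact Finset.mem_coe.2 (Finset.mem_product.2 ⟨hb x hx, he x hx⟩)
  have hle := Finset.card_le_card_of_injOn _ hmaps hinj
  rw [Finset.card_product] at hle
  have := B.card_add_card_compl
  lia

lemma exists_isRainbowSet_card_eq [Fintype V] (hc : IsProperEdgeColoring ⊤ c) {m : ℕ}
    (hm : m + m * (m + 1).choose 2 < Fintype.card V) : ∃ B, IsRainbowSet c B ∧ B.card = m := by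
  classical
  induction m with
  | zero => exact ⟨∅, by simp [IsRainbowSet], rfl⟩
  | succ m ih =>
    have hlt : m + m * (m + 1).choose 2 < Fintype.card V :=
      hm.trans_le' (by gcongr <;> lia)
    obtain ⟨B, hB, rfl⟩ := ih hlt
    obtain ⟨x, hxB, hx⟩ := hc.exists_notMem_forall_ne (by rwa [Finset.card_sym2])
    exact ⟨insert x B, isRainbowSet_insert hc hB hx, Finset.card_insert_of_notMem hxB⟩

lemma IsRainbowSet.hasRainbowCopy [Fintype W] {B : Finset V} (hB : IsRainbowSet c B)
    (H : SimpleGraph W) (hcard : Fintype.card W ≤ B.card) : HasRainbowCopy ⊤ H c := by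
  obtain ⟨g⟩ : Nonempty (W ↪ B) := Function.Embedding.nonempty_of_card_le (by simpa using hcard)
  let f : W ↪ V := g.trans (.subtype _)
  refine ⟨⟨f, fun hab ↦ f.injective.ne hab.ne⟩, f.injective, fun e₁ he₁ e₂ he₂ h ↦ ?_⟩
  have hmem : ∀ e ∈ H.edgeSet, e.map f ∈ {e | e ∈ B.sym2 ∧ ¬e.IsDiag} := by
    intro e he
    refine ⟨Finset.mem_sym2_iff.2 fun v hv ↦ ?_, ?_⟩
    · obtain ⟨w, -, rfl⟩ := Sym2.mem_map.1 hv
      exact (g w).2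
    · rw [Sym2.isDiag_map f.injective]
      exact H.not_isDiag_of_mem_edgeSet he
  exact Sym2.map.injective f.injective (hB (hmem e₁ he₁) (hmem e₂ he₂) h)

lemma exists_arrowsTo [Finite W] (H : SimpleGraph W) :
    ∃ (n : ℕ) (G : SimpleGraph (Fin n)), ArrowsTo G H := by
  have := Fintype.ofFinite W
  set m := Fintype.card W
  refine ⟨m + m * (m + 1).choose 2 + 1, ⊤, fun c hc ↦ ?_⟩
  obtain ⟨B, hB, hcard⟩ := exists_isRainbowSet_card_eq hc (m := m) (by simp)
  exact hB.hasRainbowCopy H hcard.ge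

end RainbowSet

lemma exists_arrowsTo_ncard_edgeSet_eq_ARs {W : Type*} [Finite W] (H : SimpleGraph W) :
    ∃ (n : ℕ) (G : SimpleGraph (Fin n)), ArrowsTo G H ∧ G.edgeSet.ncard = ARs H := by
  obtain ⟨n, G, hG⟩ := exists_arrowsTo H
  exact Nat.sInf_mem (s := {m | ∃ (n : ℕ) (G : SimpleGraph (Fin n)),
    ArrowsTo G H ∧ G.edgeSet.ncard = m}) ⟨_, n, G, hG, rfl⟩

theorem stmt_6 {W : Type} [Fintype W] (H : SimpleGraph W) [DecidableRel H.Adj]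
    (hk : 2 ≤ H.edgeSet.ncard) :
    ((H.edgeSet.ncard : ℝ) - 1) ^ 2 / (2 * (H.maxDegree : ℝ)) ≤ (ARs H : ℝ) := by
  obtain ⟨n, G, hGH, hG⟩ := exists_arrowsTo_ncard_edgeSet_eq_ARs H
  have hsq : ((H.edgeSet.ncard : ℝ) - 1) ^ 2 ≤ ARs H * (2 * H.maxDegree) := by
    rw [← Nat.cast_pred (by lia), ← hG, mul_comm]
    exact_mod_cast hGH.sq_ncard_edgeSet_sub_one_le
  exact div_le_of_le_mul₀ (by positivity) (by positivity) hsq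
end
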